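/- arXiv:2003.09247 — 4 statements merged into one kernel-verified Lean document; each statement's English description precedes it below -/
import Mathlib

section
/- For every large enough even integer n, in the unbiased Waiter-Client game played on the edge set of the complete graph K_n whose winning sets are the perfect matchings of K_n, the minimum number of rounds within which Waiter can force a win is exactly n/2 + 1; that is, τ_WC(PM_n, 1) = n/2 + 1. -/
open Finset

/-- `WaiterWins board b win t Cl W` means: starting from the position where Client owns the
elements of `Cl` and Waiter owns the elements of `W`, Waiter can force that within the next `t`
rounds of the `b`-biased Waiter-Client game on the board `board` a position is reached in which
the predicate `win` holds of (Client's elements, Waiter's elements).  In each round Waiter offers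
`b+1` previously unclaimed board elements (or all remaining unclaimed elements, if fewer than
`b+1` remain); Client claims exactly one of them, the rest go to Waiter. -/
def WaiterWins {X : Type*} [DecidableEq X] (board : Finset X) (b : ℕ)
    (win : Finset X → Finset X → Prop) :
    ℕ → Finset X → Finset X → Prop
  | 0, Cl, W => win Cl W
  | (t+1), Cl, W => win Cl W ∨
      ∃ O : Finset X, O.Nonempty ∧ O ⊆ board \ (Cl ∪ W) ∧
        O.card = min (b + 1) ((board \ (Cl ∪ W)).card) ∧
        ∀ x ∈ O, WaiterWins board b win t (insert x Cl) (W ∪ O.erase x)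

/-- `tauWC board F b` : the smallest number of rounds within which Waiter can force Client's
elements to contain some member of the winning family `F`, in the `b`-biased Waiter-Client game
on the board `board`. -/
noncomputable def tauWC {X : Type*} [DecidableEq X] (board : Finset X)
    (F : Set (Finset X)) (b : ℕ) : ℕ :=
  sInf {t | WaiterWins board b (fun Cl _ => ∃ A ∈ F, A ⊆ Cl) t ∅ ∅}

/-- The edge set of the complete graph on `Fin n`. -/
def Kedges (n : ℕ) : Finset (Sym2 (Fin n)) :=
  Finset.univ.filter (fun e => ¬ e.IsDiag)

/-- The family of edge sets of perfect matchings of `K_n`: sets of non-diagonal edges such that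
every vertex lies in exactly one edge of the set. -/
def PMfamily (n : ℕ) : Set (Finset (Sym2 (Fin n))) :=
  {F | F ⊆ Kedges n ∧ ∀ v : Fin n, ∃! e, e ∈ F ∧ v ∈ e}

theorem wc_step {X : Type*} [DecidableEq X] {board : Finset X}
    {win : Finset X → Finset X → Prop} {t : ℕ} {Cl W : Finset X} {x y : X}
    (hxy : x ≠ y) (hx : x ∈ board) (hy : y ∈ board) (hx1 : x ∉ Cl) (hx2 : x ∉ W)
    (hy1 : y ∉ Cl) (hy2 : y ∉ W)
    (h1 : WaiterWins board 1 win t (insert x Cl) (insert y W))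
    (h2 : WaiterWins board 1 win t (insert y Cl) (insert x W)) :
    WaiterWins board 1 win (t+1) Cl W := by
  have hsub : ({x, y} : Finset X) ⊆ board \ (Cl ∪ W) := by
    intro z hz
    simp only [mem_insert, mem_singleton] at hz
    rcases hz with rfl | rfl <;> simp [*]
  right
  refine ⟨{x, y}, by simp, hsub, ?_, ?_⟩
  · have := card_le_card hsub
    rw [card_pair hxy] at *
    omega
  · intro z hz
    simp only [mem_insert, mem_singleton] at hz
    rcases hz with rfl | rfl
    · have : W ∪ ({z, y} : Finset X).erase z = insert y W := by
        ext a; simp only [mem_union, mem_erase, mem_insert, mem_singleton]; grind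
      rw [this]; exact h1
    · have : W ∪ ({x, z} : Finset X).erase z = insert x W := by
        ext a; simp only [mem_union, mem_erase, mem_insert, mem_singleton]; grind
      rw [this]; exact h2

theorem card_toFinset_K {n : ℕ} {e : Sym2 (Fin n)} (he : e ∈ Kedges n) :
    (univ.filter (fun v => v ∈ e)).card = 2 := by
  induction e with | _ a b =>
  have hab : a ≠ b := by simpa [Kedges] using he
  rw [← card_pair hab]
  congr 1
  ext v; simp

theorem PM_card {n : ℕ} {A : Finset (Sym2 (Fin n))} (hA : A ∈ PMfamily n) : 2 * A.card = n := by
  obtain ⟨h1, h2⟩ := hA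
  have := sum_card_bipartiteAbove_eq_sum_card_bipartiteBelow (s := A) (t := (univ : Finset (Fin n)))
    (fun e v => v ∈ e)
  have l : ∑ e ∈ A, (bipartiteAbove (fun e v => v ∈ e) (univ : Finset (Fin n)) e).card
      = ∑ e ∈ A, 2 := sum_congr rfl fun e he => card_toFinset_K (h1 he)
  have r : ∑ v : Fin n, (bipartiteBelow (fun (e : Sym2 (Fin n)) v => v ∈ e) A v).card
      = ∑ v : Fin n, 1 := by
    refine sum_congr rfl fun v _ => ?_
    rw [card_eq_one]
    obtain ⟨e, he, hu⟩ := h2 v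
    refine ⟨e, ?_⟩
    ext f
    simp only [bipartiteBelow, mem_filter, mem_singleton]
    exact ⟨fun h => hu f h, fun h => h ▸ he⟩
  rw [l, r] at this
  simp at this
  omega

theorem card_Kedges (n : ℕ) : (Kedges n).card = n.choose 2 := by
  have := Sym2.card_subtype_not_diag (α := Fin n)
  rw [Fintype.card_fin] at this
  rw [← this, Fintype.card_subtype]
  rfl

theorem wc_lower {n : ℕ} (hn : 6 ≤ n) : ∀ (t : ℕ) (Cl W : Finset (Sym2 (Fin n))),
    Cl.card + t ≤ n / 2 → (Cl ∪ W).card ≤ 2 * Cl.card →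
    (¬ ∃ A ∈ PMfamily n, A ⊆ Cl) →
    ¬ WaiterWins (Kedges n) 1 (fun Cl _ => ∃ A ∈ PMfamily n, A ⊆ Cl) t Cl W := by
  intro t
  induction t with
  | zero => intro Cl W _ _ h; exact h
  | succ t ih =>
    intro Cl W h1 h2 h3 h4
    rcases h4 with h4 | ⟨O, -, hO, hc, h4⟩
    · exact h3 h4
    have hK := card_Kedges n
    have hch : 2 * n ≤ n.choose 2 + 3 := by
      rw [Nat.choose_two_right, ← Nat.sub_le_iff_le_add, Nat.le_div_iff_mul_le (by norm_num)]
      obtain ⟨k, rfl⟩ := Nat.exists_eq_add_of_le hn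
      have : 6 + k - 1 = 5 + k := by omega
      rw [this]
      have : 2 * (6 + k) - 3 = 9 + 2 * k := by omega
      rw [this]
      nlinarith
    have hd := le_card_sdiff (Cl ∪ W) (Kedges n)
    have hc2 : O.card = 2 := by omega
    obtain ⟨x, y, hxy, rfl⟩ := card_eq_two.1 hc2
    have key : ∀ z ∈ ({x, y} : Finset (Sym2 (Fin n))), ∃ A ∈ PMfamily n, A ⊆ insert z Cl := by
      intro z hz
      by_contra hno
      have hz' := hO hz
      simp only [mem_sdiff, mem_union, not_or] at hz'
      have hcz : (insert z Cl).card = Cl.card + 1 := card_insert_of_notMem hz'.2.1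
      refine ih _ _ (by omega) ?_ hno (h4 z hz)
      have : insert z Cl ∪ (W ∪ ({x, y} : Finset (Sym2 (Fin n))).erase z)
          ⊆ (Cl ∪ W) ∪ {x, y} := by
        intro a ha
        simp only [mem_union, mem_insert, mem_erase, mem_singleton] at *
        grind
      have := (card_le_card this).trans (card_union_le _ _)
      omega
    have full : ∀ z ∈ ({x, y} : Finset (Sym2 (Fin n))), insert z Cl ∈ PMfamily n := by
      intro z hz
      obtain ⟨A, hA, hs⟩ := key z hz
      have := PM_card hA
      have h5 := card_insert_le z Cl
      rwa [← eq_of_subset_of_card_le hs (by omega)]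
    have hx := full x (by simp)
    have hy := full y (by simp)
    have hxO := hO (show x ∈ _ by simp)
    have hyO := hO (show y ∈ _ by simp)
    simp only [mem_sdiff, mem_union, not_or] at hxO hyO
    have sub : ∀ v, v ∈ x → v ∈ y := by
      intro v hv
      obtain ⟨e, he, -⟩ := hy.2 v
      rcases mem_insert.1 he.1 with h | h
      · rw [← h]; exact he.2
      · have := (hx.2 v).unique ⟨mem_insert_of_mem h, he.2⟩ ⟨mem_insert_self _ _, hv⟩
        exact absurd (this ▸ h) hxO.2.1
    apply hxy
    have hxK := hxO.1
    clear * - sub hxK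
    induction x with | _ a b =>
    have hab : a ≠ b := by simpa [Kedges] using hxK
    exact ((Sym2.mem_and_mem_iff hab).1 ⟨sub a (by simp), sub b (by simp)⟩).symm

structure WInv {n : ℕ} (Cl W : Finset (Sym2 (Fin n))) (U : Finset (Fin n)) : Prop where
  sub : Cl ⊆ Kedges n
  disj : ∀ v, ∀ e ∈ Cl, ∀ f ∈ Cl, v ∈ e → v ∈ f → e = f
  hU : ∀ v, v ∈ U ↔ ∀ e ∈ Cl, v ∉ e
  clean : ∀ x ∈ U, ∀ y ∈ U, s(x, y) ∉ W
  one : ∀ e ∈ Cl, ∀ u ∈ U, ∀ v ∈ U, ∀ x ∈ e, ∀ y ∈ e, s(u, x) ∈ W → s(v, y) ∈ W → u = v ∧ x = y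

theorem inv_step {n : ℕ} {Cl W : Finset (Sym2 (Fin n))} {U : Finset (Fin n)}
    (h : WInv Cl W U) {c p w : Fin n} (hc : c ∈ U) (hp : p ∈ U) (hw : w ∈ U)
    (hcp : c ≠ p) (hcw : c ≠ w) (hpw : p ≠ w) :
    WInv (insert s(c, p) Cl) (insert s(c, w) W) ((U.erase c).erase p) := by
  obtain ⟨h1, h2, h3, h4, h5⟩ := h
  have hc' := (h3 c).1 hc
  have hp' := (h3 p).1 hp
  refine ⟨?_, ?_, ?_, ?_, ?_⟩
  · intro e he
    rcases mem_insert.1 he with rfl | he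
    · simpa [Kedges] using hcp
    · exact h1 he
  · intro v e he f hf hve hvf
    rw [mem_insert] at he hf
    rcases he with rfl | he <;> rcases hf with rfl | hf
    · rfl
    · rcases Sym2.mem_iff.1 hve with rfl | rfl
      · exact absurd hvf (hc' _ hf)
      · exact absurd hvf (hp' _ hf)
    · rcases Sym2.mem_iff.1 hvf with rfl | rfl
      · exact absurd hve (hc' _ he)
      · exact absurd hve (hp' _ he)
    · exact h2 v e he f hf hve hvf
  · intro v
    simp only [mem_erase, forall_mem_insert, Sym2.mem_iff, h3]
    tauto
  · intro x hx y hy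
    simp only [mem_erase] at hx hy
    simp only [mem_insert, Sym2.eq_iff, not_or]
    refine ⟨by grind, h4 x hx.2.2 y hy.2.2⟩
  · intro e he u hu v hv x hx y hy hux hvy
    simp only [mem_erase] at hu hv
    rw [mem_insert] at hux hvy he
    rcases he with rfl | he
    · have A : ∀ z ∈ U, ∀ x ∈ s(c, p), s(z, x) ∉ W := by
        intro z hz x hx
        rcases Sym2.mem_iff.1 hx with rfl | rfl
        · exact h4 _ hz _ hc
        · exact h4 _ hz _ hp
      have B := hux.resolve_right (A u hu.2.2 x hx)
      have C := hvy.resolve_right (A v hv.2.2 y hy)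
      simp only [Sym2.eq_iff] at B C
      grind
    · have A : ∀ z ∈ U, z ≠ c → ∀ x ∈ e, s(z, x) ≠ s(c, w) := by
        intro z hz hzc x hx h
        rcases Sym2.eq_iff.1 h with h | h
        · exact hzc h.1
        · exact hc' e he (h.2 ▸ hx)
      exact h5 e he u hu.2.2 v hv.2.2 x hx y hy (hux.resolve_left (A u hu.2.2 hu.2.1 x hx))
        (hvy.resolve_left (A v hv.2.2 hv.2.1 y hy))

theorem notMem_of_U {n : ℕ} {Cl W : Finset (Sym2 (Fin n))} {U : Finset (Fin n)}
    (h : WInv Cl W U) {u x : Fin n} (hu : u ∈ U) : s(u, x) ∉ Cl :=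
  fun hh => (h.hU u).1 hu _ hh (by simp)

theorem mem_K {n : ℕ} {u x : Fin n} (h : u ≠ x) : s(u, x) ∈ Kedges n := by
  simpa [Kedges] using h

/-- each matched edge can be written as `s(a,b)` with `ua`, `vb` free -/
theorem good_pair {n : ℕ} {Cl W : Finset (Sym2 (Fin n))} {U : Finset (Fin n)}
    (h : WInv Cl W U) {u v : Fin n} (hu : u ∈ U) (hv : v ∈ U) (huv : u ≠ v)
    {e : Sym2 (Fin n)} (he : e ∈ Cl) :
    ∃ a b, e = s(a, b) ∧ a ≠ b ∧ s(u, a) ∉ W ∧ s(v, b) ∉ W := by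
  induction e with | _ a b =>
  have hab : a ≠ b := by simpa [Kedges] using h.sub he
  have h5 := h.one _ he
  by_contra hno
  push Not at hno
  have n1 := hno a b rfl hab
  have n2 := hno b a Sym2.eq_swap hab.symm
  have ma : a ∈ s(a, b) := by simp
  have mb : b ∈ s(a, b) := by simp
  by_cases c1 : s(u, a) ∈ W
  · by_cases c2 : s(u, b) ∈ W
    · exact hab (h5 u hu u hu a ma b mb c1 c2).2
    · exact huv (h5 u hu v hv a ma a ma c1 (n2 c2)).1
  · have c3 := n1 c1
    by_cases c2 : s(u, b) ∈ W
    · exact huv (h5 u hu v hv b mb b mb c2 c3).1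
    · exact hab (h5 v hv v hv a ma b mb (n2 c2) c3).2

theorem wc_final {n : ℕ} {Cl W : Finset (Sym2 (Fin n))} {u v : Fin n}
    (h : WInv Cl W {u, v}) (huv : u ≠ v) {a b a' : Fin n} (hab : a ≠ b)
    (he : s(a, b) ∈ Cl) (hvb : s(v, b) ∉ W) (ha' : a' ≠ v) :
    WaiterWins (Kedges n) 1 (fun Cl _ => ∃ A ∈ PMfamily n, A ⊆ Cl) 1
      (insert s(u, a) Cl) (insert s(u, a') W) := by
  have hu : u ∈ ({u, v} : Finset (Fin n)) := by simp
  have hv : v ∈ ({u, v} : Finset (Fin n)) := by simp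
  have hu' := (h.hU u).1 hu
  have hv' := (h.hU v).1 hv
  have hua : u ≠ a := by rintro rfl; exact hu' _ he (by simp)
  have hub : u ≠ b := by rintro rfl; exact hu' _ he (by simp)
  have hva : v ≠ a := by rintro rfl; exact hv' _ he (by simp)
  have hvb' : v ≠ b := by rintro rfl; exact hv' _ he (by simp)
  have cov : ∀ w, w ≠ u → w ≠ v → ∃ e ∈ Cl, w ∈ e := by
    intro w h1 h2
    have := (h.hU w).not
    simp only [mem_insert, mem_singleton] at this
    push Not at this
    exact this.1 ⟨h1, h2⟩
  refine wc_step (x := s(v, b)) (y := s(u, v)) ?_ (mem_K hvb') (mem_K huv) ?_ ?_ ?_ ?_ ?_ ?_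
  · simp only [ne_eq, Sym2.eq_iff]; grind
  · have := notMem_of_U h (x := b) hv
    simp only [mem_insert, Sym2.eq_iff, not_or]; grind
  · simp only [mem_insert, Sym2.eq_iff, not_or]; grind
  · have := notMem_of_U h (x := v) hu
    simp only [mem_insert, Sym2.eq_iff, not_or]; grind
  · have := h.clean u hu v hv
    simp only [mem_insert, Sym2.eq_iff, not_or]; grind
  · refine ⟨insert s(v, b) (insert s(u, a) (Cl.erase s(a, b))), ⟨?_, ?_⟩, ?_⟩
    · intro e he'
      simp only [mem_insert, mem_erase] at he'
      rcases he' with rfl | rfl | he'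
      · exact mem_K hvb'
      · exact mem_K hua
      · exact h.sub he'.2
    · intro w
      have D := h.disj
      by_cases w1 : w = u
      · subst w1
        refine ⟨s(w, a), by simp, ?_⟩
        rintro f ⟨hf, hwf⟩
        simp only [mem_insert, mem_erase] at hf
        rcases hf with rfl | rfl | hf
        · simp at hwf; grind
        · rfl
        · exact absurd hwf (hu' _ hf.2)
      by_cases w2 : w = v
      · subst w2
        refine ⟨s(w, b), by simp, ?_⟩
        rintro f ⟨hf, hwf⟩
        simp only [mem_insert, mem_erase] at hf
        rcases hf with rfl | rfl | hf
        · rfl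
        · simp at hwf; grind
        · exact absurd hwf (hv' _ hf.2)
      by_cases w3 : w = a
      · subst w3
        refine ⟨s(u, w), by simp, ?_⟩
        rintro f ⟨hf, hwf⟩
        simp only [mem_insert, mem_erase] at hf
        rcases hf with rfl | rfl | hf
        · simp at hwf; grind
        · rfl
        · exact absurd (D w f hf.2 _ he hwf (by simp)) hf.1
      by_cases w4 : w = b
      · subst w4
        refine ⟨s(v, w), by simp, ?_⟩
        rintro f ⟨hf, hwf⟩
        simp only [mem_insert, mem_erase] at hf
        rcases hf with rfl | rfl | hf
        · rfl
        · simp at hwf; grind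
        · exact absurd (D w f hf.2 _ he hwf (by simp)) hf.1
      obtain ⟨e, heC, hwe⟩ := cov w w1 w2
      refine ⟨e, ⟨?_, hwe⟩, ?_⟩
      · simp only [mem_insert, mem_erase]
        right; right
        refine ⟨?_, heC⟩
        rintro rfl
        simp at hwe; grind
      · rintro f ⟨hf, hwf⟩
        simp only [mem_insert, mem_erase] at hf
        rcases hf with rfl | rfl | hf
        · simp at hwf; grind
        · simp at hwf; grind
        · exact D w f hf.2 e heC hwf hwe
    · intro e he
      simp only [mem_insert, mem_erase] at *
      tauto
  · refine ⟨insert s(u, v) Cl, ⟨?_, ?_⟩, ?_⟩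
    · intro e he'
      rcases mem_insert.1 he' with rfl | he'
      · exact mem_K huv
      · exact h.sub he'
    · intro w
      by_cases w1 : w = u ∨ w = v
      · refine ⟨s(u, v), by simpa using w1, ?_⟩
        rintro f ⟨hf, hwf⟩
        rcases mem_insert.1 hf with rfl | hf
        · rfl
        · rcases w1 with rfl | rfl
          · exact absurd hwf (hu' _ (by assumption))
          · exact absurd hwf (hv' _ (by assumption))
      · rw [not_or] at w1
        obtain ⟨e, heC, hwe⟩ := cov w w1.1 w1.2
        refine ⟨e, ⟨mem_insert_of_mem heC, hwe⟩, ?_⟩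
        rintro f ⟨hf, hwf⟩
        rcases mem_insert.1 hf with rfl | hf
        · simp at hwf; tauto
        · exact h.disj w f hf e heC hwf hwe
    · intro e he
      simp only [mem_insert] at *
      tauto

theorem wc_upper {n : ℕ} (hn : 6 ≤ n) : ∀ (k : ℕ) (Cl W : Finset (Sym2 (Fin n)))
    (U : Finset (Fin n)), WInv Cl W U → U.card = 2 * k + 2 →
    WaiterWins (Kedges n) 1 (fun Cl _ => ∃ A ∈ PMfamily n, A ⊆ Cl) (k + 2) Cl W := by
  intro k
  induction k with
  | zero =>
    intro Cl W U h hc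
    obtain ⟨u, v, huv, rfl⟩ := card_eq_two.1 hc
    have hu : u ∈ ({u, v} : Finset (Fin n)) := by simp
    have hv : v ∈ ({u, v} : Finset (Fin n)) := by simp
    have get : ∀ S : Finset (Fin n), S.card ≤ 2 → ∃ z, z ∉ S ∧ ∃ e ∈ Cl, z ∈ e := by
      intro S hS
      have : ((S ∪ {u, v})).card < (univ : Finset (Fin n)).card := by
        have := card_union_le S {u, v}
        rw [card_fin]; omega
      obtain ⟨z, -, hz⟩ := exists_mem_notMem_of_card_lt_card this
      rw [mem_union, not_or] at hz
      have h2 := (h.hU z).not.1 hz.2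
      push Not at h2
      exact ⟨z, hz.1, h2⟩
    obtain ⟨z, -, e, he, -⟩ := get ∅ (by simp)
    obtain ⟨z', hz', e', he', hze'⟩ := get (univ.filter (· ∈ e)) (card_toFinset_K (h.sub he)).le
    have hne : e ≠ e' := by rintro rfl; simp at hz'; exact hz' hze'
    obtain ⟨a, b, rfl, hab, h1, h2⟩ := good_pair h hu hv huv he
    obtain ⟨a', b', rfl, hab', h1', h2'⟩ := good_pair h hu hv huv he'
    have haa : a ≠ a' := by
      rintro rfl
      exact hne (h.disj a _ he _ he' (by simp) (by simp))
    have nu : ∀ x ∈ s(a, b), u ≠ x ∧ x ≠ v := fun x hx =>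
      ⟨by rintro rfl; exact (h.hU u).1 hu _ he hx, by rintro rfl; exact (h.hU x).1 hv _ he hx⟩
    have nu' : ∀ x ∈ s(a', b'), u ≠ x ∧ x ≠ v := fun x hx =>
      ⟨by rintro rfl; exact (h.hU u).1 hu _ he' hx, by rintro rfl; exact (h.hU x).1 hv _ he' hx⟩
    have qa := nu a (by simp)
    have qa' := nu' a' (by simp)
    refine wc_step (x := s(u, a)) (y := s(u, a')) ?_ (mem_K qa.1) (mem_K qa'.1)
      (notMem_of_U h hu) h1 (notMem_of_U h hu) h1' ?_ ?_
    · simp only [ne_eq, Sym2.eq_iff]; grind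
    · exact wc_final h huv hab he h2 qa'.2
    · exact wc_final h huv hab' he' h2' qa.2
  | succ k ih =>
    intro Cl W U h hc
    obtain ⟨c, p, w, hcU, hpU, hwU, hcp, hcw, hpw⟩ := two_lt_card_iff.1 (show 2 < U.card by omega)
    have cc : ∀ q ∈ U, c ≠ q → ((U.erase c).erase q).card = 2 * k + 2 := by
      intro q hq hcq
      rw [card_erase_of_mem (mem_erase.2 ⟨hcq.symm, hq⟩), card_erase_of_mem hcU]
      omega
    refine wc_step (x := s(c, p)) (y := s(c, w)) ?_ (mem_K hcp) (mem_K hcw)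
      (notMem_of_U h hcU) (h.clean c hcU p hpU) (notMem_of_U h hcU) (h.clean c hcU w hwU) ?_ ?_
    · simp only [ne_eq, Sym2.eq_iff]; grind
    · exact ih _ _ _ (inv_step h hcU hpU hwU hcp hcw hpw) (cc p hpU hcp)
    · exact ih _ _ _ (inv_step h hcU hwU hpU hcw hcp hpw.symm) (cc w hwU hcw)

/-- For every large enough even integer `n`, in the unbiased Waiter-Client game on the edge set
of `K_n` whose winning sets are the perfect matchings of `K_n`, the minimum number of rounds
within which Waiter can force a win is exactly `n/2 + 1`. -/
theorem WC_perfect_matching_unbiased :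
    ∃ n₀ : ℕ, ∀ n : ℕ, n₀ ≤ n → Even n →
      tauWC (Kedges n) (PMfamily n) 1 = n / 2 + 1 := by
  refine ⟨6, fun n hn he => ?_⟩
  unfold tauWC
  apply le_antisymm
  · apply Nat.sInf_le
    obtain ⟨m, rfl⟩ := he
    have := wc_upper (by omega : 6 ≤ m + m) (m - 1) ∅ ∅ univ
      ⟨by simp, by simp, by simp, by simp, by simp⟩ (by simp; omega)
    have e : (m + m) / 2 + 1 = m - 1 + 2 := by omega
    rw [e]
    exact this
  · apply le_csInf
    · obtain ⟨m, rfl⟩ := he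
      refine ⟨m - 1 + 2, ?_⟩
      exact (wc_upper (by omega : 6 ≤ m + m) (m - 1) ∅ ∅ univ
        ⟨by simp, by simp, by simp, by simp, by simp⟩ (by simp; omega))
    · intro t ht
      by_contra hlt
      refine wc_lower (by omega) t ∅ ∅ (by simp; omega) (by simp) ?_ ht
      rintro ⟨A, hA, hs⟩
      have := PM_card hA
      have : A = ∅ := by simpa using hs
      subst this
      simp at *
      omega
end

section
/- There exist constants δ > 0 and C > 0 such that for every large enough even integer n and every positive integer b ≤ δn, in the b-biased Waiter-Client game on the edge set of K_n whose winning sets are the perfect matchings of K_n, Waiter has a strategy to win within n/2 + Cb rounds; that is, τ_WC(PM_n, b) ≤ n/2 + Cb. -/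
open Finset

namespace WCPM

inductive HasPM {n : ℕ} (Cl : Finset (Sym2 (Fin n))) : Finset (Fin n) → Prop
  | empty : HasPM Cl ∅
  | add (S : Finset (Fin n)) (v w : Fin n) (hS : HasPM Cl S) (hv : v ∉ S) (hw : w ∉ S)
      (hvw : v ≠ w) (he : s(v, w) ∈ Cl) : HasPM Cl (insert v (insert w S))

lemma HasPM.mono {n : ℕ} {Cl Cl' : Finset (Sym2 (Fin n))} (h : Cl ⊆ Cl') {S : Finset (Fin n)}
    (hS : HasPM Cl S) : HasPM Cl' S := by
  induction hS with
  | empty => exact .empty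
  | add S v w _ hv hw hvw he ih => exact .add S v w ih hv hw hvw (h he)

lemma HasPM.union {n : ℕ} {Cl : Finset (Sym2 (Fin n))} {S T : Finset (Fin n)}
    (hS : HasPM Cl S) (hT : HasPM Cl T) (hd : Disjoint S T) : HasPM Cl (S ∪ T) := by
  induction hS with
  | empty => simpa using hT
  | add S v w _ hv hw hvw he ih =>
    have h1 := ih (hd.mono_left (by intro x hx; simp [hx]))
    rw [Finset.disjoint_left] at hd
    have := HasPM.add _ v w h1 (by grind) (by grind) hvw he
    convert this using 1
    grind

lemma HasPM.add' {n : ℕ} {Cl : Finset (Sym2 (Fin n))} {S T : Finset (Fin n)} {v w : Fin n}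
    (hS : HasPM Cl S) (hv : v ∉ S) (hw : w ∉ S)
      (hvw : v ≠ w) (he : s(v, w) ∈ Cl) (hT : T = insert v (insert w S)) : HasPM Cl T := by
  subst hT; exact .add _ _ _ hS hv hw hvw he

lemma HasPM.toFam {n : ℕ} {Cl : Finset (Sym2 (Fin n))} {S : Finset (Fin n)}
    (hS : HasPM Cl S) : ∃ F ⊆ Cl, F ⊆ Kedges n ∧ (∀ e ∈ F, ∀ v ∈ e, v ∈ S) ∧
      ∀ v ∈ S, ∃! e, e ∈ F ∧ v ∈ e := by
  induction hS with
  | empty => exact ⟨∅, by simp, by simp, by simp, by simp⟩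
  | add S v w _ hv hw hvw he ih =>
    obtain ⟨F, h1, h2, h3, h4⟩ := ih
    refine ⟨insert s(v, w) F, ?_, ?_, ?_, ?_⟩
    · grind
    · intro e he'
      rcases Finset.mem_insert.1 he' with rfl | h
      · simp [Kedges, hvw]
      · exact h2 h
    · intro e he' u hu
      rcases Finset.mem_insert.1 he' with rfl | h
      · simp at hu; grind
      · have := h3 e h u hu; grind
    · intro u hu
      by_cases huS : u ∈ S
      · obtain ⟨e, ⟨he1, he2⟩, he3⟩ := h4 u huS
        refine ⟨e, ⟨by grind, he2⟩, ?_⟩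
        rintro y ⟨hy1, hy2⟩
        rcases Finset.mem_insert.1 hy1 with rfl | h
        · simp at hy2; grind
        · exact he3 y ⟨h, hy2⟩
      · refine ⟨s(v, w), ⟨by simp, by simp; grind⟩, ?_⟩
        rintro y ⟨hy1, hy2⟩
        rcases Finset.mem_insert.1 hy1 with rfl | h
        · rfl
        · exact absurd (h3 y h u hy2) huS

def Good (n b t : ℕ) (Cl D : Finset (Sym2 (Fin n))) : Prop :=
  ∀ W, Cl ∪ W ⊆ D → WaiterWins (Kedges n) b (fun Cl _ => ∃ A ∈ PMfamily n, A ⊆ Cl) t Cl W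

lemma good_zero {n b : ℕ} {Cl D : Finset (Sym2 (Fin n))} (h : HasPM Cl Finset.univ) :
    Good n b 0 Cl D := by
  intro W _
  obtain ⟨F, h1, h2, h3, h4⟩ := h.toFam
  exact ⟨F, ⟨h2, fun v => h4 v (by simp)⟩, h1⟩

def EE {n : ℕ} (X Y : Finset (Fin n)) : Finset (Sym2 (Fin n)) :=
  (X ×ˢ Y).image (fun p => s(p.1, p.2))

lemma mem_EE {n : ℕ} {X Y : Finset (Fin n)} {e : Sym2 (Fin n)} :
    e ∈ EE X Y ↔ ∃ a ∈ X, ∃ c ∈ Y, e = s(a, c) := by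
  simp only [EE, Finset.mem_image, Finset.mem_product, Prod.exists]
  constructor
  · rintro ⟨a, c, ⟨h1, h2⟩, rfl⟩; exact ⟨a, h1, c, h2, rfl⟩
  · rintro ⟨a, h1, c, h2, rfl⟩; exact ⟨a, c, ⟨h1, h2⟩, rfl⟩

lemma mk_mem_EE {n : ℕ} {X Y : Finset (Fin n)} {u v : Fin n} :
    s(u, v) ∈ EE X Y ↔ (u ∈ X ∧ v ∈ Y) ∨ (v ∈ X ∧ u ∈ Y) := by
  rw [mem_EE]
  simp only [Sym2.eq_iff]
  grind

lemma card_EE {n : ℕ} {X Y : Finset (Fin n)} (h : Disjoint X Y) :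
    (EE X Y).card = X.card * Y.card := by
  rw [EE, Finset.card_image_of_injOn, Finset.card_product]
  rw [Finset.disjoint_left] at h
  rintro ⟨a, c⟩ h1 ⟨a', c'⟩ h2 h3
  simp only [Finset.coe_product, Set.mem_prod, Finset.mem_coe, Sym2.eq_iff] at h1 h2 h3
  grind

lemma good_step {n b t : ℕ} {Cl D : Finset (Sym2 (Fin n))} (X Y : Finset (Fin n))
    (hd : Disjoint X Y) (hc : b + 1 ≤ X.card * Y.card)
    (hf : ∀ a ∈ X, ∀ c ∈ Y, s(a, c) ∉ D)
    (hg : ∀ a ∈ X, ∀ c ∈ Y, Good n b t (insert s(a, c) Cl) (D ∪ EE X Y)) :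
    Good n b (t + 1) Cl D := by
  intro W hW
  right
  rw [← card_EE hd] at hc
  obtain ⟨O, hO, hOc⟩ := Finset.exists_subset_card_eq hc
  have hsub : O ⊆ Kedges n \ (Cl ∪ W) := by
    intro e he
    obtain ⟨a, ha, c, hc, rfl⟩ := mem_EE.1 (hO he)
    rw [Finset.mem_sdiff]
    refine ⟨?_, fun h => hf a ha c hc (hW h)⟩
    simp only [Kedges, Finset.mem_filter, Finset.mem_univ, true_and, Sym2.mk_isDiag_iff]
    rintro rfl
    exact Finset.disjoint_left.1 hd ha hc
  refine ⟨O, by rw [← Finset.card_pos]; omega, hsub, ?_, ?_⟩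
  · have := Finset.card_le_card hsub
    omega
  · intro e he
    obtain ⟨a, ha, c, hc, rfl⟩ := mem_EE.1 (hO he)
    apply hg a ha c hc
    intro f hf
    have h1 : f ∈ O ∨ f ∈ Cl ∪ W := by grind
    rcases h1 with h1 | h1
    · exact Finset.mem_union_right _ (hO h1)
    · exact Finset.mem_union_left _ (hW h1)

structure St {n : ℕ} (lev : Fin n → ℕ) (Cl D : Finset (Sym2 (Fin n))) (J I M : Finset (Fin n))
    (S A : Fin n → Finset (Fin n)) (h : Fin n → Fin n) : Prop where
  pm : HasPM Cl M
  sub : ∀ v ∈ J, A v ⊆ S v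
  blob : ∀ v ∈ J, ∀ p ∈ A v, HasPM Cl ((S v).erase p)
  dJ : ∀ v ∈ J, ∀ w ∈ J, v ≠ w → Disjoint (S v) (S w)
  dI : ∀ v ∈ J, Disjoint (S v) I
  dM : ∀ v ∈ J, Disjoint (S v) M
  dIM : Disjoint I M
  cov : ∀ z, z ∈ M ∨ z ∈ I ∨ ∃ v ∈ J, z ∈ S v
  single : ∀ v ∈ J, lev v = 0 → S v = {v} ∧ A v = {v}
  head : ∀ v ∈ J, h v ∈ A v
  fh : ∀ v ∈ J, ∀ x ∈ I, s(h v, x) ∉ D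
  fA : ∀ v ∈ J, ∀ w ∈ J, ∀ a ∈ A v, ∀ c ∈ A w, s(a, c) ∉ D

/-- number of blobs of level `l` -/
def cur {n : ℕ} (lev : Fin n → ℕ) (J : Finset (Fin n)) (l : ℕ) : ℕ :=
  (J.filter (fun v => lev v = l)).card

lemma cur_erase {n : ℕ} (lev : Fin n → ℕ) {J : Finset (Fin n)} {v : Fin n} (hv : v ∈ J) (l : ℕ) :
    cur lev (J.erase v) l + (if lev v = l then 1 else 0) = cur lev J l := by
  unfold cur
  rw [Finset.filter_erase]
  split_ifs with h
  · exact Finset.card_erase_add_one (by simp [hv, h])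
  · rw [Finset.erase_eq_of_notMem (by simp [h])]; rfl

lemma St.merge {n : ℕ} {lev : Fin n → ℕ} {Cl D : Finset (Sym2 (Fin n))} {J M : Finset (Fin n)}
    {S A : Fin n → Finset (Fin n)} {h : Fin n → Fin n} (H : St lev Cl D J ∅ M S A h)
    {v w a c : Fin n} (hv : v ∈ J) (hw : w ∈ J) (hvw : v ≠ w) (ha : a ∈ A v) (hc : c ∈ A w)
    (Y : Finset (Fin n)) :
    St lev (insert s(a, c) Cl) (D ∪ EE (A v) Y) ((J.erase v).erase w) ∅ (M ∪ (S v ∪ S w)) S A h := by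
  have hsub : Cl ⊆ insert s(a, c) Cl := Finset.subset_insert _ _
  have hd := H.dJ v hv w hw hvw
  have hd' := Finset.disjoint_left.1 hd
  have ha' := H.sub v hv ha
  have hc' := H.sub w hw hc
  constructor
  · apply HasPM.union (H.pm.mono hsub)
    · refine HasPM.add' (v := a) (w := c) (HasPM.union ((H.blob v hv a ha).mono hsub)
        ((H.blob w hw c hc).mono hsub) ?_) ?_ ?_ ?_ ?_ ?_
      · exact hd.mono (Finset.erase_subset _ _) (Finset.erase_subset _ _)
      · grind
      · grind
      · grind
      · grind
      · grind
    · rw [Finset.disjoint_union_right]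
      exact ⟨(H.dM v hv).symm, (H.dM w hw).symm⟩
  · intro u hu; exact H.sub u (by grind)
  · intro u hu p hp; exact (H.blob u (by grind) p hp).mono hsub
  · intro u hu z hz; exact H.dJ u (by grind) z (by grind)
  · simp
  · intro u hu
    simp only [Finset.disjoint_union_right]
    exact ⟨H.dM u (by grind), H.dJ u (by grind) v hv (by grind), H.dJ u (by grind) w hw (by grind)⟩
  · simp
  · intro z
    rcases H.cov z with h | h | ⟨u, hu, h⟩
    · left; grind
    · simp at h
    · by_cases h1 : u = v
      · left; grind
      · by_cases h2 : u = w
        · left; grind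
        · right; right; exact ⟨u, by grind, h⟩
  · intro u hu; exact H.single u (by grind)
  · intro u hu; exact H.head u (by grind)
  · simp
  · intro u hu z hz p hp q hq
    rw [Finset.mem_union, mk_mem_EE]
    have h1 := H.fA u (by grind) z (by grind) p hp q hq
    have h2 := Finset.disjoint_left.1 (H.dJ u (by grind) v hv (by grind)) (H.sub u (by grind) hp)
    have h3 := Finset.disjoint_left.1 (H.dJ z (by grind) v hv (by grind)) (H.sub z (by grind) hq)
    have h4 := H.sub v hv
    grind

lemma St.mergeStep {n b t : ℕ} {lev : Fin n → ℕ} {Cl D : Finset (Sym2 (Fin n))}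
    {J M : Finset (Fin n)}
    {S A : Fin n → Finset (Fin n)} {h : Fin n → Fin n} (H : St lev Cl D J ∅ M S A h)
    {v : Fin n} (hv : v ∈ J) (T : Finset (Fin n)) (hT : T ⊆ J) (hvT : v ∉ T) (l : ℕ)
    (hl : ∀ w ∈ T, (A w).card = l) (hc : b + 1 ≤ (A v).card * (T.card * l))
    (hg : ∀ w ∈ T, ∀ Cl D M, St lev Cl D ((J.erase v).erase w) ∅ M S A h → Good n b t Cl D) :
    Good n b (t + 1) Cl D := by
  have hcard : (T.biUnion A).card = T.card * l := by
    rw [Finset.card_biUnion, Finset.sum_congr rfl hl]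
    · simp
    · intro x hx y hy hxy
      exact (H.dJ x (hT hx) y (hT hy) hxy).mono (H.sub x (hT hx)) (H.sub y (hT hy))
  apply good_step (A v) (T.biUnion A)
  · rw [Finset.disjoint_biUnion_right]
    intro w hw
    exact (H.dJ v hv w (hT hw) (by grind)).mono (H.sub v hv) (H.sub w (hT hw))
  · rw [hcard]; exact hc
  · intro a ha c hc
    obtain ⟨w, hw, hcw⟩ := Finset.mem_biUnion.1 hc
    exact H.fA v hv w (hT hw) a ha c hcw
  · intro a ha c hc
    obtain ⟨w, hw, hcw⟩ := Finset.mem_biUnion.1 hc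
    exact hg w hw _ _ _ (H.merge hv (hT hw) (by grind) ha hcw _)

lemma stageC {n b k : ℕ} (hk : b + 1 ≤ 4 ^ k) {lev : Fin n → ℕ} {S A : Fin n → Finset (Fin n)}
    {h : Fin n → Fin n} (r : ℕ) : ∀ (m i : ℕ), i + m = k →
    ∀ (Cl D : Finset (Sym2 (Fin n))) (J M : Finset (Fin n)), St lev Cl D J ∅ M S A h →
    (∀ v ∈ J, (A v).card = 2 ^ lev v) → J.card = 2 * r →
    (∀ v ∈ J, i ≤ lev v ∧ lev v ≤ k) →
    (∀ l, i + 2 ≤ l → l ≤ k → 2 * 4 ^ (k - l + 1) ≤ cur lev J l) →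
    (i < k → 4 ^ (k - i) + min (cur lev J i) (4 ^ (k - i)) ≤ cur lev J (i + 1)) →
    Good n b r Cl D := by
  induction r with
  | zero =>
    intro m i _ Cl D J M H _ hJ _ _ _
    apply good_zero
    have hJ0 : J = ∅ := by simpa using hJ
    have : M = Finset.univ := by
      ext z
      have := H.cov z
      simp [hJ0] at this
      simp [this]
    rw [← this]; exact H.pm
  | succ r ihr =>
    intro m
    induction m with
    | zero =>
      intro i hi Cl D J M H hA hJ hlev hl hn
      obtain rfl : i = k := by omega
      have hJn : J.Nonempty := by rw [← Finset.card_pos]; omega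
      obtain ⟨v, hv⟩ := hJn
      have hvl : lev v = i := by have := hlev v hv; omega
      apply H.mergeStep (t := r) hv (J.erase v) (Finset.erase_subset _ _) (by simp) (2 ^ i)
      · intro w hw
        rw [hA w (by grind)]
        have := hlev w (by grind)
        congr 1; omega
      · rw [hA v hv, hvl, Finset.card_erase_of_mem hv, hJ]
        have : (4:ℕ) ^ i = 2 ^ i * 2 ^ i := by rw [← mul_pow]; norm_num
        rw [this] at hk
        refine hk.trans (Nat.mul_le_mul_left _ (Nat.le_mul_of_pos_left _ (by omega)))
      · intro w hw Cl D M H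
        refine ihr 0 i (by omega) _ _ _ _ H (by grind) ?_ (by grind) (by grind) (by grind)
        rw [Finset.card_erase_of_mem hw, Finset.card_erase_of_mem hv]; omega
    | succ m ihm =>
      intro i hi Cl D J M H hA hJ hlev hl hn
      have hn' := hn (by omega)
      by_cases hc0 : cur lev J i = 0
      · refine ihm (i + 1) (by omega) Cl D J M H hA hJ ?_ ?_ ?_
        · intro v hv
          have h1 := hlev v hv
          have : lev v ≠ i := by
            intro h
            have : v ∈ J.filter (fun v => lev v = i) := by simp [hv, h]
            rw [cur, Finset.card_eq_zero] at hc0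
            simp [hc0] at this
          omega
        · intro l h1 h2; exact hl l (by omega) h2
        · intro h1
          have := hl (i + 2) (by omega) (by omega)
          rw [show k - (i + 2) + 1 = k - (i + 1) by omega] at this
          rw [show i + 1 + 1 = i + 2 by omega]
          omega
      · obtain ⟨v, hv'⟩ := Finset.card_pos.1 (Nat.pos_of_ne_zero hc0)
        obtain ⟨hv, hvl⟩ := Finset.mem_filter.1 hv'
        have h4 : (4:ℕ) ^ k = 2 ^ i * 2 ^ i * 4 ^ (k - i) := by
          rw [← mul_pow, show 2 * 2 = 4 by norm_num, ← pow_add]; congr 1; omega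
        by_cases hc1 : 4 ^ (k - i) + 1 ≤ cur lev J i
        · apply H.mergeStep (t := r) hv ((J.erase v).filter (fun w => lev w = i))
            (by grind) (by grind) (2 ^ i)
          · intro w hw
            rw [hA w (by grind)]
            grind
          · have := cur_erase lev hv i
            rw [if_pos hvl] at this
            have h5 : 4 ^ (k - i) ≤ cur lev (J.erase v) i := by omega
            rw [hA v hv, hvl]
            change _ ≤ 2 ^ i * (cur lev (J.erase v) i * 2 ^ i)
            calc b + 1 ≤ _ := hk
              _ = 2 ^ i * (4 ^ (k - i) * 2 ^ i) := by rw [h4]; ring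
              _ ≤ _ := by gcongr
          · intro w hw Cl D M H
            have hw1 : w ∈ J.erase v := by grind
            have hwl : lev w = i := by grind
            have hcur : ∀ l, i < l → cur lev ((J.erase v).erase w) l = cur lev J l := by
              intro l hli
              have h1 := cur_erase lev hv l
              have h2 := cur_erase lev hw1 l
              rw [if_neg (by omega)] at h1 h2
              omega
            refine ihr (m + 1) i (by omega) _ _ _ _ H (by grind) ?_ (by grind) ?_ ?_
            · rw [Finset.card_erase_of_mem hw1, Finset.card_erase_of_mem hv]; omega
            · intro l h1 h2; rw [hcur l (by omega)]; exact hl l h1 h2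
            · intro _; rw [hcur (i + 1) (by omega)]
              omega
        · apply H.mergeStep (t := r) hv (J.filter (fun w => lev w = i + 1))
            (by grind) (by grind) (2 ^ (i + 1))
          · intro w hw
            rw [hA w (by grind)]
            grind
          · have h5 : 4 ^ (k - i) ≤ cur lev J (i + 1) := by omega
            rw [hA v hv, hvl]
            change _ ≤ 2 ^ i * (cur lev J (i + 1) * 2 ^ (i + 1))
            calc b + 1 ≤ _ := hk
              _ = 2 ^ i * (4 ^ (k - i) * 2 ^ i) := by rw [h4]; ring
              _ ≤ _ := by gcongr <;> omega
          · intro w hw Cl D M H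
            have hwl : lev w = i + 1 := by grind
            have hw1 : w ∈ J.erase v := by grind
            refine ihr (m + 1) i (by omega) _ _ _ _ H (by grind) ?_ (by grind) ?_ ?_
            · rw [Finset.card_erase_of_mem hw1, Finset.card_erase_of_mem hv]; omega
            · intro l h1' h2'
              have h1 := cur_erase lev hv l
              have h2 := cur_erase lev hw1 l
              rw [if_neg (by omega)] at h1 h2
              have := hl l h1' h2'
              omega
            · intro _
              have h1 := cur_erase lev hv i
              have h2 := cur_erase lev hw1 i
              have h3 := cur_erase lev hv (i + 1)
              have h4 := cur_erase lev hw1 (i + 1)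
              rw [if_pos hvl] at h1
              rw [if_neg (by omega)] at h2
              rw [if_neg (by omega)] at h3
              rw [if_pos hwl] at h4
              omega

set_option maxHeartbeats 2000000 in
lemma stageB {n b k : ℕ} (hk : b + 1 ≤ 4 ^ k) {lev : Fin n → ℕ} {S A : Fin n → Finset (Fin n)}
    {h : Fin n → Fin n} (r i : ℕ) :
    ∀ (Cl D : Finset (Sym2 (Fin n))) (J I M : Finset (Fin n)), St lev Cl D J I M S A h →
    (∀ v ∈ J, (A v).card = 2 ^ lev v) → I.card = i → J.card = i + 2 * r →
    (∀ v ∈ J, lev v ≤ k) → b + i ≤ cur lev J 0 →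
    (∀ l, 1 ≤ l → l ≤ k → 2 * 4 ^ (k - l + 1) ≤ cur lev J l) →
    Good n b (i + r) Cl D := by
  induction i with
  | zero =>
    intro Cl D J I M H hA hI hJ hlev h0 hl
    obtain rfl : I = ∅ := by simpa using hI
    rw [zero_add]
    refine stageC hk r k 0 (by omega) Cl D J M H hA (by omega) (by grind)
      (fun l h1 h2 => hl l (by omega) h2) ?_
    intro h1
    have := hl 1 le_rfl h1
    rw [show k - 1 + 1 = k by omega] at this
    simp only [Nat.sub_zero, zero_add]
    omega
  | succ i ih =>
    intro Cl D J I M H hA hI hJ hlev h0 hl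
    obtain ⟨x, hx⟩ : I.Nonempty := by rw [← Finset.card_pos]; omega
    rw [show i + 1 + r = i + r + 1 by omega]
    have hq : ∀ q ∈ J, lev q = 0 → q ∈ A q ∧ S q = {q} ∧ h q = q := by
      intro q hq h0
      have := H.single q hq h0
      have h2 := H.head q hq
      grind
    apply good_step {x} (J.filter (fun v => lev v = 0))
    · rw [Finset.disjoint_singleton_left]
      intro h1
      have h1 := Finset.mem_filter.1 h1
      have := Finset.disjoint_left.1 (H.dI x h1.1)
      have := hq x h1.1 h1.2
      grind
    · change _ ≤ _ * cur lev J 0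
      simp; omega
    · intro a ha q hq'
      have h1 := Finset.mem_filter.1 hq'
      have h2 := H.fh q h1.1 x hx
      rw [(hq q h1.1 h1.2).2.2] at h2
      rw [Finset.mem_singleton.1 ha, Sym2.eq_swap]
      exact h2
    · intro a ha q hq'
      obtain rfl := Finset.mem_singleton.1 ha
      obtain ⟨hqJ, hq0⟩ := Finset.mem_filter.1 hq'
      have hqq := hq q hqJ hq0
      have hsub : Cl ⊆ insert s(a, q) Cl := Finset.subset_insert _ _
      have hdI : ∀ v ∈ J, ∀ z ∈ S v, z ∉ I := fun v hv z hz =>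
        Finset.disjoint_left.1 (H.dI v hv) hz
      have hdM : ∀ v ∈ J, ∀ z ∈ S v, z ∉ M := fun v hv z hz =>
        Finset.disjoint_left.1 (H.dM v hv) hz
      have hdIM := Finset.disjoint_left.1 H.dIM
      have hdJ : ∀ v ∈ J, v ≠ q → q ∉ S v := by
        intro v hv hvq hqv
        have := Finset.disjoint_left.1 (H.dJ v hv q hqJ hvq) hqv
        simp [hqq.2.1] at this
      have hqI : q ∉ I := hdI q hqJ q (by simp [hqq.2.1])
      have hqM : q ∉ M := hdM q hqJ q (by simp [hqq.2.1])
      apply ih _ _ (J.erase q) (I.erase a) (insert a (insert q M))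
      · constructor
        · exact HasPM.add _ _ _ (H.pm.mono hsub) (hdIM hx) hqM (by grind) (by simp)
        · intro v hv; exact H.sub v (by grind)
        · intro v hv p hp; exact (H.blob v (by grind) p hp).mono hsub
        · intro u hu z hz; exact H.dJ u (by grind) z (by grind)
        · intro v hv; exact (H.dI v (by grind)).mono_right (Finset.erase_subset _ _)
        · intro v hv
          rw [Finset.disjoint_left]; intro z hz
          have := hdM v (by grind) z hz
          have := hdI v (by grind) z hz
          have := hdJ v (by grind) (by grind)
          grind
        · rw [Finset.disjoint_left]; grind
        · intro z
          rcases H.cov z with h | h | ⟨u, hu, h⟩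
          · left; grind
          · grind
          · by_cases h1 : u = q
            · left; grind
            · right; right; exact ⟨u, by grind, h⟩
        · intro u hu; exact H.single u (by grind)
        · intro u hu; exact H.head u (by grind)
        · intro v hv y hy
          have h1 := H.fh v (by grind) y (by grind)
          have h2 := hdI v (by grind) _ (H.sub v (by grind) (H.head v (by grind)))
          rw [Finset.mem_union, mk_mem_EE]
          grind
        · intro u hu z hz p hp q hq
          rw [Finset.mem_union, mk_mem_EE]
          have h1 := H.fA u (by grind) z (by grind) p hp q hq
          have h2 := hdI u (by grind) p (H.sub u (by grind) hp)
          have h3 := hdI z (by grind) q (H.sub z (by grind) hq)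
          grind
      · intro v hv; exact hA v (by grind)
      · rw [Finset.card_erase_of_mem hx]; omega
      · rw [Finset.card_erase_of_mem hqJ]; omega
      · intro v hv; exact hlev v (by grind)
      · have := cur_erase lev hqJ 0
        rw [if_pos hq0] at this; omega
      · intro l h1 h2
        have := cur_erase lev hqJ l
        rw [if_neg (by omega)] at this
        have := hl l h1 h2
        omega

set_option maxHeartbeats 2000000 in
lemma St.ext {n : ℕ} {lev : Fin n → ℕ} {Cl D : Finset (Sym2 (Fin n))} {J I M U : Finset (Fin n)}
    {S A : Fin n → Finset (Fin n)} {h : Fin n → Fin n} (H : St lev Cl D J I M S A h)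
    {v x q : Fin n} (hv : v ∈ J) (hl : lev v ≠ 0) (hx : x ∈ I) (hqJ : q ∈ J) (hq0 : lev q = 0)
    (hUI : ∀ u ∈ U, u ∉ I) :
    St lev (insert s(x, q) (insert s(h v, x) Cl)) (D ∪ EE {h v} I ∪ EE {x} U)
      (J.erase q) (I.erase x) M (Function.update S v (insert x (insert q (S v))))
      (Function.update A v (insert q (A v))) (Function.update h v q) := by
  have hqq : S q = {q} ∧ A q = {q} ∧ h q = q := by
    have := H.single q hqJ hq0
    have h2 := H.head q hqJ
    grind
  have hvq : v ≠ q := by rintro rfl; exact hl hq0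
  have hsub : Cl ⊆ insert s(x, q) (insert s(h v, x) Cl) :=
    (Finset.subset_insert _ _).trans (Finset.subset_insert _ _)
  have hdI : ∀ v ∈ J, ∀ z ∈ S v, z ∉ I := fun v hv z hz =>
    Finset.disjoint_left.1 (H.dI v hv) hz
  have hdM : ∀ v ∈ J, ∀ z ∈ S v, z ∉ M := fun v hv z hz =>
    Finset.disjoint_left.1 (H.dM v hv) hz
  have hdJ : ∀ v ∈ J, v ≠ q → q ∉ S v := by
    intro v hv hvq hqv
    have := Finset.disjoint_left.1 (H.dJ v hv q hqJ hvq) hqv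
    simp [hqq.1] at this
  have hqI : q ∉ I := hdI q hqJ q (by simp [hqq.1])
  have hqM : q ∉ M := hdM q hqJ q (by simp [hqq.1])
  have hxM : x ∉ M := Finset.disjoint_left.1 H.dIM hx
  have hxq : x ≠ q := by rintro rfl; exact hqI hx
  have hxS : ∀ w ∈ J, x ∉ S w := fun w hw h1 => hdI w hw x h1 hx
  have hAS : ∀ w ∈ J, ∀ z ∈ A w, z ∈ S w := fun w hw z hz => H.sub w hw hz
  have hqv := hdJ v hv hvq
  have hxv := hxS v hv
  have hhv := hAS v hv _ (H.head v hv)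
  -- new disjointness with a different blob
  have key : ∀ w ∈ J, w ≠ q → w ≠ v → Disjoint (S w) (insert x (insert q (S v))) := by
    intro w hw h1 h2
    rw [Finset.disjoint_insert_right, Finset.disjoint_insert_right]
    exact ⟨hxS w hw, hdJ w hw h1, H.dJ w hw v hv h2⟩
  have hAI : ∀ w ∈ J.erase q, ∀ z ∈ Function.update A v (insert q (A v)) w, z ∉ I := by
    intro w hw z hz
    have hw := Finset.mem_erase.1 hw
    by_cases hwv : w = v
    · subst hwv
      rw [Function.update_self, Finset.mem_insert] at hz
      rcases hz with rfl | hz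
      · exact hqI
      · exact hdI w hv z (hAS w hv z hz)
    · rw [Function.update_of_ne hwv] at hz
      exact hdI w hw.2 z (hAS w hw.2 z hz)
  have hAD : ∀ w ∈ J.erase q, ∀ z ∈ Function.update A v (insert q (A v)) w, 
      ∃ w' ∈ J, z ∈ A w' := by
    intro w hw z hz
    have hw := Finset.mem_erase.1 hw
    by_cases hwv : w = v
    · subst hwv
      rw [Function.update_self, Finset.mem_insert] at hz
      rcases hz with rfl | hz
      · exact ⟨z, hqJ, by simp [hqq.2.1]⟩
      · exact ⟨w, hv, hz⟩
    · rw [Function.update_of_ne hwv] at hz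
      exact ⟨w, hw.2, hz⟩
  constructor
  · exact H.pm.mono hsub
  · intro w hw
    have hw := Finset.mem_erase.1 hw
    by_cases hwv : w = v
    · subst hwv
      simp only [Function.update_self]
      have := H.sub w hv
      grind
    · simp only [Function.update_of_ne hwv]
      exact H.sub w hw.2
  · intro w hw p hp
    have hw := Finset.mem_erase.1 hw
    by_cases hwv : w = v
    · subst hwv
      simp only [Function.update_self] at hp ⊢
      rw [Finset.mem_insert] at hp
      by_cases hpq : p = q
      · subst hpq
        refine HasPM.add' (v := h w) (w := x) ((H.blob w hv (h w) (H.head w hv)).mono hsub)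
          ?_ ?_ ?_ ?_ ?_
        · simp
        · simp [hxv]
        · grind
        · simp
        · ext z
          simp only [Finset.mem_erase, Finset.mem_insert]
          grind
      · have hp : p ∈ A w := by tauto
        have hpS := hAS w hv p hp
        refine HasPM.add' (v := x) (w := q) ((H.blob w hv p hp).mono hsub)
          ?_ ?_ ?_ ?_ ?_
        · simp [hxv]
        · simp [hqv]
        · exact hxq
        · simp
        · ext z
          simp only [Finset.mem_erase, Finset.mem_insert]
          grind
    · simp only [Function.update_of_ne hwv] at hp ⊢
      exact (H.blob w hw.2 p hp).mono hsub
  · intro w hw u hu hwu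
    have hw := Finset.mem_erase.1 hw
    have hu := Finset.mem_erase.1 hu
    by_cases hwv : w = v
    · subst hwv
      rw [Function.update_self, Function.update_of_ne hwu.symm]
      exact (key u hu.2 hu.1 hwu.symm).symm
    · rw [Function.update_of_ne hwv]
      by_cases huv : u = v
      · subst huv
        rw [Function.update_self]
        exact key w hw.2 hw.1 hwu
      · rw [Function.update_of_ne huv]
        exact H.dJ w hw.2 u hu.2 hwu
  · intro w hw
    have hw := Finset.mem_erase.1 hw
    by_cases hwv : w = v
    · subst hwv
      rw [Function.update_self, Finset.disjoint_insert_left, Finset.disjoint_insert_left]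
      exact ⟨by simp, by simp [hqI], (H.dI w hv).mono_right (Finset.erase_subset _ _)⟩
    · rw [Function.update_of_ne hwv]
      exact (H.dI w hw.2).mono_right (Finset.erase_subset _ _)
  · intro w hw
    have hw := Finset.mem_erase.1 hw
    by_cases hwv : w = v
    · subst hwv
      rw [Function.update_self, Finset.disjoint_insert_left, Finset.disjoint_insert_left]
      exact ⟨hxM, hqM, H.dM w hv⟩
    · rw [Function.update_of_ne hwv]
      exact H.dM w hw.2
  · exact H.dIM.mono_left (Finset.erase_subset _ _)
  · intro z
    have hvJ : v ∈ J.erase q := Finset.mem_erase.2 ⟨hvq, hv⟩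
    have hz : ∀ z, z = x ∨ z = q ∨ z ∈ S v → ∃ w ∈ J.erase q, 
        z ∈ Function.update S v (insert x (insert q (S v))) w := by
      intro z hz
      refine ⟨v, hvJ, ?_⟩
      rw [Function.update_self]; simpa using hz
    rcases H.cov z with h1 | h1 | ⟨u, hu, h1⟩
    · exact Or.inl h1
    · by_cases hzx : z = x
      · exact Or.inr (Or.inr (hz z (Or.inl hzx)))
      · exact Or.inr (Or.inl (Finset.mem_erase.2 ⟨hzx, h1⟩))
    · right; right
      by_cases huv : u = v
      · subst huv; exact hz z (by tauto)
      by_cases huq : u = q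
      · subst huq
        rw [hqq.1, Finset.mem_singleton] at h1
        exact hz z (by tauto)
      · exact ⟨u, Finset.mem_erase.2 ⟨huq, hu⟩, by rwa [Function.update_of_ne huv]⟩
  · intro w hw hw0
    have hw := Finset.mem_erase.1 hw
    have hwv : w ≠ v := by rintro rfl; exact hl hw0
    simp only [Function.update_of_ne hwv]
    exact H.single w hw.2 hw0
  · intro w hw
    have hw := Finset.mem_erase.1 hw
    by_cases hwv : w = v
    · subst hwv; simp
    · simp only [Function.update_of_ne hwv]
      exact H.head w hw.2
  · intro w hw y hy
    have hw := Finset.mem_erase.1 hw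
    have hy := Finset.mem_erase.1 hy
    have main : ∀ u ∈ J, u ≠ v → s(h u, y) ∉ D ∪ EE {h v} I ∪ EE {x} U := by
      intro u hu huv
      have h1 := H.fh u hu y hy.2
      have h2 := hAS u hu _ (H.head u hu)
      have h3 := hdI u hu _ h2
      have h4 : h u ≠ h v := by
        intro h5
        rw [h5] at h2
        exact Finset.disjoint_left.1 (H.dJ u hu v hv huv) h2 hhv
      have h5 := hdI v hv _ hhv
      simp only [Finset.mem_union, mk_mem_EE, Finset.mem_singleton]
      rintro ((h6 | ⟨h6, _⟩ | ⟨h6, h7⟩) | ⟨h6, _⟩ | ⟨h6, _⟩)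
      · exact h1 h6
      · exact h4 h6
      · exact h3 h7
      · rw [h6] at h3; exact h3 hx
      · exact hy.1 h6
    by_cases hwv : w = v
    · subst hwv
      rw [Function.update_self]
      have := main q hqJ hvq.symm
      rwa [hqq.2.2] at this
    · simp only [Function.update_of_ne hwv]
      exact main w hw.2 hwv
  · intro w hw u hu a ha c hc
    have h1 := hAI w hw a ha
    have h2 := hAI u hu c hc
    obtain ⟨w', hw', ha'⟩ := hAD w hw a ha
    obtain ⟨u', hu', hc'⟩ := hAD u hu c hc
    have h3 := H.fA w' hw' u' hu' a ha' c hc'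
    simp only [Finset.mem_union, mk_mem_EE, Finset.mem_singleton]
    rintro ((h6 | ⟨_, h6⟩ | ⟨_, h6⟩) | ⟨h6, _⟩ | ⟨h6, _⟩)
    · exact h3 h6
    · exact h2 h6
    · exact h1 h6
    · rw [h6] at h1; exact h1 hx
    · rw [h6] at h2; exact h2 hx

lemma stageA {n b k : ℕ} (hk : b + 1 ≤ 4 ^ k) {lev : Fin n → ℕ} (r i d : ℕ) (hbi : b ≤ i) :
    ∀ (S A : Fin n → Finset (Fin n)) (h : Fin n → Fin n)
    (Cl D : Finset (Sym2 (Fin n))) (J I M : Finset (Fin n)), St lev Cl D J I M S A h →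
    (∀ v ∈ J, (A v).card ≤ 2 ^ lev v) → ∑ v ∈ J, (2 ^ lev v - (A v).card) = d →
    I.card = i + d → J.card = i + 2 * r + d →
    (∀ v ∈ J, lev v ≤ k) → b + i + d ≤ cur lev J 0 →
    (∀ l, 1 ≤ l → l ≤ k → 2 * 4 ^ (k - l + 1) ≤ cur lev J l) →
    Good n b (2 * d + (i + r)) Cl D := by
  induction d with
  | zero =>
    intro S A h Cl D J I M H hA hd hI hJ hlev h0 hl
    have := stageB hk r i Cl D J I M H (fun v hv => by
      have h1 := Finset.sum_eq_zero_iff.1 hd v hv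
      have h2 := hA v hv
      omega) (by omega) (by omega) hlev (by omega) hl
    simpa using this
  | succ d ih =>
    intro S A h Cl D J I M H hA hd hI hJ hlev h0 hl
    obtain ⟨v, hv, hvd⟩ : ∃ v ∈ J, 2 ^ lev v - (A v).card ≠ 0 := by
      by_contra hcon
      push Not at hcon
      rw [Finset.sum_eq_zero hcon] at hd
      omega
    have hv0 : lev v ≠ 0 := by
      intro h1
      have := (H.single v hv h1).2
      simp [h1, this] at hvd
    have hq : ∀ q ∈ J, lev q = 0 → S q = {q} ∧ A q = {q} ∧ h q = q := by
      intro q hq h0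
      have := H.single q hq h0
      have h2 := H.head q hq
      grind
    have hhv := H.sub v hv (H.head v hv)
    have hdI : ∀ v ∈ J, ∀ z ∈ S v, z ∉ I := fun v hv z hz =>
      Finset.disjoint_left.1 (H.dI v hv) hz
    have hUI : ∀ u ∈ J.filter (fun v => lev v = 0), u ∉ I := by
      intro u hu
      obtain ⟨h1, h2⟩ := Finset.mem_filter.1 hu
      exact hdI u h1 u (by simp [hq u h1 h2])
    rw [show 2 * (d + 1) + (i + r) = 2 * d + (i + r) + 1 + 1 by ring]
    apply good_step {h v} I
    · rw [Finset.disjoint_singleton_left]; exact hdI v hv _ hhv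
    · simp; omega
    · intro a ha c hc
      rw [Finset.mem_singleton.1 ha]; exact H.fh v hv c hc
    intro a ha x hx
    obtain rfl := Finset.mem_singleton.1 ha
    apply good_step {x} (J.filter (fun v => lev v = 0))
    · rw [Finset.disjoint_singleton_left]
      exact fun h1 => hUI x h1 hx
    · change _ ≤ _ * cur lev J 0
      simp; omega
    · intro a ha q hq'
      obtain rfl := Finset.mem_singleton.1 ha
      obtain ⟨h1, h2⟩ := Finset.mem_filter.1 hq'
      have h3 := H.fh q h1 a hx
      have h4 := hUI q hq'
      rw [(hq q h1 h2).2.2] at h3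
      rw [Finset.mem_union, mk_mem_EE, Sym2.eq_swap]
      rintro (h5 | ⟨h5, h6⟩ | ⟨h5, h6⟩)
      · exact h3 h5
      · exact h4 h6
      · rw [Finset.mem_singleton] at h5
        have : q ≠ v := by rintro rfl; exact hv0 h2
        have := Finset.disjoint_left.1 (H.dJ q h1 v hv this)
          (show q ∈ S q by simp [hq q h1 h2])
        rw [← h5] at hhv
        exact this hhv
    intro a ha q hq'
    obtain rfl := Finset.mem_singleton.1 ha
    obtain ⟨hqJ, hq0⟩ := Finset.mem_filter.1 hq'
    have H' := H.ext hv hv0 hx hqJ hq0 hUI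
    have hvq : v ≠ q := by rintro rfl; exact hv0 hq0
    have hqA : q ∉ A v := by
      intro h1
      have := Finset.disjoint_left.1 (H.dJ v hv q hqJ hvq) (H.sub v hv h1)
      simp [hq q hqJ hq0] at this
    have hvJ : v ∈ J.erase q := Finset.mem_erase.2 ⟨hvq, hv⟩
    refine ih _ _ _ _ _ _ _ _ H' ?_ ?_ ?_ ?_ ?_ ?_ ?_
    · intro w hw
      by_cases hwv : w = v
      · subst hwv
        rw [Function.update_self, Finset.card_insert_of_notMem hqA]; omega
      · rw [Function.update_of_ne hwv]; exact hA w (Finset.mem_of_mem_erase hw)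
    · rw [← Finset.add_sum_erase _ _ hqJ, ← Finset.add_sum_erase _ _ hvJ] at hd
      rw [← Finset.add_sum_erase _ _ hvJ]
      rw [Function.update_self, Finset.card_insert_of_notMem hqA]
      have : ∑ w ∈ (J.erase q).erase v,
          (2 ^ lev w - (Function.update A v (insert q (A v)) w).card) =
          ∑ w ∈ (J.erase q).erase v, (2 ^ lev w - (A w).card) := by
        apply Finset.sum_congr rfl
        intro w hw
        rw [Function.update_of_ne (Finset.mem_erase.1 hw).1]
      rw [this]
      have h1 : 2 ^ lev q - (A q).card = 0 := by simp [hq q hqJ hq0, hq0]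
      omega
    · rw [Finset.card_erase_of_mem hx]; omega
    · rw [Finset.card_erase_of_mem hqJ]; omega
    · intro w hw; exact hlev w (Finset.mem_of_mem_erase hw)
    · have := cur_erase lev hqJ 0
      rw [if_pos hq0] at this; omega
    · intro l h1 h2
      have := cur_erase lev hqJ l
      rw [if_neg (by omega)] at this
      have := hl l h1 h2
      omega

lemma exists_lev {n : ℕ} (N : ℕ → ℕ) (k : ℕ) (hN : ∑ l ∈ Finset.Icc 1 k, N l ≤ n) :
    ∃ lev : Fin n → ℕ, (∀ v, lev v ≤ k) ∧ (∀ l ∈ Finset.Icc 1 k, cur lev Finset.univ l = N l) ∧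
      cur lev Finset.univ 0 + ∑ l ∈ Finset.Icc 1 k, N l = n := by
  induction k with
  | zero => exact ⟨fun _ => 0, by simp, by simp, by simp [cur]⟩
  | succ k ih =>
    rw [Finset.sum_Icc_succ_top (by omega)] at hN
    obtain ⟨lev, h1, h2, h3⟩ := ih (by omega)
    obtain ⟨T, hT, hTc⟩ := Finset.exists_subset_card_eq (n := N (k + 1))
      (s := Finset.univ.filter (fun v => lev v = 0)) (by unfold cur at h3; omega)
    have hT0 : ∀ v ∈ T, lev v = 0 := fun v hv => (Finset.mem_filter.1 (hT hv)).2
    refine ⟨fun v => if v ∈ T then k + 1 else lev v, ?_, ?_, ?_⟩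
    · intro v
      have := h1 v
      dsimp only
      split_ifs <;> omega
    · intro l hl
      rw [Finset.mem_Icc] at hl
      by_cases hlk : l = k + 1
      · subst hlk
        rw [← hTc]
        unfold cur
        congr 1
        ext v
        have := h1 v
        simp only [Finset.mem_filter, Finset.mem_univ, true_and]
        split_ifs with h
        · simp [h]
        · simp [h]; omega
      · rw [← h2 l (by rw [Finset.mem_Icc]; omega)]
        unfold cur
        congr 1
        ext v
        simp only [Finset.mem_filter, Finset.mem_univ, true_and]
        split_ifs with h
        · have := hT0 v h; omega
        · rfl
    · rw [Finset.sum_Icc_succ_top (by omega)]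
      have : cur (fun v => if v ∈ T then k + 1 else lev v) Finset.univ 0 =
          cur lev Finset.univ 0 - N (k + 1) := by
        rw [← hTc]
        unfold cur
        rw [← Finset.card_sdiff_of_subset hT]
        congr 1
        ext v
        simp only [Finset.mem_filter, Finset.mem_univ, true_and, Finset.mem_sdiff]
        split_ifs with h <;> simp [h]
      have h4 : N (k + 1) ≤ cur lev Finset.univ 0 := by
        rw [← hTc]; exact Finset.card_le_card hT
      omega

lemma sum_bound (k : ℕ) : ∑ l ∈ Finset.Icc 1 k, 2 * 4 ^ (k - l + 1) * 2 ^ l ≤ 8 * 4 ^ k := by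
  have h : ∀ m ≤ k, ∑ l ∈ Finset.Icc 1 m, 2 * 4 ^ (k - l + 1) * 2 ^ l + 8 * (2 ^ k * 2 ^ (k - m))
      ≤ 8 * 4 ^ k := by
    intro m
    induction m with
    | zero => intro _; simp [← mul_pow]
    | succ m ih =>
      intro hm
      have := ih (by omega)
      rw [Finset.sum_Icc_succ_top (by omega)]
      obtain ⟨j, rfl⟩ : ∃ j, k = m + 1 + j := ⟨k - (m + 1), by omega⟩
      have e1 : m + 1 + j - (m + 1) = j := by omega
      have e2 : m + 1 + j - m = j + 1 := by omega
      rw [e2] at this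
      rw [e1]
      have e3 : 2 * 4 ^ (j + 1) * 2 ^ (m + 1) = 8 * (2 ^ (m + 1 + j) * 2 ^ j) := by
        rw [show 4 = 2 * 2 by norm_num, mul_pow]; ring
      rw [e3]
      have e4 : 2 ^ (m + 1 + j) * 2 ^ (j + 1) = 2 * (2 ^ (m + 1 + j) * 2 ^ j) := by ring
      rw [e4] at this
      omega
  exact (Nat.le_add_right _ _).trans (h k le_rfl)

lemma main {n b : ℕ} (hn : Even n) (hb : 1 ≤ b) (hbn : 100 * b ≤ n) :
    ∃ t ≤ n / 2 + 32 * b, Good n b t ∅ ∅ := by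
  obtain ⟨k, hk1, hk2⟩ : ∃ k, b + 1 ≤ 4 ^ k ∧ 4 ^ k ≤ 4 * b := by
    refine ⟨Nat.log 4 b + 1, Nat.lt_pow_succ_log_self (by norm_num) b, ?_⟩
    have := Nat.pow_log_le_self 4 (x := b) (by omega)
    rw [pow_succ]; omega
  have hsb := sum_bound k
  have hsN : ∑ l ∈ Finset.Icc 1 k, 2 * 4 ^ (k - l + 1) ≤ 8 * 4 ^ k :=
    (Finset.sum_le_sum fun l _ => Nat.le_mul_of_pos_right _ (by positivity)).trans hsb
  obtain ⟨lev, hlev, hcur, hc0⟩ := exists_lev (n := n) (fun l => 2 * 4 ^ (k - l + 1)) k (by omega)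
  obtain ⟨d, hd⟩ : ∃ d, d = ∑ v : Fin n, (2 ^ lev v - 1) := ⟨_, rfl⟩
  have hdb : d ≤ 8 * 4 ^ k := by
    refine le_trans ?_ hsb
    rw [hd, ← Finset.sum_fiberwise_of_maps_to (s := Finset.univ) (t := Finset.range (k + 1))
      (g := lev) (fun v _ => by have := hlev v; simp; omega)]
    rw [Finset.sum_range_succ', Finset.range_eq_Ico, 
      Finset.sum_Ico_add' (fun l => ∑ v : Fin n with lev v = l, (2 ^ lev v - 1)) 0 k 1]
    have h0 : ∑ v : Fin n with lev v = 0, (2 ^ lev v - 1) = 0 := by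
      apply Finset.sum_eq_zero
      intro v hv
      simp [(Finset.mem_filter.1 hv).2]
    rw [h0, add_zero]
    rw [show Finset.Ico (0 + 1) (k + 1) = Finset.Icc 1 k by ext; simp [Nat.lt_succ_iff]]
    apply Finset.sum_le_sum
    intro l hl
    rw [← hcur l hl]
    unfold cur
    rw [← smul_eq_mul, ← Finset.sum_const]
    apply Finset.sum_le_sum
    intro v hv
    rw [(Finset.mem_filter.1 hv).2]
    exact Nat.sub_le _ _
  obtain ⟨I, hI, hIc⟩ := Finset.exists_subset_card_eq (n := b + d)
      (s := Finset.univ.filter (fun v => lev v = 0)) (by unfold cur at hc0; omega)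
  have hI0 : ∀ v ∈ I, lev v = 0 := fun v hv => (Finset.mem_filter.1 (hI hv)).2
  obtain ⟨m, hm⟩ := hn
  refine ⟨2 * d + (b + (m - b - d)), by omega, ?_⟩
  apply stageA hk1 (lev := lev) (m - b - d) b d le_rfl (fun v => {v}) (fun v => {v}) id ∅ ∅
    (Finset.univ \ I) I ∅
  · constructor
    · exact .empty
    · simp
    · intro v _ p hp
      simp only [Finset.mem_singleton] at hp
      subst hp
      simpa using HasPM.empty
    · intro v _ w _ h; simpa using h
    · intro v hv; simpa using hv
    · simp
    · simp
    · intro z; by_cases h : z ∈ I <;> simp [h]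
    · simp
    · simp
    · simp
    · simp
  · intro v _; simpa using Nat.one_le_two_pow
  · rw [hd]
    simp only [Finset.card_singleton]
    apply Finset.sum_subset (Finset.subset_univ _)
    intro v _ hv
    have : v ∈ I := by simpa using hv
    simp [hI0 v this]
  · exact hIc
  · rw [Finset.card_sdiff_of_subset (Finset.subset_univ _), Finset.card_univ, Fintype.card_fin]
    omega
  · intro v _; exact hlev v
  · have : cur lev (Finset.univ \ I) 0 = cur lev Finset.univ 0 - (b + d) := by
      rw [← hIc]
      unfold cur
      rw [← Finset.card_sdiff_of_subset hI]
      congr 1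
      ext v; simp; tauto
    omega
  · intro l h1 h2
    rw [← hcur l (Finset.mem_Icc.2 ⟨h1, h2⟩)]
    unfold cur
    apply Finset.card_le_card
    intro v hv
    simp only [Finset.mem_filter, Finset.mem_univ, true_and, Finset.mem_sdiff] at hv ⊢
    refine ⟨fun h => ?_, hv⟩
    have := hI0 v h
    omega

end WCPM

/-- There exist constants `δ, C > 0` such that for every large enough even `n` and every
positive integer `b ≤ δn`, in the `b`-biased Waiter-Client perfect matching game on `K_n`,
Waiter can win within `n/2 + C·b` rounds. -/
theorem WC_perfect_matching_biased :
    ∃ δ C : ℝ, 0 < δ ∧ 0 < C ∧ ∃ n₀ : ℕ, ∀ n : ℕ, n₀ ≤ n → Even n →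
      ∀ b : ℕ, 1 ≤ b → (b : ℝ) ≤ δ * n →
        (tauWC (Kedges n) (PMfamily n) b : ℝ) ≤ (n : ℝ) / 2 + C * b := by
  refine ⟨1 / 100, 32, by norm_num, by norm_num, 0, ?_⟩
  intro n _ hn b hb hbn
  have hbn' : 100 * b ≤ n := by
    have : (100 : ℝ) * b ≤ n := by linarith
    exact_mod_cast this
  obtain ⟨t, ht, hg⟩ := WCPM.main hn hb hbn'
  have h1 : tauWC (Kedges n) (PMfamily n) b ≤ n / 2 + 32 * b :=
    (Nat.sInf_le (hg ∅ (by simp))).trans ht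
  obtain ⟨m, rfl⟩ := hn
  have h2 : (m + m) / 2 = m := by omega
  rw [h2] at h1
  have h3 : (tauWC (Kedges (m + m)) (PMfamily (m + m)) b : ℝ) ≤ m + 32 * b := by exact_mod_cast h1
  push_cast
  linarith
end

section
/- For every large enough integer n, in the unbiased Waiter-Client game played on the edge set of the complete graph K_n whose winning sets are the Hamilton cycles of K_n, the minimum number of rounds within which Waiter can force a win is exactly n + 1; that is, τ_WC(H_n, 1) = n + 1. -/
open Finset

/-- The family of edge sets of Hamilton cycles of `K_n`. -/
def HamFamily (n : ℕ) : Set (Finset (Sym2 (Fin n))) :=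
  {F | ∃ (u : Fin n) (p : (⊤ : SimpleGraph (Fin n)).Walk u u),
    p.IsHamiltonianCycle ∧ F = p.edges.toFinset}

theorem exists_path_walk {n : ℕ} (Cl : Finset (Sym2 (Fin n))) :
    ∀ (l : List (Fin n)) (a : Fin n), (a :: l).Nodup →
      (a :: l).IsChain (fun x y => s(x, y) ∈ Cl) →
      ∃ (z : Fin n) (_ : z = (a :: l).getLast (by simp))
        (p : (⊤ : SimpleGraph (Fin n)).Walk a z), p.support = a :: l ∧ ∀ e ∈ p.edges, e ∈ Cl := by
  intro l
  induction l with
  | nil => intro a _ _; exact ⟨a, rfl, SimpleGraph.Walk.nil, by simp⟩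
  | cons b l ih =>
    intro a hn hc
    rw [List.isChain_cons_cons] at hc
    obtain ⟨z, hz, p, hp, he⟩ := ih b (List.nodup_cons.1 hn).2 hc.2
    have hab : (⊤ : SimpleGraph (Fin n)).Adj a b := by
      simp only [SimpleGraph.top_adj]; rintro rfl; simp at hn
    refine ⟨z, by rw [hz]; simp, SimpleGraph.Walk.cons hab p, by simp [hp], ?_⟩
    intro e h
    simp only [SimpleGraph.Walk.edges_cons, List.mem_cons] at h
    rcases h with rfl | h
    · exact hc.1
    · exact he e h

theorem ham_of_list {n : ℕ} (hn3 : 3 ≤ n) (Cl : Finset (Sym2 (Fin n))) (a : Fin n)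
    (l : List (Fin n)) (hn : (a :: l).Nodup) (hl : (a :: l).length = n)
    (hc : (a :: (l ++ [a])).IsChain (fun x y => s(x, y) ∈ Cl)) :
    ∃ A ∈ HamFamily n, A ⊆ Cl := by
  match l, hn, hl, hc with
  | [], _, hl, _ => simp at hl; omega
  | b :: l, hn, hl, hc =>
    simp only [List.cons_append, List.isChain_cons_cons] at hc
    rw [← List.cons_append, List.isChain_append] at hc
    obtain ⟨hab, hc, -, hz⟩ := hc
    obtain ⟨z, hzz, p, hp, he⟩ := exists_path_walk Cl l b (List.nodup_cons.1 hn).2 hc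
    have hzl : (b :: l).getLast (by simp) ∈ b :: l := List.getLast_mem _
    have hz' := hz _ (by rw [List.getLast?_eq_getLast_of_ne_nil (by simp)]; rfl) a (by simp)
    have hlne : l ≠ [] := by rintro rfl; simp at hl; omega
    have hzb : (b :: l).getLast (by simp) ≠ b := by
      rw [List.getLast_cons hlne]
      intro h
      have := List.getLast_mem hlne
      rw [h] at this
      simp [this] at hn
    rw [← hzz] at hzl hz' hzb
    have hal : a ∉ b :: l := (List.nodup_cons.1 hn).1
    have hadj1 : (⊤ : SimpleGraph (Fin n)).Adj a b := by
      simp only [SimpleGraph.top_adj]; rintro rfl; simp at hal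
    have hadj2 : (⊤ : SimpleGraph (Fin n)).Adj z a := by
      simp only [SimpleGraph.top_adj]; rintro rfl; exact hal hzl
    refine ⟨_, ⟨z, SimpleGraph.Walk.cons hadj2 (SimpleGraph.Walk.cons hadj1 p), ?_, rfl⟩, ?_⟩
    · rw [SimpleGraph.Walk.isHamiltonianCycle_iff_isCycle_and_length_eq,
        SimpleGraph.Walk.cons_isCycle_iff]
      refine ⟨⟨?_, ?_⟩, ?_⟩
      · rw [SimpleGraph.Walk.isPath_def]; simpa [hp] using hn
      · simp only [SimpleGraph.Walk.edges_cons, List.mem_cons, not_or]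
        refine ⟨?_, ?_⟩
        · intro h
          rw [Sym2.eq_iff] at h
          rcases h with ⟨h1, h2⟩ | ⟨h1, h2⟩
          · exact hal (h1 ▸ hzl)
          · exact hzb h1
        · intro h
          have := SimpleGraph.Walk.snd_mem_support_of_mem_edges p h
          rw [hp] at this
          exact hal this
      · have := congrArg List.length hp
        simp only [SimpleGraph.Walk.length_support, List.length_cons,
          SimpleGraph.Walk.length_cons, Fintype.card_fin] at *
        omega
    · intro e h
      simp only [List.mem_toFinset, SimpleGraph.Walk.edges_cons, List.mem_cons] at h
      rcases h with rfl | rfl | h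
      · exact hz'
      · exact hab
      · exact he e h

/-- Game position: Client's set `Cl`, all claimed elements `U`. -/
def GW (n t : ℕ) (Cl U : Finset (Sym2 (Fin n))) : Prop :=
  ∀ W, Cl ∪ W = U →
    WaiterWins (Kedges n) 1 (fun Cl _ => ∃ A ∈ HamFamily n, A ⊆ Cl) t Cl W

theorem GW_step {n t : ℕ} {Cl U : Finset (Sym2 (Fin n))} (e f : Sym2 (Fin n)) (hef : e ≠ f)
    (he : ¬ e.IsDiag) (hf : ¬ f.IsDiag) (heU : e ∉ U) (hfU : f ∉ U)
    (h1 : GW n t (insert e Cl) (insert e (insert f U)))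
    (h2 : GW n t (insert f Cl) (insert f (insert e U))) : GW n (t + 1) Cl U := by
  intro W hW
  have hsub : ({e, f} : Finset (Sym2 (Fin n))) ⊆ Kedges n \ (Cl ∪ W) := by
    intro x hx
    simp only [mem_insert, mem_singleton] at hx
    rw [hW]
    rcases hx with rfl | rfl <;> simp [Kedges, *]
  refine Or.inr ⟨{e, f}, by simp, hsub, ?_, ?_⟩
  · have := Finset.card_le_card hsub
    rw [Finset.card_pair hef] at *
    omega
  · intro x hx
    simp only [mem_insert, mem_singleton] at hx
    rcases hx with rfl | rfl
    · apply h1; rw [← hW]; ext y; simp; grind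
    · apply h2; rw [← hW]; ext y; simp; grind

theorem GW_zero {n : ℕ} (hn3 : 3 ≤ n) {Cl U : Finset (Sym2 (Fin n))} (a : Fin n)
    (l : List (Fin n)) (hn : (a :: l).Nodup) (hl : (a :: l).length = n)
    (hc : (a :: (l ++ [a])).IsChain (fun x y => s(x, y) ∈ Cl)) : GW n 0 Cl U := by
  intro W _
  exact ham_of_list hn3 Cl a l hn hl hc

theorem lower {n : ℕ} (hn : 10 ≤ n) : ∀ (t : ℕ) (Cl W : Finset (Sym2 (Fin n))),
    Cl.card + t ≤ n → Cl.card < n → (Cl ∪ W).card ≤ 2 * Cl.card →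
    ¬ WaiterWins (Kedges n) 1 (fun Cl _ => ∃ A ∈ HamFamily n, A ⊆ Cl) t Cl W := by
  have hcard : ∀ A ∈ HamFamily n, A.card = n := by
    rintro A ⟨u, p, hp, rfl⟩
    rw [List.toFinset_card_of_nodup hp.isCycle.isTrail.edges_nodup,
      SimpleGraph.Walk.length_edges, hp.length_eq, Fintype.card_fin]
  have heven : ∀ A ∈ HamFamily n, ∀ x : Fin n, Even (A.filter (fun e => x ∈ e)).card := by
    rintro A ⟨u, p, hp, rfl⟩ x
    have := (hp.isCycle.isTrail.even_countP_edges_iff x).2 (by simp)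
    rw [List.countP_eq_length_filter] at this
    have h2 : p.edges.toFinset.filter (fun e => x ∈ e)
        = (p.edges.filter (fun e => decide (x ∈ e))).toFinset := by ext y; simp
    rw [h2, List.toFinset_card_of_nodup
      (List.Nodup.filter _ hp.isCycle.isTrail.edges_nodup)]
    exact this
  have hnowin : ∀ Cl : Finset (Sym2 (Fin n)), Cl.card < n → ¬ ∃ A ∈ HamFamily n, A ⊆ Cl := by
    rintro Cl h ⟨A, hA, hs⟩
    have := Finset.card_le_card hs
    rw [hcard A hA] at this
    omega
  have hK : (Kedges n).card = n.choose 2 := by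
    have := Sym2.card_subtype_not_diag (α := Fin n)
    rw [Fintype.card_subtype, Fintype.card_fin] at this
    rw [Kedges, ← this]
  have hK2 : 2 * n ≤ (Kedges n).card := by
    rw [hK, Nat.choose_two_right, Nat.le_div_iff_mul_le (by norm_num)]
    obtain ⟨m, rfl⟩ := Nat.exists_eq_add_of_le hn
    simp only [show 10 + m - 1 = 9 + m by omega]
    nlinarith
  intro t
  induction t with
  | zero => intro Cl W _ h _ hw; exact hnowin Cl h hw
  | succ t ih =>
    intro Cl W h1 h2 h3 hw
    rcases hw with hw | ⟨O, hO, hsub, hOc, hw⟩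
    · exact hnowin Cl h2 hw
    have hfree : 2 ≤ (Kedges n \ (Cl ∪ W)).card := by
      have := Finset.le_card_sdiff (Cl ∪ W) (Kedges n)
      omega
    have hO2 : O.card = 2 := by omega
    obtain ⟨e, f, hef, rfl⟩ := Finset.card_eq_two.1 hO2
    have he := hsub (show e ∈ ({e, f} : Finset _) by simp)
    have hf := hsub (show f ∈ ({e, f} : Finset _) by simp)
    simp only [Kedges, mem_sdiff, mem_filter, mem_univ, true_and, mem_union, not_or] at he hf
    have hwe := hw e (by simp)
    have hwf := hw f (by simp)
    by_cases hlast : Cl.card + 1 < n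
    · refine ih _ _ ?_ ?_ ?_ hwe
      · rw [Finset.card_insert_of_notMem he.2.1]; omega
      · rw [Finset.card_insert_of_notMem he.2.1]; omega
      · rw [Finset.card_insert_of_notMem he.2.1]
        have : insert e Cl ∪ (W ∪ ({e, f} : Finset _).erase e) ⊆ insert e (insert f (Cl ∪ W)) := by
          intro y; simp; grind
        have := Finset.card_le_card this
        have a1 := Finset.card_insert_le e (insert f (Cl ∪ W))
        have a2 := Finset.card_insert_le f (Cl ∪ W)
        omega
    · have ht : t = 0 := by omega
      subst ht
      obtain ⟨A, hA, hAs⟩ := hwe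
      obtain ⟨B, hB, hBs⟩ := hwf
      have hA' : A = insert e Cl := by
        apply Finset.eq_of_subset_of_card_le hAs
        rw [hcard A hA, Finset.card_insert_of_notMem he.2.1]; omega
      have hB' : B = insert f Cl := by
        apply Finset.eq_of_subset_of_card_le hBs
        rw [hcard B hB, Finset.card_insert_of_notMem hf.2.1]; omega
      obtain ⟨x, hxe, hxf⟩ : ∃ x, x ∈ e ∧ x ∉ f := by
        by_contra hcon
        push Not at hcon
        have he1 := he.1
        induction e with | _ a b => ?_
        have ha := hcon a (by simp)
        have hb := hcon b (by simp)
        have hab : a ≠ b := by simpa using he1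
        exact hef ((Sym2.mem_and_mem_iff hab).1 ⟨ha, hb⟩).symm
      have p1 := heven A hA x
      have p2 := heven B hB x
      rw [hA', Finset.filter_insert, if_pos hxe, Finset.card_insert_of_notMem
        (by simp [he.2.1]), Nat.even_add_one] at p1
      rw [hB', Finset.filter_insert, if_neg hxf] at p2
      exact p1 p2

theorem chain_rev {n : ℕ} {Cl : Finset (Sym2 (Fin n))} {x y : Fin n} {M : List (Fin n)}
    (h : (x :: (M ++ [y])).IsChain (fun x y => s(x, y) ∈ Cl)) :
    (y :: (M.reverse ++ [x])).IsChain (fun x y => s(x, y) ∈ Cl) := by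
  rw [← List.isChain_reverse]
  simp only [List.reverse_cons, List.reverse_append, List.reverse_reverse, List.reverse_nil,
    List.nil_append, List.singleton_append]
  simpa [Sym2.eq_swap] using h

theorem final2 {n : ℕ} (hn3 : 3 ≤ n) {Cl U : Finset (Sym2 (Fin n))} (u v w p c q : Fin n)
    (A D : List (Fin n))
    (hnd : (w :: u :: (A ++ q :: c :: p :: (D ++ [v]))).Nodup)
    (hl : (w :: u :: (A ++ q :: c :: p :: (D ++ [v]))).length = n)
    (hc : (u :: (A ++ q :: c :: p :: (D ++ [v]))).IsChain (fun x y => s(x, y) ∈ Cl))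
    (hwc : s(w, c) ∈ Cl)
    (f1 : s(v, u) ∉ U) (f2 : s(v, w) ∉ U) (f3 : s(w, p) ∉ U) (f4 : s(w, q) ∉ U)
    (f5 : s(u, p) ∉ U) (f6 : s(u, w) ∉ U) : GW n 2 Cl U := by
  rw [List.isChain_cons_append_cons_cons, List.isChain_cons_cons] at hc
  obtain ⟨hX, hqc, hcp, hY⟩ := hc
  have hX' := chain_rev hX
  have hY' := chain_rev hY
  have mono : ∀ {Cl' : Finset (Sym2 (Fin n))} {l : List (Fin n)}, Cl ⊆ Cl' →
      l.IsChain (fun x y => s(x, y) ∈ Cl) → l.IsChain (fun x y => s(x, y) ∈ Cl') :=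
    fun hs h => h.imp (fun _ _ hh => hs hh)
  have hcw : s(c, w) ∈ Cl := by rw [Sym2.eq_swap]; exact hwc
  have hcq : s(c, q) ∈ Cl := by rw [Sym2.eq_swap]; exact hqc
  have hpc : s(p, c) ∈ Cl := by rw [Sym2.eq_swap]; exact hcp
  have wu : w ≠ u := by rintro rfl; simp [List.nodup_append] at hnd
  have wq : w ≠ q := by rintro rfl; simp [List.nodup_append] at hnd
  have wc : w ≠ c := by rintro rfl; simp [List.nodup_append] at hnd
  have wp : w ≠ p := by rintro rfl; simp [List.nodup_append] at hnd
  have wv : w ≠ v := by rintro rfl; simp [List.nodup_append] at hnd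
  have uq : u ≠ q := by rintro rfl; simp [List.nodup_append] at hnd
  have uc : u ≠ c := by rintro rfl; simp [List.nodup_append] at hnd
  have up : u ≠ p := by rintro rfl; simp [List.nodup_append] at hnd
  have uv : u ≠ v := by rintro rfl; simp [List.nodup_append] at hnd
  have qc : q ≠ c := by rintro rfl; simp [List.nodup_append] at hnd
  have qp : q ≠ p := by rintro rfl; simp [List.nodup_append] at hnd
  have qv : q ≠ v := by rintro rfl; simp [List.nodup_append] at hnd
  have cp : c ≠ p := by rintro rfl; simp [List.nodup_append] at hnd
  have cv : c ≠ v := by rintro rfl; simp [List.nodup_append] at hnd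
  have pv : p ≠ v := by rintro rfl; simp [List.nodup_append] at hnd
  apply GW_step s(v, u) s(v, w) (by simp [Sym2.eq_iff, wu, wu.symm, wq, wq.symm, wc, wc.symm, wp, wp.symm, wv, wv.symm, uq, uq.symm, uc, uc.symm, up, up.symm, uv, uv.symm, qc, qc.symm, qp, qp.symm, qv, qv.symm, cp, cp.symm, cv, cv.symm, pv, pv.symm]) (by simp [wu, wu.symm, wq, wq.symm, wc, wc.symm, wp, wp.symm, wv, wv.symm, uq, uq.symm, uc, uc.symm, up, up.symm, uv, uv.symm, qc, qc.symm, qp, qp.symm, qv, qv.symm, cp, cp.symm, cv, cv.symm, pv, pv.symm]) (by simp [wu, wu.symm, wq, wq.symm, wc, wc.symm, wp, wp.symm, wv, wv.symm, uq, uq.symm, uc, uc.symm, up, up.symm, uv, uv.symm, qc, qc.symm, qp, qp.symm, qv, qv.symm, cp, cp.symm, cv, cv.symm, pv, pv.symm]) f1 f2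
  · apply GW_step s(w, p) s(w, q) (by simp [Sym2.eq_iff, wu, wu.symm, wq, wq.symm, wc, wc.symm, wp, wp.symm, wv, wv.symm, uq, uq.symm, uc, uc.symm, up, up.symm, uv, uv.symm, qc, qc.symm, qp, qp.symm, qv, qv.symm, cp, cp.symm, cv, cv.symm, pv, pv.symm]) (by simp [wu, wu.symm, wq, wq.symm, wc, wc.symm, wp, wp.symm, wv, wv.symm, uq, uq.symm, uc, uc.symm, up, up.symm, uv, uv.symm, qc, qc.symm, qp, qp.symm, qv, qv.symm, cp, cp.symm, cv, cv.symm, pv, pv.symm]) (by simp [wu, wu.symm, wq, wq.symm, wc, wc.symm, wp, wp.symm, wv, wv.symm, uq, uq.symm, uc, uc.symm, up, up.symm, uv, uv.symm, qc, qc.symm, qp, qp.symm, qv, qv.symm, cp, cp.symm, cv, cv.symm, pv, pv.symm])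
      (by simp [f1, f2, f3, f4, f5, f6, Sym2.eq_iff, wu, wu.symm, wq, wq.symm, wc, wc.symm, wp, wp.symm, wv, wv.symm, uq, uq.symm, uc, uc.symm, up, up.symm, uv, uv.symm, qc, qc.symm, qp, qp.symm, qv, qv.symm, cp, cp.symm, cv, cv.symm, pv, pv.symm])
      (by simp [f1, f2, f3, f4, f5, f6, Sym2.eq_iff, wu, wu.symm, wq, wq.symm, wc, wc.symm, wp, wp.symm, wv, wv.symm, uq, uq.symm, uc, uc.symm, up, up.symm, uv, uv.symm, qc, qc.symm, qp, qp.symm, qv, qv.symm, cp, cp.symm, cv, cv.symm, pv, pv.symm])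
    · apply GW_zero hn3 w (c :: q :: (A.reverse ++ u :: v :: (D.reverse ++ [p])))
      · refine List.Perm.nodup ?_ hnd
        rw [← Multiset.coe_eq_coe]
        simp [← Multiset.cons_coe, ← Multiset.coe_add, ← Multiset.singleton_add]
        abel
      · simp at hl ⊢; omega
      · simp only [List.cons_append, List.append_assoc, List.nil_append, List.isChain_cons_cons,
          List.isChain_cons_append_cons_cons, List.isChain_singleton, and_true]
        refine ⟨?_, ?_, mono ?_ hX', ?_, mono ?_ hY', ?_⟩
        all_goals first
          | (intro y hy; simp [hy])
          | simp [hcw, hwc, hcq, hqc, hpc, hcp, Sym2.eq_swap]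
          | simp [hcw, hwc, hcq, hqc, hpc, hcp, Sym2.eq_iff]
    · apply GW_zero hn3 w (c :: p :: (D ++ v :: u :: (A ++ [q])))
      · refine List.Perm.nodup ?_ hnd
        rw [← Multiset.coe_eq_coe]
        simp [← Multiset.cons_coe, ← Multiset.coe_add, ← Multiset.singleton_add]
        abel
      · simp at hl ⊢; omega
      · simp only [List.cons_append, List.append_assoc, List.nil_append, List.isChain_cons_cons,
          List.isChain_cons_append_cons_cons, List.isChain_singleton, and_true]
        refine ⟨?_, ?_, mono ?_ hY, ?_, mono ?_ hX, ?_⟩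
        all_goals first
          | (intro y hy; simp [hy])
          | simp [hcw, hwc, hcq, hqc, hpc, hcp, Sym2.eq_swap]
          | simp [hcw, hwc, hcq, hqc, hpc, hcp, Sym2.eq_iff]
  · apply GW_step s(u, p) s(u, w) (by simp [Sym2.eq_iff, wu, wu.symm, wq, wq.symm, wc, wc.symm, wp, wp.symm, wv, wv.symm, uq, uq.symm, uc, uc.symm, up, up.symm, uv, uv.symm, qc, qc.symm, qp, qp.symm, qv, qv.symm, cp, cp.symm, cv, cv.symm, pv, pv.symm]) (by simp [wu, wu.symm, wq, wq.symm, wc, wc.symm, wp, wp.symm, wv, wv.symm, uq, uq.symm, uc, uc.symm, up, up.symm, uv, uv.symm, qc, qc.symm, qp, qp.symm, qv, qv.symm, cp, cp.symm, cv, cv.symm, pv, pv.symm]) (by simp [wu, wu.symm, wq, wq.symm, wc, wc.symm, wp, wp.symm, wv, wv.symm, uq, uq.symm, uc, uc.symm, up, up.symm, uv, uv.symm, qc, qc.symm, qp, qp.symm, qv, qv.symm, cp, cp.symm, cv, cv.symm, pv, pv.symm])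
      (by simp [f1, f2, f3, f4, f5, f6, Sym2.eq_iff, wu, wu.symm, wq, wq.symm, wc, wc.symm, wp, wp.symm, wv, wv.symm, uq, uq.symm, uc, uc.symm, up, up.symm, uv, uv.symm, qc, qc.symm, qp, qp.symm, qv, qv.symm, cp, cp.symm, cv, cv.symm, pv, pv.symm])
      (by simp [f1, f2, f3, f4, f5, f6, Sym2.eq_iff, wu, wu.symm, wq, wq.symm, wc, wc.symm, wp, wp.symm, wv, wv.symm, uq, uq.symm, uc, uc.symm, up, up.symm, uv, uv.symm, qc, qc.symm, qp, qp.symm, qv, qv.symm, cp, cp.symm, cv, cv.symm, pv, pv.symm])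
    · apply GW_zero hn3 w (v :: (D.reverse ++ p :: u :: (A ++ q :: c :: [])))
      · refine List.Perm.nodup ?_ hnd
        rw [← Multiset.coe_eq_coe]
        simp [← Multiset.cons_coe, ← Multiset.coe_add, ← Multiset.singleton_add]
        abel
      · simp at hl ⊢; omega
      · simp only [List.cons_append, List.append_assoc, List.nil_append, List.isChain_cons_cons,
          List.isChain_cons_append_cons_cons, List.isChain_singleton, and_true]
        refine ⟨?_, mono ?_ hY', ?_, mono ?_ hX, ?_, ?_⟩
        all_goals first
          | (intro y hy; simp [hy])
          | simp [hcw, hwc, hcq, hqc, hpc, hcp, Sym2.eq_swap]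
          | simp [hcw, hwc, hcq, hqc, hpc, hcp, Sym2.eq_iff]
    · apply GW_zero hn3 w (u :: (A ++ q :: c :: p :: (D ++ [v]))) hnd hl
      simp only [List.cons_append, List.append_assoc, List.nil_append, List.isChain_cons_cons,
          List.isChain_cons_append_cons_cons, List.isChain_singleton, and_true]
      refine ⟨?_, mono ?_ hX, ?_, ?_, mono ?_ hY, ?_⟩
      all_goals first
          | (intro y hy; simp [hy])
          | simp [hcw, hwc, hcq, hqc, hpc, hcp, Sym2.eq_swap]
          | simp [hcw, hwc, hcq, hqc, hpc, hcp, Sym2.eq_iff]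

set_option maxHeartbeats 1000000 in
theorem pick_windows {α : Type*} (good : α → Prop) (base : List α) (hnd : base.Nodup)
    (hl : base.length = 12) (bu bw : α)
    (hg : ∀ b ∈ base, b ≠ bu → b ≠ bw → good b) :
    ∃ A q c p D A' q' c' p' D', base = A ++ q :: c :: p :: D ∧ base = A' ++ q' :: c' :: p' :: D' ∧
      c ≠ c' ∧ c' ≠ p ∧ c' ≠ q ∧ c ≠ p' ∧ c ≠ q' ∧ good q ∧ good c ∧ good p ∧
      good q' ∧ good c' ∧ good p' := by
  match base, hl with
  | [b0, b1, b2, b3, b4, b5, b6, b7, b8, b9, b10, b11], _ =>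
  have key : ∀ x y z : α, x ∈ [b0, b1, b2, b3, b4, b5, b6, b7, b8, b9, b10, b11] →
      y ∈ [b0, b1, b2, b3, b4, b5, b6, b7, b8, b9, b10, b11] →
      z ∈ [b0, b1, b2, b3, b4, b5, b6, b7, b8, b9, b10, b11] →
      (good x ∧ good y ∧ good z) ∨ bu ∈ [x, y, z] ∨ bw ∈ [x, y, z] := by
    intro x y z hx hy hz
    by_cases h1 : bu ∈ [x, y, z]
    · exact Or.inr (Or.inl h1)
    by_cases h2 : bw ∈ [x, y, z]
    · exact Or.inr (Or.inr h2)
    simp only [List.mem_cons, List.not_mem_nil, or_false, not_or] at h1 h2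
    exact Or.inl ⟨hg x hx (Ne.symm h1.1) (Ne.symm h2.1),
      hg y hy (Ne.symm h1.2.1) (Ne.symm h2.2.1), hg z hz (Ne.symm h1.2.2) (Ne.symm h2.2.2)⟩
  have k0 := key b0 b1 b2 (by simp) (by simp) (by simp)
  have k1 := key b3 b4 b5 (by simp) (by simp) (by simp)
  have k2 := key b6 b7 b8 (by simp) (by simp) (by simp)
  have k3 := key b9 b10 b11 (by simp) (by simp) (by simp)
  have dis : ∀ x, ¬ (x ∈ [b0, b1, b2] ∧ x ∈ [b3, b4, b5]) ∧ ¬ (x ∈ [b0, b1, b2] ∧ x ∈ [b6, b7, b8])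
      ∧ ¬ (x ∈ [b0, b1, b2] ∧ x ∈ [b9, b10, b11]) ∧ ¬ (x ∈ [b3, b4, b5] ∧ x ∈ [b6, b7, b8])
      ∧ ¬ (x ∈ [b3, b4, b5] ∧ x ∈ [b9, b10, b11]) ∧ ¬ (x ∈ [b6, b7, b8] ∧ x ∈ [b9, b10, b11]) := by
    intro x
    simp only [List.mem_cons, List.not_mem_nil, or_false]
    refine ⟨?_, ?_, ?_, ?_, ?_, ?_⟩ <;>
      (rintro ⟨rfl | rfl | rfl, h | h | h⟩ <;> simp [h] at hnd)
  have pu := dis bu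
  have pw := dis bw
  generalize (bu ∈ [b0, b1, b2]) = u0 at *
  generalize (bu ∈ [b3, b4, b5]) = u1 at *
  generalize (bu ∈ [b6, b7, b8]) = u2 at *
  generalize (bu ∈ [b9, b10, b11]) = u3 at *
  generalize (bw ∈ [b0, b1, b2]) = w0 at *
  generalize (bw ∈ [b3, b4, b5]) = w1 at *
  generalize (bw ∈ [b6, b7, b8]) = w2 at *
  generalize (bw ∈ [b9, b10, b11]) = w3 at *
  clear key dis hg
  have main : ((good b0 ∧ good b1 ∧ good b2) ∧ (good b3 ∧ good b4 ∧ good b5)) ∨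
      ((good b0 ∧ good b1 ∧ good b2) ∧ (good b6 ∧ good b7 ∧ good b8)) ∨
      ((good b0 ∧ good b1 ∧ good b2) ∧ (good b9 ∧ good b10 ∧ good b11)) ∨
      ((good b3 ∧ good b4 ∧ good b5) ∧ (good b6 ∧ good b7 ∧ good b8)) ∨
      ((good b3 ∧ good b4 ∧ good b5) ∧ (good b9 ∧ good b10 ∧ good b11)) ∨
      ((good b6 ∧ good b7 ∧ good b8) ∧ (good b9 ∧ good b10 ∧ good b11)) := by
    clear hnd
    generalize (good b0 ∧ good b1 ∧ good b2) = g0 at *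
    generalize (good b3 ∧ good b4 ∧ good b5) = g1 at *
    generalize (good b6 ∧ good b7 ∧ good b8) = g2 at *
    generalize (good b9 ∧ good b10 ∧ good b11) = g3 at *
    grind
  rcases main with ⟨⟨h1, h2, h3⟩, h4, h5, h6⟩ | ⟨⟨h1, h2, h3⟩, h4, h5, h6⟩ | ⟨⟨h1, h2, h3⟩, h4, h5, h6⟩ |
    ⟨⟨h1, h2, h3⟩, h4, h5, h6⟩ | ⟨⟨h1, h2, h3⟩, h4, h5, h6⟩ | ⟨⟨h1, h2, h3⟩, h4, h5, h6⟩
  · exact ⟨[], b0, b1, b2, _, [b0, b1, b2], b3, b4, b5, _, rfl, rfl, (by rintro rfl; simp at hnd), (by rintro rfl; simp at hnd), (by rintro rfl; simp at hnd),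
      (by rintro rfl; simp at hnd), (by rintro rfl; simp at hnd), h1, h2, h3, h4, h5, h6⟩
  · exact ⟨[], b0, b1, b2, _, [b0, b1, b2, b3, b4, b5], b6, b7, b8, _, rfl, rfl, (by rintro rfl; simp at hnd),
      (by rintro rfl; simp at hnd), (by rintro rfl; simp at hnd), (by rintro rfl; simp at hnd), (by rintro rfl; simp at hnd), h1, h2, h3, h4, h5, h6⟩
  · exact ⟨[], b0, b1, b2, _, [b0, b1, b2, b3, b4, b5, b6, b7, b8], b9, b10, b11, _, rfl, rfl,
      (by rintro rfl; simp at hnd), (by rintro rfl; simp at hnd), (by rintro rfl; simp at hnd), (by rintro rfl; simp at hnd), (by rintro rfl; simp at hnd), h1, h2, h3, h4, h5, h6⟩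
  · exact ⟨[b0, b1, b2], b3, b4, b5, _, [b0, b1, b2, b3, b4, b5], b6, b7, b8, _, rfl, rfl, (by rintro rfl; simp at hnd),
      (by rintro rfl; simp at hnd), (by rintro rfl; simp at hnd), (by rintro rfl; simp at hnd), (by rintro rfl; simp at hnd), h1, h2, h3, h4, h5, h6⟩
  · exact ⟨[b0, b1, b2], b3, b4, b5, _, [b0, b1, b2, b3, b4, b5, b6, b7, b8], b9, b10, b11, _,
      rfl, rfl, (by rintro rfl; simp at hnd), (by rintro rfl; simp at hnd), (by rintro rfl; simp at hnd), (by rintro rfl; simp at hnd), (by rintro rfl; simp at hnd), h1, h2, h3, h4, h5, h6⟩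
  · exact ⟨[b0, b1, b2, b3, b4, b5], b6, b7, b8, _, [b0, b1, b2, b3, b4, b5, b6, b7, b8], b9, b10,
      b11, _, rfl, rfl, (by rintro rfl; simp at hnd), (by rintro rfl; simp at hnd), (by rintro rfl; simp at hnd), (by rintro rfl; simp at hnd), (by rintro rfl; simp at hnd), h1, h2, h3, h4, h5, h6⟩

theorem final3 {n : ℕ} (hn3 : 3 ≤ n) {Cl U : Finset (Sym2 (Fin n))} (u v w : Fin n)
    (pre base : List (Fin n))
    (hnd : (w :: u :: (pre ++ (base ++ [v]))).Nodup)
    (hl : (w :: u :: (pre ++ (base ++ [v]))).length = n)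
    (hc : (u :: (pre ++ (base ++ [v]))).IsChain (fun x y => s(x, y) ∈ Cl))
    (hb : base.length = 12)
    (f1 : s(v, u) ∉ U) (f2 : s(v, w) ∉ U) (f6 : s(u, w) ∉ U)
    (ou : ∀ b ∈ base, ∀ b' ∈ base, s(b, u) ∈ U → s(b', u) ∈ U → b = b')
    (ow : ∀ b ∈ base, ∀ b' ∈ base, s(b, w) ∈ U → s(b', w) ∈ U → b = b') : GW n 3 Cl U := by
  have ex : ∀ x, (∀ b ∈ base, ∀ b' ∈ base, s(b, x) ∈ U → s(b', x) ∈ U → b = b') →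
      ∃ bx, ∀ b ∈ base, s(b, x) ∈ U → b = bx := by
    intro x hx
    by_cases h : ∃ b ∈ base, s(b, x) ∈ U
    · obtain ⟨b, h1, h2⟩ := h
      exact ⟨b, fun b' h3 h4 => hx _ h3 _ h1 h4 h2⟩
    · exact ⟨x, fun b h1 h2 => absurd ⟨b, h1, h2⟩ h⟩
  obtain ⟨bu, hbu⟩ := ex u ou
  obtain ⟨bw, hbw⟩ := ex w ow
  have hbn : base.Nodup := by
    simp only [List.nodup_cons, List.nodup_append] at hnd; tauto
  obtain ⟨A, q, c, p, D, A', q', c', p', D', e1, e2, h1, h2, h3, h4, h5, g1, g2, g3, g4, g5, g6⟩ :=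
    pick_windows (fun b => s(b, u) ∉ U ∧ s(b, w) ∉ U) base hbn hb bu bw
    (fun b hbm n1 n2 => ⟨fun h => n1 (hbu b hbm h), fun h => n2 (hbw b hbm h)⟩)
  have sub : ∀ (A D : List (Fin n)) (q c p c' : Fin n), base = A ++ q :: c :: p :: D →
      c ≠ c' → c' ≠ p → c' ≠ q → c' ∈ base →
      (s(q, u) ∉ U ∧ s(q, w) ∉ U) → (s(c, u) ∉ U ∧ s(c, w) ∉ U) → (s(p, u) ∉ U ∧ s(p, w) ∉ U) →
      GW n 2 (insert s(w, c) Cl) (insert s(w, c) (insert s(w, c') U)) := by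
    intro A D q c p c' e h1 h2 h3 hm g1 g2 g3
    subst e
    have hnd2 := hnd
    simp only [List.append_assoc, List.cons_append] at hnd hl hc
    rw [← List.append_assoc] at hnd hl hc
    have uc' : u ≠ c' := by
      rintro rfl
      have h0 := (List.nodup_cons.1 (List.nodup_cons.1 hnd2).2).1
      exact h0 (List.mem_append.2 (Or.inr (List.mem_append.2 (Or.inl hm))))
    have wu : w ≠ u := by rintro rfl; simp at hnd
    have wp : w ≠ p := by rintro rfl; simp at hnd
    have wv : w ≠ v := by rintro rfl; simp at hnd
    have wq : w ≠ q := by rintro rfl; simp at hnd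
    have uc : u ≠ c := by rintro rfl; simp at hnd
    have qc : q ≠ c := by rintro rfl; simp [List.nodup_append] at hnd
    have pc : p ≠ c := by rintro rfl; simp [List.nodup_append] at hnd
    have cv : c ≠ v := by rintro rfl; simp [List.nodup_append] at hnd
    have c'v : c' ≠ v := by
      rintro rfl
      have h0 := ((List.nodup_append.1 (List.nodup_append.1 (List.nodup_cons.1
        (List.nodup_cons.1 hnd2).2).2).2.1).2.2 _ hm _ (List.mem_singleton_self _))
      exact h0 rfl
    have q1 : s(w, p) ∉ U := by rw [Sym2.eq_swap]; exact g3.2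
    have q2 : s(w, q) ∉ U := by rw [Sym2.eq_swap]; exact g1.2
    have q3 : s(u, p) ∉ U := by rw [Sym2.eq_swap]; exact g3.1
    refine final2 hn3 u v w p c q (pre ++ A) D hnd hl (hc.imp (fun _ _ hh => by simp [hh]))
      (by simp) ?_ ?_ ?_ ?_ ?_ ?_
    all_goals simp [f1, f2, f6, q1, q2, q3, Sym2.eq_iff, wu, wu.symm, wp, wp.symm, wv, wv.symm, wq,
      wq.symm, uc, uc', qc, pc, cv.symm, c'v.symm, uc'.symm, h2.symm, h3.symm]
  have mc : c ∈ base := by simp [e1]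
  have mc' : c' ∈ base := by simp [e2]
  have hwb : ∀ b ∈ base, w ≠ b := by
    rintro b hb rfl
    simp only [List.nodup_cons, List.mem_cons, List.mem_append] at hnd
    tauto
  have wc := hwb c mc
  have wc' := hwb c' mc'
  apply GW_step s(w, c) s(w, c') (by simp [Sym2.eq_iff, h1, wc, wc'])
    (by simpa using wc) (by simpa using wc')
    (by rw [Sym2.eq_swap]; exact g2.2) (by rw [Sym2.eq_swap]; exact g5.2)
  · exact sub A D q c p c' e1 h1 h2 h3 mc' g1 g2 g3
  · exact sub A' D' q' c' p' c e2 h1.symm h4 h5 mc g4 g5 g6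

structure PInv {n : ℕ} (h v : Fin n) (pre base : List (Fin n)) (Cl U : Finset (Sym2 (Fin n))) :
    Prop where
  nd : (h :: (pre ++ (base ++ [v]))).Nodup
  ch : (h :: (pre ++ (base ++ [v]))).IsChain (fun x y => s(x, y) ∈ Cl)
  out : ∀ x y, x ∉ h :: (pre ++ (base ++ [v])) → y ∉ h :: (pre ++ (base ++ [v])) → s(x, y) ∉ U
  hd : ∀ x, x ∉ h :: (pre ++ (base ++ [v])) → s(h, x) ∉ U
  vv : ∀ x, x ∉ h :: (pre ++ (base ++ [v])) → s(v, x) ∉ U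
  one : ∀ x, x ∉ h :: (pre ++ (base ++ [v])) → ∀ b ∈ base, ∀ b' ∈ base,
    s(b, x) ∈ U → s(b', x) ∈ U → b = b'

theorem PInv.step {n : ℕ} {h v : Fin n} {pre base : List (Fin n)} {Cl U : Finset (Sym2 (Fin n))}
    (I : PInv h v pre base Cl U) (x y : Fin n) (hx : x ∉ h :: (pre ++ (base ++ [v]))) (hxy : x ≠ y)
    (hy : y ∉ h :: (pre ++ (base ++ [v]))) :
    PInv x v (h :: pre) base (insert s(h, x) Cl) (insert s(h, x) (insert s(h, y) U)) := by
  have hnd := I.nd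
  have hvh : v ≠ h := by rintro rfl; simp at hnd
  have hbh : ∀ b ∈ base, b ≠ h := by rintro b hb rfl; simp [hb] at hnd
  have nh : ∀ z, z ∉ h :: (pre ++ (base ++ [v])) → z ≠ h := by
    rintro z hz rfl; simp at hz
  have hzb : ∀ z b, z ∉ h :: (pre ++ (base ++ [v])) → b ∈ base → b ≠ z := by
    rintro z b hz hb rfl; simp [hb] at hz
  have hzv : ∀ z, z ∉ h :: (pre ++ (base ++ [v])) → v ≠ z := by
    rintro z hz rfl; simp at hz
  have red : ∀ a b, a ≠ h → b ≠ h →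
      s(a, b) ∈ insert s(h, x) (insert s(h, y) U) → s(a, b) ∈ U := by
    intro a b ha hb hm
    simpa [Sym2.eq_iff, ha, hb] using hm
  constructor
  · exact List.nodup_cons.2 ⟨hx, hnd⟩
  · rw [List.cons_append, List.isChain_cons_cons]
    exact ⟨by simp [Sym2.eq_swap], I.ch.imp (fun _ _ hh => by simp [hh])⟩
  · intro a b ha hb hm
    simp only [List.cons_append, List.mem_cons (a := a) (b := x), not_or] at ha
    simp only [List.cons_append, List.mem_cons (a := b) (b := x), not_or] at hb
    exact I.out a b ha.2 hb.2 (red _ _ (nh _ ha.2) (nh _ hb.2) hm)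
  · intro b hb hm
    simp only [List.cons_append, List.mem_cons (a := b) (b := x), not_or] at hb
    exact I.out x b hx hb.2 (red _ _ (nh _ hx) (nh _ hb.2) hm)
  · intro b hb hm
    simp only [List.cons_append, List.mem_cons (a := b) (b := x), not_or] at hb
    exact I.vv b hb.2 (red _ _ hvh (nh _ hb.2) hm)
  · intro a ha b hb b' hb' h1 h2
    simp only [List.cons_append, List.mem_cons (a := a) (b := x), not_or] at ha
    exact I.one a ha.2 b hb b' hb' (red _ _ (hbh b hb) (nh _ ha.2) h1)
      (red _ _ (hbh b' hb') (nh _ ha.2) h2)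

theorem exists_two {n : ℕ} (l : List (Fin n)) (h : l.length + 2 ≤ n) :
    ∃ x y, x ≠ y ∧ x ∉ l ∧ y ∉ l := by
  have h1 : 1 < (l.toFinset)ᶜ.card := by
    rw [Finset.card_compl, Fintype.card_fin]
    have := l.toFinset_card_le
    omega
  obtain ⟨x, hx, y, hy, hxy⟩ := Finset.one_lt_card.1 h1
  exact ⟨x, y, hxy, by simpa using hx, by simpa using hy⟩

theorem phase2 {n : ℕ} (hn3 : 3 ≤ n) : ∀ (j : ℕ) (h v : Fin n) (pre base : List (Fin n))
    (Cl U : Finset (Sym2 (Fin n))), PInv h v pre base Cl U → base.length = 12 →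
    (h :: (pre ++ (base ++ [v]))).length + j + 2 = n → GW n (j + 4) Cl U := by
  intro j
  induction j with
  | zero =>
    intro h v pre base Cl U I hb hl
    obtain ⟨x, y, hxy, hx, hy⟩ := exists_two (h :: (pre ++ (base ++ [v]))) (by omega)
    have sub : ∀ x y, x ≠ y → x ∉ h :: (pre ++ (base ++ [v])) → y ∉ h :: (pre ++ (base ++ [v])) →
        GW n 3 (insert s(h, x) Cl) (insert s(h, x) (insert s(h, y) U)) := by
      intro x y hxy hx hy
      have J := I.step x y hx hxy hy
      have hy' : y ∉ x :: (h :: pre ++ (base ++ [v])) := by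
        rw [List.mem_cons, not_or]; exact ⟨hxy.symm, hy⟩
      have hnd := I.nd
      have hvh : v ≠ h := by rintro rfl; simp at hnd
      have hbh : ∀ b ∈ base, b ≠ h := by rintro b hb rfl; simp [hb] at hnd
      have xh : x ≠ h := by rintro rfl; simp at hx
      have red : ∀ a, a ≠ h →
          s(a, x) ∈ insert s(h, x) (insert s(h, y) U) → s(a, x) ∈ U := by
        intro a ha hm
        simpa [Sym2.eq_iff, ha, xh] using hm
      refine final3 hn3 x v y (h :: pre) base (List.nodup_cons.2 ⟨hy', J.nd⟩) ?_ J.ch hb ?_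
        (J.vv y hy') (J.hd y hy') ?_ (J.one y hy')
      · simp at hl ⊢; omega
      · intro hm; exact I.vv x hx (red v hvh hm)
      · intro b hb b' hb' h1 h2
        exact I.one x hx b hb b' hb' (red _ (hbh b hb) h1) (red _ (hbh _ hb') h2)
    have hxh : h ≠ x := by rintro rfl; simp at hx
    have hyh : h ≠ y := by rintro rfl; simp at hy
    exact GW_step s(h, x) s(h, y) (by simp [Sym2.eq_iff, hxy, hyh]) (by simpa using hxh)
      (by simpa using hyh) (I.hd x hx) (I.hd y hy) (sub x y hxy hx hy) (sub y x hxy.symm hy hx)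
  | succ j ih =>
    intro h v pre base Cl U I hb hl
    obtain ⟨x, y, hxy, hx, hy⟩ := exists_two (h :: (pre ++ (base ++ [v]))) (by omega)
    have hxh : h ≠ x := by rintro rfl; simp at hx
    have hyh : h ≠ y := by rintro rfl; simp at hy
    refine GW_step s(h, x) s(h, y) (by simp [Sym2.eq_iff, hxy, hyh]) (by simpa using hxh)
      (by simpa using hyh) (I.hd x hx) (I.hd y hy)
      (ih _ _ _ _ _ _ (I.step x y hx hxy hy) hb ?_)
      (ih _ _ _ _ _ _ (I.step y x hy hxy.symm hx) hb ?_)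
    all_goals simp at hl ⊢; omega

/-- Extension in the first phase, with fresh vertices `x`, `y`. -/
theorem PInv.step1 {n : ℕ} {h v : Fin n} {base : List (Fin n)} {Cl U : Finset (Sym2 (Fin n))}
    (I : PInv h v [] base Cl U) (x y : Fin n) (hx : x ∉ h :: (base ++ [v])) (hxy : x ≠ y)
    (hy : y ∉ h :: (base ++ [v])) (hyf : ∀ z, s(z, y) ∉ U) :
    PInv x v [] (h :: base) (insert s(h, x) Cl) (insert s(h, x) (insert s(h, y) U)) := by
  have J := I.step x y (by simpa using hx) hxy (by simpa using hy)
  have hnd := I.nd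
  have hbh : ∀ b ∈ base, b ≠ h := by rintro b hb rfl; simp [hb] at hnd
  refine ⟨by simpa using J.nd, by simpa using J.ch, by simpa using J.out, by simpa using J.hd,
    by simpa using J.vv, ?_⟩
  intro z hz b hb b' hb' h1 h2
  have hz2 : z ∉ x :: ([h] ++ (base ++ [v])) := by simpa using hz
  have zx : z ≠ x := by rintro rfl; simp at hz
  have zh : z ≠ h := by rintro rfl; simp at hz
  have hz3 : z ∉ h :: ([] ++ (base ++ [v])) := by
    intro hm; exact hz2 (by simp at hm ⊢; tauto)
  have key : ∀ c ∈ base, s(c, z) ∈ insert s(h, x) (insert s(h, y) U) →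
      s(h, z) ∉ insert s(h, x) (insert s(h, y) U) := by
    intro c hc hm hm2
    have zy : z = y := by
      have := I.hd z hz3
      simpa [Sym2.eq_iff, zx, zh, this] using hm2
    subst zy
    have := hyf c
    simp [Sym2.eq_iff, this, hbh c hc, zh] at hm
  rcases List.mem_cons.1 hb with e | hb2
  · rcases List.mem_cons.1 hb' with e2 | hb3
    · rw [e, e2]
    · exact absurd (e ▸ h1) (key b' hb3 h2)
  · rcases List.mem_cons.1 hb' with e2 | hb3
    · exact absurd (e2 ▸ h2) (key b hb2 h1)
    · exact J.one z hz2 b hb2 b' hb3 h1 h2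

theorem phase1 {n : ℕ} (hn : 40 ≤ n) : ∀ (k : ℕ) (h v : Fin n) (base : List (Fin n))
    (Cl U : Finset (Sym2 (Fin n))) (m : ℕ), PInv h v [] base Cl U → base.length + k = 12 →
    m + 2 * k ≤ n → (∀ x ∈ h :: (base ++ [v]), x.val < m) →
    (∀ x y : Fin n, m ≤ y.val → s(x, y) ∉ U) →
    GW n (n - base.length) Cl U := by
  intro k
  induction k with
  | zero =>
    intro h v base Cl U m I hb _ _ _
    have := phase2 (by omega) (n - base.length - 4) h v [] base Cl U I (by omega)
      (by simp; omega)
    rwa [show n - base.length - 4 + 4 = n - base.length by omega] at this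
  | succ k ih =>
    intro h v base Cl U m I hb hm hlt hfr
    obtain ⟨x, hxv⟩ : ∃ x : Fin n, x.val = m := ⟨⟨m, by omega⟩, rfl⟩
    obtain ⟨y, hyv⟩ : ∃ x : Fin n, x.val = m + 1 := ⟨⟨m + 1, by omega⟩, rfl⟩
    have hx : x ∉ h :: (base ++ [v]) := fun hh => by have := hlt x hh; omega
    have hy : y ∉ h :: (base ++ [v]) := fun hh => by have := hlt y hh; omega
    have hxy : x ≠ y := by rintro rfl; omega
    have hxh : h ≠ x := by rintro rfl; simp at hx
    have hyh : h ≠ y := by rintro rfl; simp at hy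
    have hh := hlt h (by simp)
    have sub : ∀ x y : Fin n, (x.val < m + 2) → (y.val < m + 2) → m ≤ x.val → m ≤ y.val → x ≠ y →
        x ∉ h :: (base ++ [v]) → y ∉ h :: (base ++ [v]) →
        GW n (n - (base.length + 1)) (insert s(h, x) Cl) (insert s(h, x) (insert s(h, y) U)) := by
      intro x y lx ly lx' ly' hxy hx hy
      have J := I.step1 x y hx hxy hy (fun z => hfr z y ly')
      refine ih x v (h :: base) _ _ (m + 2) J (by simp; omega) (by omega) ?_ ?_
      · intro z hz
        rcases List.mem_cons.1 hz with rfl | hz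
        · exact lx
        · have := hlt z hz; omega
      · intro a b hb hmem
        have h1 : b ≠ x := by rintro rfl; omega
        have h2 : b ≠ y := by rintro rfl; omega
        have h3 : b ≠ h := by rintro rfl; omega
        simp [Sym2.eq_iff, h1, h2, h3, hfr a b (by omega)] at hmem
    rw [show n - base.length = n - (base.length + 1) + 1 by omega]
    exact GW_step s(h, x) s(h, y) (by simp [Sym2.eq_iff, hxy, hyh]) (by simpa using hxh)
      (by simpa using hyh) (hfr _ _ (by omega)) (hfr _ _ (by omega))
      (sub x y (by omega) (by omega) (by omega) (by omega) hxy hx hy)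
      (sub y x (by omega) (by omega) (by omega) (by omega) hxy.symm hy hx)

theorem phase0 {n : ℕ} (hn : 40 ≤ n) : GW n (n + 1) ∅ ∅ := by
  obtain ⟨a, ha⟩ : ∃ x : Fin n, x.val = 0 := ⟨⟨0, by omega⟩, rfl⟩
  obtain ⟨x, hx⟩ : ∃ x : Fin n, x.val = 1 := ⟨⟨1, by omega⟩, rfl⟩
  obtain ⟨y, hy⟩ : ∃ x : Fin n, x.val = 2 := ⟨⟨2, by omega⟩, rfl⟩
  obtain ⟨z, hz⟩ : ∃ x : Fin n, x.val = 3 := ⟨⟨3, by omega⟩, rfl⟩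
  obtain ⟨w, hw⟩ : ∃ x : Fin n, x.val = 4 := ⟨⟨4, by omega⟩, rfl⟩
  have ax : a ≠ x := by rintro rfl; omega
  have ay : a ≠ y := by rintro rfl; omega
  have az : a ≠ z := by rintro rfl; omega
  have aw : a ≠ w := by rintro rfl; omega
  have xy : x ≠ y := by rintro rfl; omega
  have xz : x ≠ z := by rintro rfl; omega
  have xw : x ≠ w := by rintro rfl; omega
  have yz : y ≠ z := by rintro rfl; omega
  have yw : y ≠ w := by rintro rfl; omega
  have zw : z ≠ w := by rintro rfl; omega
  have sub : ∀ x y z w : Fin n, a ≠ x → a ≠ y → a ≠ z → a ≠ w → x ≠ y → x ≠ z → x ≠ w → y ≠ z →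
      y ≠ w → z ≠ w → x.val < 5 → y.val < 5 → z.val < 5 → w.val < 5 →
      GW n (n - 1) (insert s(a, z) (insert s(a, x) ∅))
        (insert s(a, z) (insert s(a, w) (insert s(a, x) (insert s(a, y) ∅)))) := by
    intro x y z w ax ay az aw xy xz xw yz yw zw lx ly lz lw
    refine phase1 hn 11 z x [a] _ _ 5 ⟨?_, ?_, ?_, ?_, ?_, ?_⟩ (by simp) (by omega) ?_ ?_
    · simp [az.symm, xz.symm, ax]
    · simp [Sym2.eq_swap]
    · intro p q hp hq
      simp at hp hq
      simp [Sym2.eq_iff, hp, hq]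
    · intro p hp
      simp at hp
      simp [Sym2.eq_iff, hp, az.symm]
    · intro p hp
      simp at hp
      simp [Sym2.eq_iff, hp, ax.symm]
    · intro p hp b hb b' hb' _ _
      simp at hb hb'
      rw [hb, hb']
    · intro p hp
      simp at hp
      rcases hp with rfl | rfl | rfl <;> omega
    · intro p q hq
      have h1 : q ≠ a := by rintro rfl; omega
      have h2 : q ≠ x := by rintro rfl; omega
      have h3 : q ≠ y := by rintro rfl; omega
      have h4 : q ≠ z := by rintro rfl; omega
      have h5 : q ≠ w := by rintro rfl; omega
      simp [Sym2.eq_iff, h1, h2, h3, h4, h5]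
  have sub2 : ∀ x y : Fin n, a ≠ x → a ≠ y → x ≠ y → x ≠ z → x ≠ w → y ≠ z → y ≠ w →
      x.val < 5 → y.val < 5 →
      GW n (n - 1 + 1) (insert s(a, x) ∅) (insert s(a, x) (insert s(a, y) ∅)) := by
    intro x y ax ay xy xz xw yz yw lx ly
    refine GW_step s(a, z) s(a, w) (by simp [Sym2.eq_iff, zw, aw]) (by simpa using az)
      (by simpa using aw) (by simp [Sym2.eq_iff, xz.symm, yz.symm, ax, ay])
      (by simp [Sym2.eq_iff, xw.symm, yw.symm, ax, ay]) ?_ ?_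
    · exact sub x y z w ax ay az aw xy xz xw yz yw zw lx ly (by omega) (by omega)
    · exact sub x y w z ax ay aw az xy xw xz yw yz zw.symm lx ly (by omega) (by omega)
  rw [show n + 1 = n - 1 + 1 + 1 by omega]
  refine GW_step s(a, x) s(a, y) (by simp [Sym2.eq_iff, xy, ay]) (by simpa using ax)
      (by simpa using ay) (by simp) (by simp) ?_ ?_
  · exact sub2 x y ax ay xy xz xw yz yw (by omega) (by omega)
  · exact sub2 y x ay ax xy.symm yz yw xz xw (by omega) (by omega)

/-- For every large enough `n`, in the unbiased Waiter-Client game on the edge set of `K_n`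
whose winning sets are the Hamilton cycles of `K_n`, the minimum number of rounds within which
Waiter can force a win is exactly `n + 1`. -/
theorem WC_hamiltonicity_unbiased :
    ∃ n₀ : ℕ, ∀ n : ℕ, n₀ ≤ n →
      tauWC (Kedges n) (HamFamily n) 1 = n + 1 := by
  refine ⟨40, fun n hn => ?_⟩
  have hup := phase0 hn ∅ (by simp)
  apply le_antisymm
  · exact Nat.sInf_le hup
  · by_contra hcon
    push Not at hcon
    have hmem := Nat.sInf_mem (s := {t | WaiterWins (Kedges n) 1
      (fun Cl _ => ∃ A ∈ HamFamily n, A ⊆ Cl) t ∅ ∅}) ⟨n + 1, hup⟩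
    refine lower (by omega) _ ∅ ∅ ?_ (by simp; omega) (by simp) hmem
    simp only [Finset.card_empty, Nat.zero_add]
    exact Nat.lt_succ_iff.1 hcon
end

section
/- There exist constants δ > 0 and C > 0 such that for every large enough integer n and every positive integer b ≤ δn, in the b-biased Waiter-Client game on the edge set of K_n whose winning sets are the Hamilton cycles of K_n, Waiter has a strategy to win within n + Cb rounds; that is, τ_WC(H_n, b) ≤ n + Cb. -/
open Finset

section Game
variable {X : Type*} [DecidableEq X]

def Force (E : Finset X) (b : ℕ) (win : Finset X → Finset X → Prop) :
    ℕ → Finset X → Finset X → Prop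
  | 0, Cl, K => win Cl K
  | (t+1), Cl, K => win Cl K ∨
      ∃ O : Finset X, O ⊆ E \ K ∧ O.card = b + 1 ∧
        ∀ x ∈ O, Force E b win t (insert x Cl) (K ∪ O)

theorem Force.now {E : Finset X} {b : ℕ} {win : Finset X → Finset X → Prop} {t : ℕ}
    {Cl K : Finset X} (h : win Cl K) : Force E b win t Cl K := by
  cases t with
  | zero => exact h
  | succ t => exact Or.inl h

theorem Force.comp {E E' : Finset X} {b : ℕ} {win win' : Finset X → Finset X → Prop} {t t' : ℕ}
    (hE : E ⊆ E')
    {Cl K : Finset X} (h : Force E b win t Cl K)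
    (h' : ∀ Cl' K', win Cl' K' → Force E' b win' t' Cl' K') :
    Force E' b win' (t + t') Cl K := by
  induction t generalizing Cl K with
  | zero => simpa using h' _ _ h
  | succ t ih =>
    have mono : ∀ (s : ℕ) (Cl K : Finset X), Force E' b win' s Cl K →
        Force E' b win' (s+1) Cl K := by
      intro s
      induction s with
      | zero => intro Cl K h; exact Or.inl h
      | succ s ihs =>
        rintro Cl K (h | ⟨O, h1, h2, h3⟩)
        · exact Or.inl h
        · exact Or.inr ⟨O, h1, h2, fun x hx => ihs _ _ (h3 x hx)⟩
    have e : t + 1 + t' = (t + t') + 1 := by omega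
    rw [e]
    rcases h with h | ⟨O, h1, h2, h3⟩
    · have := h' _ _ h
      have e2 : ∀ j, Force E' b win' (t' + j) Cl K := by
        intro j
        induction j with
        | zero => exact this
        | succ j ihj => exact mono _ _ _ ihj
      have := e2 (t+1)
      rwa [show t' + (t+1) = (t + t') + 1 by omega] at this
    · exact Or.inr ⟨O, h1.trans (Finset.sdiff_subset_sdiff hE (Finset.Subset.refl _)), h2,
        fun x hx => ih (h3 x hx)⟩

theorem Force.strong {E : Finset X} {b : ℕ} {win : Finset X → Finset X → Prop} {t : ℕ}
    {Cl K : Finset X} (h : Force E b win t Cl K) :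
    Force E b (fun Cl' K' => win Cl' K' ∧ Cl ⊆ Cl' ∧ K' ⊆ K ∪ E ∧
      (K' \ K).card ≤ t * (b+1)) t Cl K := by
  induction t generalizing Cl K with
  | zero => exact ⟨h, Finset.Subset.refl _, Finset.subset_union_left, by simp⟩
  | succ t ih =>
    rcases h with h | ⟨O, h1, h2, h3⟩
    · exact Or.inl ⟨h, Finset.Subset.refl _, Finset.subset_union_left, by simp⟩
    · refine Or.inr ⟨O, h1, h2, fun x hx => ?_⟩
      have := Force.comp (t' := 0) (Finset.Subset.refl E) (ih (h3 x hx))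
        (win' := (fun Cl' K' => win Cl' K' ∧ Cl ⊆ Cl' ∧ K' ⊆ K ∪ E ∧
          (K' \ K).card ≤ (t+1) * (b+1))) ?_
      · simpa using this
      · rintro Cl' K' ⟨g1, g2, g3, g4⟩
        refine ⟨g1, (Finset.subset_insert _ _).trans g2, ?_, ?_⟩
        · intro y hy
          have := g3 hy
          have h1' := @h1 y
          simp only [Finset.mem_union, Finset.mem_sdiff] at *
          tauto
        · have : K' \ K ⊆ (K' \ (K ∪ O)) ∪ O := by
            intro y hy
            simp only [Finset.mem_union, Finset.mem_sdiff] at *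
            tauto
          have := Finset.card_le_card this
          have := Finset.card_union_le (K' \ (K ∪ O)) O
          rw [add_mul]; omega

theorem Force.waiter {E board : Finset X} {b : ℕ} {F : Set (Finset X)} {t : ℕ}
    (hE : E ⊆ board)
    {Cl W : Finset X} (h : Force E b (fun Cl _ => ∃ A ∈ F, A ⊆ Cl) t Cl (Cl ∪ W)) :
    WaiterWins board b (fun Cl _ => ∃ A ∈ F, A ⊆ Cl) t Cl W := by
  induction t generalizing Cl W with
  | zero => exact h
  | succ t ih =>
    rcases h with h | ⟨O, h1, h2, h3⟩
    · exact Or.inl h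
    · have hs : O ⊆ board \ (Cl ∪ W) :=
        h1.trans (Finset.sdiff_subset_sdiff hE (Finset.Subset.refl _))
      refine Or.inr ⟨O, ?_, hs, ?_, fun x hx => ?_⟩
      · rw [← Finset.card_pos]; omega
      · have := Finset.card_le_card hs
        rw [min_eq_left (by omega)]; exact h2
      · apply ih
        have := h3 x hx
        have e : insert x Cl ∪ (W ∪ O.erase x) = Cl ∪ W ∪ O := by
          ext y
          simp only [Finset.mem_union, Finset.mem_insert, Finset.mem_erase]
          by_cases hy : y = x
          · subst hy; tauto
          · tauto
        rw [e]; exact this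

end Game

section Posa
set_option linter.unusedSectionVars false
variable {V : Type*} [DecidableEq V]

inductive Rot (adj : V → V → Prop) (L : List V) : List V → Prop
  | refl : Rot adj L L
  | step (e : V) (pre : List V) (x : V) (post : List V) :
      Rot adj L ((e :: pre) ++ x :: post) → adj e x →
      Rot adj L ((e :: pre).reverse ++ x :: post)

def Nbr (L : List V) (x y : V) : Prop := [x, y] <:+: L ∨ [y, x] <:+: L

theorem Rot.perm {adj : V → V → Prop} {L L' : List V} (h : Rot adj L L') : L'.Perm L := by
  induction h with
  | refl => exact List.Perm.refl _
  | step e pre x post _ _ ih =>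
    exact ((List.reverse_perm _).append_right _).trans ih

theorem Rot.last {adj : V → V → Prop} {L L' : List V} (h : Rot adj L L') :
    L'.getLast? = L.getLast? := by
  induction h with
  | refl => rfl
  | step e pre x post _ _ ih =>
    rw [← ih, List.getLast?_append, List.getLast?_append]; simp [List.getLast?_cons]

theorem Rot.chain {adj : V → V → Prop} (hs : ∀ u v, adj u v → adj v u)
    {L L' : List V} (h : Rot adj L L') (hL : L.IsChain adj) :
    L'.IsChain adj := by
  induction h with
  | refl => exact hL
  | step e pre x post _ hx ih =>
    rw [List.isChain_append] at ih ⊢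
    obtain ⟨h1, h2, h3⟩ := ih
    refine ⟨?_, h2, ?_⟩
    · rw [List.isChain_reverse]
      exact h1.imp (fun a b h => hs _ _ h)
    · intro a ha b' hb'
      simp at ha hb'
      subst ha; subst hb'; exact hx

theorem nbr_symm {L : List V} {x y : V} (h : Nbr L x y) : Nbr L y x := Or.symm h

theorem infix_iff (L : List V) (x y : V) :
    [x, y] <:+: L ↔ ∃ l₁ l₂, L = l₁ ++ x :: y :: l₂ := by
  constructor
  · rintro ⟨s, t, h⟩; exact ⟨s, t, by simp [← h]⟩
  · rintro ⟨s, t, h⟩; exact ⟨s, t, by simp [h]⟩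

theorem infix_append_iff (P Q : List V) (x y : V) :
    [x, y] <:+: P ++ Q ↔ [x, y] <:+: P ∨ [x, y] <:+: Q ∨
      (P.getLast? = some x ∧ Q.head? = some y) := by
  induction P with
  | nil => simp
  | cons a P ih =>
    cases P with
    | nil =>
      cases Q with
      | nil => simp
      | cons q Q =>
        rw [List.singleton_append, List.infix_cons_iff]
        simp only [List.infix_cons_iff, List.cons_prefix_cons]
        simp
        tauto
    | cons c P =>
      rw [List.cons_append, List.infix_cons_iff, ih, List.infix_cons_iff (l₂ := c :: P)]
      simp only [List.cons_append, List.cons_prefix_cons, List.getLast?_cons_cons]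
      simp
      tauto

theorem nbr_append_iff (P Q : List V) (x y : V) :
    Nbr (P ++ Q) x y ↔ Nbr P x y ∨ Nbr Q x y ∨
      (P.getLast? = some x ∧ Q.head? = some y) ∨ (P.getLast? = some y ∧ Q.head? = some x) := by
  unfold Nbr; rw [infix_append_iff, infix_append_iff]; tauto

theorem nbr_reverse (P : List V) (x y : V) : Nbr P.reverse x y ↔ Nbr P x y := by
  unfold Nbr
  rw [← List.reverse_infix, List.reverse_reverse, ← List.reverse_infix (l₁ := [y,x]),
    List.reverse_reverse]
  simp; tauto

theorem posa [Fintype V] [Inhabited V] {adj : V → V → Prop}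
    (hs : ∀ u v, adj u v → adj v u) (A : Finset V)
    {L : List V} (hne : L ≠ []) (hnd : L.Nodup) (hch : L.IsChain adj)
    (hmax : ∀ L' : List V, L'.Perm L → L'.IsChain adj →
      ∀ e, L'.head? = some e → ∀ x ∈ A, adj e x → x ∈ L) :
    ∃ S : Finset V, S.Nonempty ∧
      (∀ s ∈ S, ∃ L' : List V, L'.Perm L ∧ L'.IsChain adj ∧ L'.head? = some s ∧
        L'.getLast? = L.getLast?) ∧
      ∃ W : Finset V, W.card ≤ 3 * S.card ∧ ∀ s ∈ S, ∀ x ∈ A, adj s x → x ∈ W := by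
  classical
  let S : Finset V := Finset.univ.filter (fun s => ∃ L', Rot adj L L' ∧ L'.head? = some s)
  have memS : ∀ s, s ∈ S ↔ ∃ L', Rot adj L L' ∧ L'.head? = some s := by
    intro s; simp [S]
  let f : V → V := fun s => L.getD (L.idxOf s + 1) default
  let g : V → V := fun s => L.getD (L.idxOf s - 1) default
  let W : Finset V := S ∪ S.image f ∪ S.image g
  have hSW : ∀ s ∈ S, s ∈ W := by intro s h; simp [W, h]
  have hinf : ∀ x y, [x, y] <:+: L → f x = y ∧ g y = x := by
    intro x y h
    rw [infix_iff] at h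
    obtain ⟨l₁, l₂, rfl⟩ := h
    have h1 : x ∉ l₁ := by
      intro hx; simp [List.nodup_append] at hnd; have := hnd.2.2 x hx; tauto
    have h2 : y ∉ l₁ := by
      intro hx; simp [List.nodup_append] at hnd; have := hnd.2.2 y hx; tauto
    have h3 : x ≠ y := by
      rintro rfl; simp [List.nodup_append] at hnd
    constructor
    · simp [f, List.idxOf_append, h1]
    · have hb : (x == y) = false := by simp [h3]
      simp [g, List.idxOf_append, h2, List.idxOf_cons, hb]
  have hW : ∀ x s, s ∈ S → Nbr L x s → x ∈ W := by
    rintro x s hs' (h | h)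
    · have := (hinf _ _ h).2
      simp only [W, Finset.mem_union, Finset.mem_image]
      exact Or.inr ⟨s, hs', this⟩
    · have := (hinf _ _ h).1
      simp only [W, Finset.mem_union, Finset.mem_image]
      exact Or.inl (Or.inr ⟨s, hs', this⟩)
  have key : ∀ L', Rot adj L L' → ∀ x, x ∉ W → ∀ y, Nbr L' x y → Nbr L x y := by
    intro L' h
    induction h with
    | refl => intro x _ y h; exact h
    | step e pre z post hr hz ih =>
      intro x hx y hy
      have heS : e ∈ S := (memS e).2 ⟨_, hr, by simp⟩
      obtain ⟨y0, hy0⟩ : ∃ y0, (e :: pre).getLast? = some y0 := by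
        simp [List.getLast?_cons]
      have hyS : y0 ∈ S := by
        refine (memS y0).2 ⟨_, Rot.step e pre z post hr hz, ?_⟩
        rw [List.head?_append, List.head?_reverse, hy0]; rfl
      have hxz : x ≠ z := by
        rintro rfl
        apply hx
        apply hW x y0 hyS
        apply ih x hx
        rw [nbr_append_iff]
        exact Or.inr (Or.inr (Or.inr ⟨hy0, by simp⟩))
      have hxe : x ≠ e := by rintro rfl; exact hx (hSW _ heS)
      apply ih x hx
      rw [nbr_append_iff, nbr_reverse] at hy
      rw [nbr_append_iff]
      rcases hy with hy | hy | hy | hy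
      · exact Or.inl hy
      · exact Or.inr (Or.inl hy)
      · exfalso; apply hxe; have := hy.1; simp at this; exact this.symm
      · exfalso; apply hxz; have := hy.2; simp at this; exact this.symm
  refine ⟨S, ?_, ?_, W, ?_, ?_⟩
  · obtain ⟨a, L, rfl⟩ := List.exists_cons_of_ne_nil hne
    exact ⟨a, (memS a).2 ⟨_, Rot.refl, by simp⟩⟩
  · intro s hs'
    obtain ⟨L', h1, h2⟩ := (memS s).1 hs'
    exact ⟨L', h1.perm, h1.chain hs hch, h2, h1.last⟩
  · have h1 := Finset.card_union_le (S ∪ S.image f) (S.image g)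
    have h2 := Finset.card_union_le S (S.image f)
    have h3 : (S.image f).card ≤ S.card := Finset.card_image_le
    have h4 : (S.image g).card ≤ S.card := Finset.card_image_le
    show (S ∪ S.image f ∪ S.image g).card ≤ _
    omega
  · intro s hs' x hxA hsx
    by_contra hxW
    obtain ⟨L', h1, h2⟩ := (memS s).1 hs'
    have hxL' : x ∈ L' := h1.perm.mem_iff.2 (hmax L' h1.perm (h1.chain hs hch) s h2 x hxA hsx)
    have hxs : x ≠ s := by rintro rfl; exact hxW (hSW _ hs')
    cases L' with
    | nil => simp at h2
    | cons e rest =>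
      simp at h2; subst h2
      have hxr : x ∈ rest := by simpa [hxs] using hxL'
      obtain ⟨pre, post, rfl⟩ := List.append_of_mem hxr
      obtain ⟨y0, hy0⟩ : ∃ y0, (e :: pre).getLast? = some y0 := by
        simp [List.getLast?_cons]
      have hyS : y0 ∈ S := by
        refine (memS y0).2 ⟨_, Rot.step e pre x post h1 hsx, ?_⟩
        rw [List.head?_append, List.head?_reverse, hy0]; rfl
      apply hxW
      apply hW x y0 hyS
      apply key _ h1 x hxW
      rw [← List.cons_append, nbr_append_iff]
      exact Or.inr (Or.inr (Or.inr ⟨hy0, by simp⟩))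

end Posa

section Boost
variable {V : Type*} [DecidableEq V]
set_option linter.unusedSectionVars false

def Expd (A : Finset V) (s0 : ℕ) (Cl : Finset (Sym2 V)) : Prop :=
  ∀ S ⊆ A, S.Nonempty → S.card ≤ s0 → ∀ W : Finset V, W.card ≤ 3 * S.card →
    ∃ v ∈ S, ∃ x ∈ A, x ∉ W ∧ s(v, x) ∈ Cl

def IsP (A : Finset V) (Cl : Finset (Sym2 V)) (L : List V) : Prop :=
  L.Nodup ∧ (∀ x ∈ L, x ∈ A) ∧ L.IsChain (fun u v => s(u, v) ∈ Cl)

theorem Expd.mono {A : Finset V} {s0 : ℕ} {Cl Cl' : Finset (Sym2 V)} (h : Expd A s0 Cl)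
    (hc : Cl ⊆ Cl') : Expd A s0 Cl' := by
  intro S h1 h2 h3 W h4
  obtain ⟨v, hv, x, hx, h5, h6⟩ := h S h1 h2 h3 W h4
  exact ⟨v, hv, x, hx, h5, hc h6⟩

theorem IsP.mono {A : Finset V} {Cl Cl' : Finset (Sym2 V)} {L : List V} (h : IsP A Cl L)
    (hc : Cl ⊆ Cl') : IsP A Cl' L :=
  ⟨h.1, h.2.1, h.2.2.imp (fun _ _ h => hc h)⟩

theorem IsP.reverse {A : Finset V} {Cl : Finset (Sym2 V)} {L : List V} (h : IsP A Cl L) :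
    IsP A Cl L.reverse := by
  refine ⟨List.nodup_reverse.2 h.1, fun x hx => h.2.1 x (by simpa using hx), ?_⟩
  rw [List.isChain_reverse]
  exact h.2.2.imp (fun a b h => by rwa [Sym2.eq_swap])

theorem ends_lemma [Fintype V] {A : Finset V} {s0 : ℕ} {Cl : Finset (Sym2 V)}
    (hE : Expd A s0 Cl) {L : List V} (hL : IsP A Cl L) (hne : L ≠ [])
    (hmax : ∀ L', IsP A Cl L' → L'.length ≤ L.length) :
    ∃ S ⊆ A, s0 ≤ S.card ∧ ∀ s ∈ S, ∃ L' : List V, L'.Perm L ∧ IsP A Cl L' ∧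
      L'.head? = some s ∧ L'.getLast? = L.getLast? := by
  have : Inhabited V := ⟨L.head hne⟩
  obtain ⟨S, h1, h2, W, h3, h4⟩ := posa (adj := fun u v => s(u, v) ∈ Cl)
    (fun u v h => by rwa [Sym2.eq_swap]) A hne hL.1 hL.2.2 (by
      intro L' hp hc e he x hxA hex
      by_contra hx
      have : IsP A Cl (x :: L') := by
        refine ⟨List.nodup_cons.2 ⟨fun h => hx (hp.mem_iff.1 h), hp.nodup_iff.2 hL.1⟩, ?_, ?_⟩
        · intro y hy
          rcases List.mem_cons.1 hy with rfl | hy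
          · exact hxA
          · exact hL.2.1 y (hp.mem_iff.1 hy)
        · cases L' with
          | nil => simp at he
          | cons a L' =>
            simp at he; subst he
            rw [List.isChain_cons_cons]
            exact ⟨by rwa [Sym2.eq_swap], hc⟩
      have := hmax _ this
      have := hp.length_eq
      simp at *
      omega)
  have hSA : S ⊆ A := by
    intro s hs
    obtain ⟨L', p1, p2, p3, p4⟩ := h2 s hs
    exact hL.2.1 s (p1.mem_iff.1 (List.mem_of_head? p3))
  refine ⟨S, hSA, ?_, ?_⟩
  · by_contra hlt
    obtain ⟨v, hv, x, hx, h5, h6⟩ := hE S hSA h1 (by omega) W h3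
    exact h5 (h4 v hv x hx h6)
  · intro s hs
    obtain ⟨L', p1, p2, p3, p4⟩ := h2 s hs
    exact ⟨L', p1, ⟨p1.nodup_iff.2 hL.1, fun x hx => hL.2.1 x (p1.mem_iff.1 hx), p2⟩, p3, p4⟩

theorem boosters [Fintype V] {A : Finset V} {s0 : ℕ} (hs0 : 2 ≤ s0) {Cl : Finset (Sym2 V)}
    (hE : Expd A s0 Cl) {L : List V} (hL : IsP A Cl L) (hne : L ≠ [])
    (hmax : ∀ L', IsP A Cl L' → L'.length ≤ L.length) (hlen : L.length < A.card) :
    ∃ D : Finset (V × V), s0 * s0 ≤ D.card ∧ ∀ d ∈ D, d.1 ∈ A ∧ d.2 ∈ A ∧ d.1 ≠ d.2 ∧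
      ∃ L', L'.length = L.length + 1 ∧ IsP A (insert s(d.1, d.2) Cl) L' := by
  obtain ⟨S, hSA, hSc, hS⟩ := ends_lemma hE hL hne hmax
  set Z := A \ L.toFinset with hZ
  have hZne : Z.Nonempty := by
    rw [← Finset.card_pos, hZ]
    have := Finset.le_card_sdiff L.toFinset A
    have := L.toFinset_card_le
    omega
  by_cases hc : s0 ≤ Z.card
  · refine ⟨S ×ˢ Z, ?_, ?_⟩
    · rw [Finset.card_product]; exact Nat.mul_le_mul hSc hc
    · rintro ⟨s, z⟩ hd
      rw [Finset.mem_product] at hd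
      obtain ⟨hs, hz⟩ := hd
      simp only at hs hz ⊢
      obtain ⟨L', p1, p2, p3, p4⟩ := hS s hs
      simp only [hZ, Finset.mem_sdiff, List.mem_toFinset] at hz
      have hsL : s ∈ L := p1.mem_iff.1 (List.mem_of_head? p3)
      refine ⟨hSA hs, hz.1, fun h => hz.2 (h ▸ hsL), z :: L', by simp [p1.length_eq], ?_⟩
      have p2' := p2.mono (Finset.subset_insert s(s, z) Cl)
      refine ⟨List.nodup_cons.2 ⟨fun h => hz.2 (p1.mem_iff.1 h), p2.1⟩, ?_, ?_⟩
      · intro y hy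
        rcases List.mem_cons.1 hy with rfl | hy
        · exact hz.1
        · exact p2.2.1 y hy
      · cases L' with
        | nil => simp at p3
        | cons a L' =>
          simp at p3; subst p3
          rw [List.isChain_cons_cons]
          exact ⟨by simp [Sym2.eq_swap], p2'.2.2⟩
  · obtain ⟨z, hz, y, hyA, hyZ, hzy⟩ := hE Z Finset.sdiff_subset hZne (by omega) Z (by omega)
    have hyL : y ∈ L := by
      by_contra h; exact hyZ (by simp [hZ, hyA, h])
    simp only [hZ, Finset.mem_sdiff, List.mem_toFinset] at hz
    have hT : ∀ s : V, ∃ T : Finset V, s ∈ S → (T ⊆ A ∧ s0 ≤ T.card ∧ ∀ s' ∈ T, ∃ L' : List V,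
        L'.Perm L ∧ IsP A Cl L' ∧ L'.head? = some s' ∧ L'.getLast? = some s) := by
      intro s
      by_cases hs : s ∈ S
      · obtain ⟨L', p1, p2, p3, p4⟩ := hS s hs
        have hl := p1.length_eq
        obtain ⟨T, t1, t2, t3⟩ := ends_lemma hE p2.reverse
          (by intro h; simp at h; simp [h] at p3) (by simpa [hl] using hmax)
        refine ⟨T, fun _ => ⟨t1, t2, fun s' hs' => ?_⟩⟩
        obtain ⟨L2, q1, q2, q3, q4⟩ := t3 s' hs'
        exact ⟨L2, (q1.trans (List.reverse_perm _)).trans p1, q2, q3, by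
          rw [q4, List.getLast?_reverse, p3]⟩
      · exact ⟨∅, fun h => absurd h hs⟩
    choose T hT using hT
    have hL2 : 2 ≤ L.length := by
      have h1 : S ⊆ L.toFinset := by
        intro s hs
        obtain ⟨L', p1, p2, p3, p4⟩ := hS s hs
        simpa using p1.mem_iff.1 (List.mem_of_head? p3)
      have := Finset.card_le_card h1
      have := L.toFinset_card_le
      omega
    refine ⟨S.biUnion (fun s => {s} ×ˢ T s), ?_, ?_⟩
    · rw [Finset.card_biUnion]
      · calc s0 * s0 ≤ S.card * s0 := Nat.mul_le_mul_right _ hSc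
          _ = ∑ s ∈ S, s0 := by simp
          _ ≤ _ := Finset.sum_le_sum (fun s hs => by
            rw [Finset.card_product]; simpa using (hT s hs).2.1)
      · intro a _ c _ hac
        rw [Function.onFun, Finset.disjoint_left]
        rintro ⟨u, v⟩ h1 h2
        simp only [Finset.mem_product, Finset.mem_singleton] at h1 h2
        exact hac (h1.1.symm.trans h2.1)
    · rintro ⟨s, s'⟩ hd
      simp only [Finset.mem_biUnion, Finset.mem_product, Finset.mem_singleton] at hd
      obtain ⟨a, haS, rfl, hs'⟩ := hd
      obtain ⟨t1, t2, t3⟩ := hT s haS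
      obtain ⟨L', p1, p2, p3, p4⟩ := t3 s' hs'
      have p2' := p2.mono (Finset.subset_insert s(s, s') Cl)
      have hll := p1.length_eq
      refine ⟨hSA haS, t1 hs', ?_, ?_⟩
      · simp only
        rintro rfl
        cases L' with
        | nil => simp at p3
        | cons a L' =>
          simp at p3; subst p3
          cases L' with
          | nil => simp at hll; omega
          | cons c L' =>
            rw [List.getLast?_cons_cons] at p4
            have := List.mem_of_getLast? p4
            exact (List.nodup_cons.1 p2.1).1 this
      · simp only
        obtain ⟨l1, l2, rfl⟩ := List.append_of_mem (p1.mem_iff.2 hyL)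
        have hperm : ((y :: l2) ++ l1).Perm (l1 ++ y :: l2) := List.perm_append_comm
        refine ⟨z :: ((y :: l2) ++ l1), by
          rw [List.length_cons, hperm.length_eq, hll], ?_, ?_, ?_⟩
        · rw [List.nodup_cons]
          exact ⟨fun h => hz.2 (p1.mem_iff.1 (hperm.mem_iff.1 h)), hperm.nodup_iff.2 p2.1⟩
        · intro w hw
          rcases List.mem_cons.1 hw with rfl | hw
          · exact hz.1
          · exact p2.2.1 w (hperm.mem_iff.1 hw)
        · rw [List.cons_append, List.isChain_cons_cons]
          refine ⟨Finset.mem_insert_of_mem hzy, ?_⟩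
          rw [← List.cons_append, List.isChain_append]
          have hch := p2'.2.2
          rw [List.isChain_append] at hch
          refine ⟨hch.2.1, hch.1, ?_⟩
          intro u hu v hv
          rw [List.getLast?_append] at p4
          rw [List.head?_append] at p3
          simp only [Option.mem_def] at hu hv
          rw [hu] at p4; rw [hv] at p3
          simp at p3 p4
          subst p3; subst p4
          simp

end Boost

section Phases
variable {V : Type*} [DecidableEq V]
set_option linter.unusedSectionVars false

def EA (A : Finset V) : Finset (Sym2 V) := A.sym2.filter (fun e => ¬ e.IsDiag)

theorem mem_EA {A : Finset V} {x y : V} : s(x, y) ∈ EA A ↔ x ∈ A ∧ y ∈ A ∧ x ≠ y := by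
  simp [EA, and_assoc]

theorem card_image_mk (D : Finset (V × V)) :
    D.card ≤ 2 * (D.image (fun d => s(d.1, d.2))).card := by
  apply Finset.card_le_mul_card_image
  intro e he
  obtain ⟨⟨x, y⟩, hd, rfl⟩ := Finset.mem_image.1 he
  calc _ ≤ ({(x, y), (y, x)} : Finset (V × V)).card := by
        apply Finset.card_le_card
        rintro ⟨u, v⟩ h
        simp only [Finset.mem_filter, Sym2.eq_iff] at h
        simp only [Finset.mem_insert, Finset.mem_singleton, Prod.mk.injEq]
        exact h.2
    _ ≤ 2 := Finset.card_le_two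

theorem boost_phase [Fintype V] {A : Finset V} {s0 b : ℕ} (hs0 : 2 ≤ s0) (k : ℕ)
    (Cl K : Finset (Sym2 V)) (hE : Expd A s0 Cl)
    (hL : ∃ L, L ≠ [] ∧ IsP A Cl L ∧ A.card ≤ L.length + k)
    (hc : 2 * ((K ∩ EA A).card + k * (b + 1)) ≤ s0 * s0) :
    Force (EA A) b (fun Cl' _ => Expd A s0 Cl' ∧ ∃ L, IsP A Cl' L ∧ L.length = A.card) k Cl K := by
  have hle : ∀ L Cl, IsP A Cl L → L.length ≤ A.card := by
    intro L Cl h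
    rw [← List.toFinset_card_of_nodup h.1]
    exact Finset.card_le_card (fun x hx => h.2.1 x (by simpa using hx))
  induction k generalizing Cl K with
  | zero =>
    obtain ⟨L, h1, h2, h3⟩ := hL
    exact ⟨hE, L, h2, le_antisymm (hle _ _ h2) (by simpa using h3)⟩
  | succ k ih =>
    obtain ⟨L, h1, h2, h3⟩ := hL
    by_cases hfull : A.card ≤ L.length
    · exact Force.now ⟨hE, L, h2, le_antisymm (hle _ _ h2) hfull⟩
    by_cases hlong : ∃ L', IsP A Cl L' ∧ L.length < L'.length
    · obtain ⟨L', q1, q2⟩ := hlong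
      have := ih Cl K hE ⟨L', by rintro rfl; simp at q2, q1, by omega⟩ (by
        rw [add_mul] at hc; omega)
      exact Force.comp (t' := 1) (Finset.Subset.refl _) this (fun _ _ h => Force.now h)
    · push Not at hlong
      obtain ⟨D, d1, d2⟩ := boosters hs0 hE h2 h1 hlong (by omega)
      have c1 := card_image_mk D
      set I := D.image (fun d => s(d.1, d.2)) with hI
      have hIE : I ⊆ EA A := by
        intro e he
        obtain ⟨⟨x, y⟩, hd, rfl⟩ := Finset.mem_image.1 he
        have := d2 _ hd
        exact mem_EA.2 ⟨this.1, this.2.1, this.2.2.1⟩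
      have c2 : I.card ≤ (I \ K).card + (K ∩ EA A).card := by
        have : I ⊆ (I \ K) ∪ (K ∩ EA A) := by
          intro e he
          have := hIE he
          simp only [Finset.mem_union, Finset.mem_sdiff, Finset.mem_inter]
          tauto
        exact (Finset.card_le_card this).trans (Finset.card_union_le _ _)
      obtain ⟨O, o1, o2⟩ := Finset.exists_subset_card_eq (s := I \ K) (n := b + 1) (by
        rw [add_mul] at hc; omega)
      refine Or.inr ⟨O, o1.trans (Finset.sdiff_subset_sdiff hIE (Finset.Subset.refl _)), o2,
        fun e he => ?_⟩
      obtain ⟨⟨x, y⟩, hd, rfl⟩ := Finset.mem_image.1 (Finset.mem_sdiff.1 (o1 he)).1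
      obtain ⟨-, -, -, L', l1, l2⟩ := d2 _ hd
      apply ih
      · exact hE.mono (Finset.subset_insert _ _)
      · exact ⟨L', by rintro rfl; simp at l1, l2, by omega⟩
      · have : (K ∪ O) ∩ EA A ⊆ (K ∩ EA A) ∪ O := by
          intro e he
          simp only [Finset.mem_union, Finset.mem_inter] at *
          tauto
        have := (Finset.card_le_card this).trans (Finset.card_union_le _ _)
        rw [add_mul] at hc; omega

noncomputable def wt (m0 : ℕ) (τ : List V) (p : Finset V × Finset V) : ℝ :=
  (τ.map (fun v => if v ∈ p.1 then (p.2.card : ℝ) / m0 else 1)).prod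

theorem wt_nonneg (m0 : ℕ) (τ : List V) (p : Finset V × Finset V) : 0 ≤ wt m0 τ p := by
  apply List.prod_nonneg
  intro x hx
  obtain ⟨v, _, rfl⟩ := List.mem_map.1 hx
  split_ifs <;> positivity

theorem exp_phase {A : Finset V} {b m0 : ℕ} (hm0 : 0 < m0) (T : V → Finset V)
    (hTA : ∀ v ∈ A, T v ⊆ A) (hT : ∀ v x, x ∈ T v → v ∉ T x)
    (τ : List V) (hτ : ∀ v ∈ τ, v ∈ A) (B : Finset (Finset V × Finset V))
    (Cl K : Finset (Sym2 V))
    (hfresh : ∀ v ∈ A, τ.count v * (b + 1) + m0 ≤ ((T v).filter (fun x => s(v, x) ∉ K)).card)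
    (hΦ : ∑ p ∈ B, wt m0 τ p < 1) :
    Force (EA A) b (fun Cl' _ => ∀ p ∈ B, ∃ v ∈ p.1, ∃ x ∈ A, x ∉ p.2 ∧ s(v, x) ∈ Cl')
      τ.length Cl K := by
  induction τ generalizing B Cl K with
  | nil =>
    have : B = ∅ := by
      rw [← Finset.card_eq_zero]
      simp [wt] at hΦ
      simp [hΦ]
    subst this
    exact Force.now (by simp)
  | cons v τ ih =>
    have hvA : v ∈ A := hτ v (by simp)
    set cand := (T v).filter (fun x => s(v, x) ∉ K) with hcand
    let Bx : V → Finset (Finset V × Finset V) := fun x => B.filter (fun p => v ∈ p.1 → x ∈ p.2)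
    let good := cand.filter (fun x => ∑ p ∈ Bx x, wt m0 τ p < 1)
    have hcc : b + 1 + m0 ≤ cand.card := by
      have := hfresh v hvA
      rw [List.count_cons_self, add_mul, ← hcand] at this
      omega
    have hgood : b + 1 ≤ good.card := by
      by_contra hlt
      let bad := cand.filter (fun x => ¬ ∑ p ∈ Bx x, wt m0 τ p < 1)
      have hbc : m0 ≤ bad.card := by
        have := Finset.card_filter_add_card_filter_not (s := cand)
          (fun x => ∑ p ∈ Bx x, wt m0 τ p < 1)
        have e1 : (cand.filter (fun x => ∑ p ∈ Bx x, wt m0 τ p < 1)).card = good.card := rfl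
        have e2 : (cand.filter (fun x => ¬ ∑ p ∈ Bx x, wt m0 τ p < 1)).card = bad.card := rfl
        omega
      have hbpos : (0:ℝ) < bad.card := by
        have : 0 < bad.card := by omega
        exact_mod_cast this
      have h1 : (bad.card : ℝ) ≤ ∑ x ∈ bad, ∑ p ∈ Bx x, wt m0 τ p := by
        calc (bad.card : ℝ) = ∑ x ∈ bad, (1:ℝ) := by simp
          _ ≤ _ := Finset.sum_le_sum (fun x hx => not_lt.1 (Finset.mem_filter.1 hx).2)
      have h2 : ∑ x ∈ bad, ∑ p ∈ Bx x, wt m0 τ p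
          = ∑ p ∈ B, ∑ x ∈ bad, if (v ∈ p.1 → x ∈ p.2) then wt m0 τ p else 0 := by
        rw [Finset.sum_comm]
        apply Finset.sum_congr rfl
        intro x _
        rw [Finset.sum_filter]
      have h3 : ∀ p ∈ B, (∑ x ∈ bad, if (v ∈ p.1 → x ∈ p.2) then wt m0 τ p else 0)
          ≤ bad.card * wt m0 (v :: τ) p := by
        intro p _
        have hw := wt_nonneg m0 τ p
        have hcons : wt m0 (v :: τ) p
            = (if v ∈ p.1 then (p.2.card : ℝ) / m0 else 1) * wt m0 τ p := by
          simp [wt]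
        rw [hcons, ← Finset.sum_filter, Finset.sum_const, nsmul_eq_mul, ← mul_assoc]
        apply mul_le_mul_of_nonneg_right _ hw
        by_cases hv : v ∈ p.1
        · simp only [hv, if_true, true_imp_iff]
          have k1 : ((bad.filter (fun x => x ∈ p.2)).card : ℝ) ≤ p.2.card := by
            exact_mod_cast Finset.card_le_card (fun x hx => (Finset.mem_filter.1 hx).2)
          have k2 : (m0 : ℝ) ≤ bad.card := by exact_mod_cast hbc
          have k3 : (0:ℝ) < m0 := by exact_mod_cast hm0
          refine k1.trans ?_
          rw [mul_div_assoc', le_div_iff₀ k3, mul_comm]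
          exact mul_le_mul_of_nonneg_right k2 (by positivity)
        · simp [hv]
      have h4 : (bad.card : ℝ) ≤ bad.card * ∑ p ∈ B, wt m0 (v :: τ) p := by
        rw [Finset.mul_sum]
        exact (h1.trans h2.le).trans (Finset.sum_le_sum h3)
      nlinarith
    obtain ⟨G, g1, g2⟩ := Finset.exists_subset_card_eq hgood
    have hinj : Function.Injective (fun x : V => s(v, x)) := by
      intro x y h
      exact Sym2.congr_right.1 h
    have hGT : ∀ x ∈ G, x ∈ T v ∧ s(v, x) ∉ K ∧ ∑ p ∈ Bx x, wt m0 τ p < 1 := by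
      intro x hx
      have := g1 hx
      simp only [good, hcand, Finset.mem_filter] at this
      tauto
    refine Or.inr ⟨G.image (fun x => s(v, x)), ?_, ?_, ?_⟩
    · intro e he
      obtain ⟨x, hx, rfl⟩ := Finset.mem_image.1 he
      obtain ⟨q1, q2, q3⟩ := hGT x hx
      refine Finset.mem_sdiff.2 ⟨mem_EA.2 ⟨hvA, hTA v hvA q1, ?_⟩, q2⟩
      rintro rfl
      exact hT _ _ q1 q1
    · rw [Finset.card_image_of_injective _ hinj, g2]
    · intro e he
      obtain ⟨x, hx, rfl⟩ := Finset.mem_image.1 he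
      obtain ⟨q1, q2, q3⟩ := hGT x hx
      have := (ih (fun u hu => hτ u (by simp [hu])) (Bx x) (insert s(v, x) Cl)
        (K ∪ G.image (fun x => s(v, x))) ?_ q3).strong
      · have h := Force.comp (t' := 0) (Finset.Subset.refl _) this
          (win' := (fun Cl' _ => ∀ p ∈ B, ∃ v ∈ p.1, ∃ x ∈ A, x ∉ p.2 ∧ s(v, x) ∈ Cl')) ?_
        · simpa using h
        · rintro Cl' K' ⟨r1, r2, -, -⟩ p hp
          by_cases hpx : v ∈ p.1 → x ∈ p.2
          · exact r1 p (Finset.mem_filter.2 ⟨hp, hpx⟩)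
          · push Not at hpx
            exact ⟨v, hpx.1, x, hTA v hvA q1, hpx.2, r2 (Finset.mem_insert_self _ _)⟩
      · intro u hu
        have hf := hfresh u hu
        by_cases huv : u = v
        · subst huv
          rw [List.count_cons_self, add_mul, ← hcand] at hf
          have : cand ⊆ ((T u).filter (fun x => s(u, x) ∉ K ∪ G.image (fun x => s(u, x)))) ∪ G := by
            intro y hy
            simp only [hcand, Finset.mem_filter] at hy
            by_cases hyG : y ∈ G
            · simp [hyG]
            · refine Finset.mem_union_left _ (Finset.mem_filter.2 ⟨hy.1, ?_⟩)
              rw [Finset.mem_union, Finset.mem_image]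
              rintro (h | ⟨w, hw, h⟩)
              · exact hy.2 h
              · exact hyG (hinj h ▸ hw)
          have := (Finset.card_le_card this).trans (Finset.card_union_le _ _)
          omega
        · rw [List.count_cons_of_ne (Ne.symm huv)] at hf
          refine hf.trans (Finset.card_le_card ?_)
          intro y hy
          simp only [Finset.mem_filter] at hy ⊢
          refine ⟨hy.1, ?_⟩
          simp only [Finset.mem_union, Finset.mem_image, not_or, not_exists, not_and]
          refine ⟨hy.2, ?_⟩
          intro w hw hwe
          rw [Sym2.eq_iff] at hwe
          rcases hwe with ⟨h1, _⟩ | ⟨h1, h2⟩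
          · exact huv h1.symm
          · subst h1; subst h2
            exact hT _ _ hy.1 (hGT _ hw).1

end Phases

section Count

theorem choose_bd (N k : ℕ) (hk : 1 ≤ k) : (N.choose k : ℝ) ≤ (3 * N / k) ^ k := by
  have h1 : (N.choose k : ℝ) ≤ (N : ℝ) ^ k / (k.factorial : ℝ) := Nat.choose_le_pow_div k N
  have h2 : (k : ℝ) ^ k / (k.factorial : ℝ) ≤ Real.exp k :=
    Real.pow_div_factorial_le_exp _ (by positivity) k
  have h3 : Real.exp k ≤ 3 ^ k := by
    rw [← Real.exp_one_pow]
    exact pow_le_pow_left₀ (Real.exp_pos _).le (Real.exp_one_lt_d9.le.trans (by norm_num)) k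
  have hk' : (0:ℝ) < k := by exact_mod_cast hk
  have hf : (0:ℝ) < k.factorial := by exact_mod_cast Nat.factorial_pos k
  have h4 : (k : ℝ) ^ k / (k.factorial : ℝ) ≤ 3 ^ k := h2.trans h3
  rw [div_le_iff₀ hf] at h4
  refine h1.trans ?_
  rw [div_pow, mul_pow, div_le_div_iff₀ hf (by positivity)]
  have : (0:ℝ) ≤ (N:ℝ)^k := by positivity
  nlinarith

theorem term_bd (N a : ℕ) (ha : 1 ≤ a) (haN : 10000000 * a ≤ N) :
    (N.choose a : ℝ) * (N.choose (3 * a) : ℝ) * (12 * a / N) ^ (5 * a) ≤ (1 / 2) ^ a := by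
  have h1 := choose_bd N a ha
  have h2 := choose_bd N (3 * a) (by omega)
  have ha' : (0:ℝ) < a := by exact_mod_cast ha
  have hN' : (10000000:ℝ) * a ≤ N := by exact_mod_cast haN
  have hN0 : (0:ℝ) < N := by linarith
  calc (N.choose a : ℝ) * (N.choose (3 * a) : ℝ) * (12 * a / N) ^ (5 * a)
      ≤ (3 * N / a) ^ a * (3 * N / (3 * a : ℕ)) ^ (3 * a) * (12 * a / N) ^ (5 * a) := by
        gcongr
    _ = (746496 * (a / N)) ^ a := by
        rw [pow_mul, pow_mul, ← mul_pow, ← mul_pow]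
        congr 1
        push_cast
        field_simp
        norm_num
    _ ≤ (1 / 2) ^ a := by
        apply pow_le_pow_left₀ (by positivity)
        rw [mul_div_assoc', div_le_div_iff₀ hN0 (by norm_num)]
        linarith

variable {V : Type*} [DecidableEq V]

def badFam (A : Finset V) (s0 : ℕ) : Finset (Finset V × Finset V) :=
  (Finset.Icc 1 s0).biUnion (fun a => A.powersetCard a ×ˢ A.powersetCard (3 * a))

theorem wt_five (A : Finset V) (m0 : ℕ) (p : Finset V × Finset V) (hp : p.1 ⊆ A) :
    wt m0 (A.toList ++ A.toList ++ A.toList ++ A.toList ++ A.toList) p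
      = ((p.2.card : ℝ) / m0) ^ (5 * p.1.card) := by
  have h : (A.toList.map (fun v => if v ∈ p.1 then (p.2.card : ℝ) / m0 else 1)).prod
      = ((p.2.card : ℝ) / m0) ^ p.1.card := by
    rw [Finset.prod_map_toList, Finset.prod_ite_mem, Finset.prod_const,
      Finset.inter_eq_right.2 hp]
  simp only [wt, List.map_append, List.prod_append, h]
  ring

theorem union_bd (A : Finset V) (s0 m0 : ℕ) (hA : A.card = 4 * m0)
    (hs : 10000000 * s0 ≤ A.card) :
    ∑ p ∈ badFam A s0, wt m0 (A.toList ++ A.toList ++ A.toList ++ A.toList ++ A.toList) p < 1 := by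
  rw [badFam, Finset.sum_biUnion]
  · have : ∀ a ∈ Finset.Icc 1 s0, (∑ p ∈ A.powersetCard a ×ˢ A.powersetCard (3 * a),
        wt m0 (A.toList ++ A.toList ++ A.toList ++ A.toList ++ A.toList) p) ≤ (1/2 : ℝ) ^ a := by
      intro a ha
      rw [Finset.mem_Icc] at ha
      have e : ∀ p ∈ A.powersetCard a ×ˢ A.powersetCard (3 * a),
          wt m0 (A.toList ++ A.toList ++ A.toList ++ A.toList ++ A.toList) p
            = (12 * a / A.card : ℝ) ^ (5 * a) := by
        intro p hp
        rw [Finset.mem_product, Finset.mem_powersetCard, Finset.mem_powersetCard] at hp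
        rw [wt_five A m0 p hp.1.1, hp.1.2, hp.2.2, hA]
        congr 1
        have : (m0 : ℝ) ≠ 0 := by
          have : m0 ≠ 0 := by omega
          exact_mod_cast this
        push_cast
        field_simp
        ring
      rw [Finset.sum_congr rfl e, Finset.sum_const, Finset.card_product, Finset.card_powersetCard,
        Finset.card_powersetCard, nsmul_eq_mul]
      push_cast
      exact term_bd _ _ ha.1 (by omega)
    refine (Finset.sum_le_sum this).trans_lt ?_
    have : ∀ s : ℕ, ∑ a ∈ Finset.Icc 1 s, (1/2 : ℝ) ^ a = 1 - (1/2) ^ s := by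
      intro s
      induction s with
      | zero => simp
      | succ s ih => rw [Finset.sum_Icc_succ_top (by omega), ih, pow_succ]; ring
    rw [this]
    have : (0:ℝ) < (1/2)^s0 := by positivity
    linarith
  · intro a _ c _ hac
    rw [Function.onFun, Finset.disjoint_left]
    rintro ⟨u, v⟩ h1 h2
    rw [Finset.mem_product, Finset.mem_powersetCard] at h1 h2
    exact hac (h1.1.2.symm.trans h2.1.2)

theorem exists_T (A : Finset V) (m : ℕ) (hA : A.card = 3 * m) :
    ∃ T : V → Finset V, (∀ v ∈ A, T v ⊆ A) ∧ (∀ v x, x ∈ T v → v ∉ T x) ∧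
      ∀ v ∈ A, (T v).card = m := by
  obtain ⟨A0, h0, c0⟩ := Finset.exists_subset_card_eq (s := A) (n := m) (by omega)
  have c12 : (A \ A0).card = 2 * m := by rw [Finset.card_sdiff_of_subset h0]; omega
  obtain ⟨A1, h1, c1⟩ := Finset.exists_subset_card_eq (s := A \ A0) (n := m) (by omega)
  set A2 := (A \ A0) \ A1 with h2
  have c2 : A2.card = m := by rw [h2, Finset.card_sdiff_of_subset h1]; omega
  refine ⟨fun v => if v ∈ A0 then A1 else if v ∈ A1 then A2 else if v ∈ A2 then A0 else ∅,
    ?_, ?_, ?_⟩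
  · intro v _
    dsimp only
    split_ifs
    · exact h1.trans Finset.sdiff_subset
    · exact Finset.sdiff_subset.trans Finset.sdiff_subset
    · exact h0
    · simp
  · intro v x hx
    have h1x := @h1 x
    have h1v := @h1 v
    have e2 : ∀ y, y ∈ A2 ↔ (y ∈ A ∧ y ∉ A0) ∧ y ∉ A1 := by intro y; simp [h2]
    simp only [Finset.mem_sdiff] at h1x h1v
    dsimp only at hx ⊢
    have e2x := e2 x
    have e2v := e2 v
    split_ifs at hx ⊢ <;> simp_all
  · intro v hv
    dsimp only
    split_ifs with g0 g1 g2
    · exact c1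
    · exact c2
    · exact c0
    · exfalso; apply g2; simp [h2, hv, g0, g1]

theorem A_phase [Fintype V] (A : Finset V) (r b : ℕ) (hb : 1 ≤ b)
    (hr : r = 1200000000 * b) (hA : A.card = 10000000 * r)
    (Cl K : Finset (Sym2 V)) (hK : ∀ e ∈ K, e ∉ EA A) :
    Force (EA A) b (fun Cl' _ => Expd A r Cl' ∧ ∃ L, IsP A Cl' L ∧ L.length = A.card)
      (6 * A.card) Cl K := by
  obtain ⟨T, t1, t2, t3⟩ := exists_T A (4000000000000000 * b) (by omega)
  have p1 := (exp_phase (b := b) (m0 := 3000000000000000 * b) (by omega) T t1 t2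
    (A.toList ++ A.toList ++ A.toList ++ A.toList ++ A.toList) (by simp) (badFam A r) Cl K
    (by
      intro v hv
      have e : (T v).filter (fun x => s(v, x) ∉ K) = T v := by
        apply Finset.filter_true_of_mem
        intro x hx h
        refine hK _ h (mem_EA.2 ⟨hv, t1 v hv hx, ?_⟩)
        rintro rfl
        exact t2 _ _ hx hx
      rw [e, t3 v hv]
      have : A.toList.count v = 1 := List.count_eq_one_of_mem A.nodup_toList (by simpa using hv)
      simp only [List.count_append, this]
      omega)
    (union_bd A r _ (by omega) (by omega))).strong
  have hlen : (A.toList ++ A.toList ++ A.toList ++ A.toList ++ A.toList).length = 5 * A.card := by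
    simp; omega
  rw [hlen] at p1
  rw [show 6 * A.card = 5 * A.card + A.card by omega]
  refine Force.comp (Finset.Subset.refl _) p1 ?_
  rintro Cl' K' ⟨q1, q2, q3, q4⟩
  apply boost_phase (by omega)
  · intro S hSA hSne hSc W hW
    by_contra hcon
    push Not at hcon
    obtain ⟨W', w1, w2, w3⟩ := Finset.exists_subsuperset_card_eq
      (s := W ∩ A) (t := A) (n := 3 * S.card) Finset.inter_subset_right
      ((Finset.card_le_card Finset.inter_subset_left).trans hW) (by omega)
    have hmem : (S, W') ∈ badFam A r := by
      simp only [badFam, Finset.mem_biUnion, Finset.mem_Icc, Finset.mem_product,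
        Finset.mem_powersetCard]
      exact ⟨S.card, ⟨hSne.card_pos, hSc⟩, ⟨hSA, rfl⟩, w2, w3⟩
    obtain ⟨v, hv, x, hx, h5, h6⟩ := q1 _ hmem
    exact hcon v hv x hx (fun h => h5 (w1 (Finset.mem_inter.2 ⟨h, hx⟩))) h6
  · obtain ⟨a, ha⟩ : A.Nonempty := by rw [← Finset.card_pos]; omega
    exact ⟨[a], by simp, ⟨by simp, by simpa using ha, by simp⟩, by simp⟩
  · have : K' ∩ EA A ⊆ K' \ K := by
      intro e he
      rw [Finset.mem_inter] at he
      exact Finset.mem_sdiff.2 ⟨he.1, fun h => hK e h he.2⟩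
    have := Finset.card_le_card this
    have h1 : (K' ∩ EA A).card + A.card * (b+1) ≤ 6 * A.card * (b+1) := by
      calc _ ≤ 5 * A.card * (b+1) + A.card * (b+1) := by omega
        _ = _ := by ring
    calc _ ≤ 2 * (6 * A.card * (b+1)) := by omega
      _ ≤ 2 * (6 * A.card * (2*b)) := by gcongr; omega
      _ = r * (240000000 * b) := by rw [hA]; ring
      _ ≤ r * r := by gcongr; omega

end Count

section Path
set_option linter.unusedSectionVars false
variable {V : Type*} [DecidableEq V]

theorem star_card (q : V) (T : Finset V) : (T.image (fun x => s(q, x))).card = T.card := by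
  apply Finset.card_image_of_injective
  intro x y h
  exact Sym2.congr_right.1 h

def PathSt (Cl K : Finset (Sym2 V)) (b : ℕ) (p : V) (l : ℕ) : Prop :=
  ∃ e rest, (e :: rest).Nodup ∧ (e :: rest).IsChain (fun u v => s(u, v) ∈ Cl) ∧
    (e :: rest).length = l ∧ (e :: rest).getLast? = some p ∧ (∀ k ∈ K, ∃ v ∈ rest, v ∈ k) ∧
    (K.filter (fun k => p ∈ k)).card ≤ b + 1

theorem path_phase [Fintype V] (b : ℕ) (p : V) (k : ℕ) (l : ℕ) (hl : l + k + b ≤ Fintype.card V)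
    (Cl K : Finset (Sym2 V)) (h : PathSt Cl K b p l) :
    Force (EA (Finset.univ : Finset V)) b (fun Cl' K' => PathSt Cl' K' b p (l + k)) k Cl K := by
  induction k generalizing l Cl K with
  | zero => exact h
  | succ k ih =>
    obtain ⟨e, rest, h1, h2, h3, h4, h5, h6⟩ := h
    have hc : b + 1 ≤ (Finset.univ \ (e :: rest).toFinset : Finset V).card := by
      rw [Finset.card_sdiff_of_subset (Finset.subset_univ _), List.toFinset_card_of_nodup h1, h3,
        Finset.card_univ]
      omega
    obtain ⟨T, hT, hTc⟩ := Finset.exists_subset_card_eq hc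
    have hT' : ∀ x ∈ T, x ∉ e :: rest := fun x hx hm => by
      have := hT hx
      simp at this hm
      tauto
    have her : e ∉ rest := (List.nodup_cons.1 h1).1
    refine Or.inr ⟨T.image (fun x => s(e, x)), ?_, by rw [star_card, hTc], ?_⟩
    · intro y hy
      obtain ⟨x, hx, rfl⟩ := Finset.mem_image.1 hy
      have hx' := hT' x hx
      simp only [List.mem_cons, not_or] at hx'
      rw [Finset.mem_sdiff, mem_EA]
      refine ⟨⟨Finset.mem_univ _, Finset.mem_univ _, fun h => hx'.1 h.symm⟩, fun hk => ?_⟩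
      obtain ⟨v, hv, hve⟩ := h5 _ hk
      rw [Sym2.mem_iff] at hve
      rcases hve with rfl | rfl
      · exact her hv
      · exact hx'.2 hv
    · intro y hy
      obtain ⟨x, hx, rfl⟩ := Finset.mem_image.1 hy
      rw [show l + (k + 1) = (l + 1) + k by omega]
      apply ih (l + 1) (by omega)
      refine ⟨x, e :: rest, List.nodup_cons.2 ⟨hT' x hx, h1⟩, ?_, by simp [← h3], ?_, ?_, ?_⟩
      · rw [List.isChain_cons_cons]
        refine ⟨by rw [Sym2.eq_swap]; exact Finset.mem_insert_self _ _, ?_⟩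
        exact h2.imp (fun u v h => Finset.mem_insert_of_mem h)
      · rw [List.getLast?_cons_cons, h4]
      · intro k hk
        rcases Finset.mem_union.1 hk with hk | hk
        · obtain ⟨v, hv, hvk⟩ := h5 k hk
          exact ⟨v, List.mem_cons_of_mem _ hv, hvk⟩
        · obtain ⟨x, hx, rfl⟩ := Finset.mem_image.1 hk
          exact ⟨e, by simp, by simp⟩
      · cases rest with
        | nil =>
          have hK : K = ∅ := by
            apply Finset.eq_empty_of_forall_notMem
            intro k hk
            obtain ⟨v, hv, _⟩ := h5 k hk
            simp at hv
          rw [hK, Finset.empty_union]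
          exact (Finset.card_filter_le _ _).trans (by rw [star_card, hTc])
        | cons c rest =>
          have hp : p ∈ c :: rest := by
            rw [List.getLast?_cons_cons] at h4
            exact List.mem_of_getLast? h4
          rw [Finset.filter_union]
          have : (T.image (fun x => s(e, x))).filter (fun k => p ∈ k) = ∅ := by
            apply Finset.eq_empty_of_forall_notMem
            intro k hk
            obtain ⟨hk, hpk⟩ := Finset.mem_filter.1 hk
            obtain ⟨x, hx, rfl⟩ := Finset.mem_image.1 hk
            rw [Sym2.mem_iff] at hpk
            rcases hpk with rfl | rfl
            · exact her hp
            · exact hT' _ hx (List.mem_cons_of_mem _ hp)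
          rw [this, Finset.union_empty]
          exact h6

theorem exists_walk {G : SimpleGraph V} (Cl : Finset (Sym2 V)) (L : List V) (a z : V)
    (hG : (a :: L).IsChain G.Adj) (hL : (a :: L).IsChain (fun u v => s(u, v) ∈ Cl))
    (hz : (a :: L).getLast? = some z) :
    ∃ w : G.Walk a z, w.support = a :: L ∧ ∀ e ∈ w.edges, e ∈ Cl := by
  induction L generalizing a with
  | nil =>
    simp at hz
    subst hz
    exact ⟨SimpleGraph.Walk.nil, by simp, by simp⟩
  | cons c L ih =>
    rw [List.getLast?_cons_cons] at hz
    obtain ⟨w, h1, h2⟩ := ih c hG.of_cons hL.of_cons hz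
    refine ⟨SimpleGraph.Walk.cons hG.rel w, by simp [h1], ?_⟩
    intro e he
    rw [SimpleGraph.Walk.edges_cons, List.mem_cons] at he
    rcases he with rfl | he
    · exact hL.rel
    · exact h2 e he

theorem cycle_lemma {n : ℕ} (Cl : Finset (Sym2 (Fin n))) (a c d z : Fin n) (L : List (Fin n))
    (hnd : (a :: c :: d :: L).Nodup) (hlen : (a :: c :: d :: L).length = n)
    (hch : (a :: c :: d :: L).IsChain (fun u v => s(u, v) ∈ Cl))
    (hz : (a :: c :: d :: L).getLast? = some z) (hza : s(z, a) ∈ Cl) :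
    ∃ F ∈ HamFamily n, F ⊆ Cl := by
  have hG : (a :: c :: d :: L).IsChain (⊤ : SimpleGraph (Fin n)).Adj := by
    have := (List.Pairwise.isChain hnd)
    exact this.imp (fun u v h => by simpa using h)
  have hzm : z ∈ d :: L := by
    rw [List.getLast?_cons_cons, List.getLast?_cons_cons] at hz
    exact List.mem_of_getLast? hz
  have hne : (⊤ : SimpleGraph (Fin n)).Adj z a := by
    rw [SimpleGraph.top_adj]
    rintro rfl
    exact (List.nodup_cons.1 hnd).1 (List.mem_cons_of_mem _ hzm)
  obtain ⟨w, hw1, hw2, hw3⟩ : ∃ w : (⊤ : SimpleGraph (Fin n)).Walk a z,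
      w.support = a :: c :: d :: L ∧ (∀ e ∈ w.edges, e ∈ Cl) ∧ s(z, a) ∉ w.edges := by
    rw [List.getLast?_cons_cons] at hz
    obtain ⟨w, h1, h2⟩ := exists_walk Cl _ c z hG.of_cons hch.of_cons hz
    refine ⟨SimpleGraph.Walk.cons hG.rel w, by simp [h1], ?_, ?_⟩
    · intro e he
      rw [SimpleGraph.Walk.edges_cons, List.mem_cons] at he
      rcases he with rfl | he
      · exact hch.rel
      · exact h2 e he
    intro hm
    rw [SimpleGraph.Walk.edges_cons, List.mem_cons] at hm
    rcases hm with hm | hm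
    · have : z = c := by
        rw [Sym2.eq_swap] at hm
        exact Sym2.congr_right.1 hm
      subst this
      exact (List.nodup_cons.1 (List.nodup_cons.1 hnd).2).1 hzm
    · have := SimpleGraph.Walk.snd_mem_support_of_mem_edges _ hm
      rw [h1] at this
      exact (List.nodup_cons.1 hnd).1 this
  have hwl : w.length + 1 = n := by
    rw [← SimpleGraph.Walk.length_support, hw1, hlen]
  refine ⟨(SimpleGraph.Walk.cons hne w).edges.toFinset, ⟨z, SimpleGraph.Walk.cons hne w, ?_, rfl⟩, ?_⟩
  · rw [SimpleGraph.Walk.isHamiltonianCycle_iff_isCycle_and_length_eq]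
    refine ⟨(SimpleGraph.Walk.cons_isCycle_iff _ _).2 ⟨?_, hw3⟩, by simp [hwl]⟩
    rw [SimpleGraph.Walk.isPath_def, hw1]
    exact hnd
  · intro e he
    rw [List.mem_toFinset, SimpleGraph.Walk.edges_cons, List.mem_cons] at he
    rcases he with rfl | he
    · exact hza
    · exact hw2 e he

end Path

section Final

theorem IsP.len_le {V : Type*} [DecidableEq V] {A : Finset V} {Cl : Finset (Sym2 V)} {L : List V}
    (h : IsP A Cl L) : L.length ≤ A.card := by
  rw [← List.toFinset_card_of_nodup h.1]
  exact Finset.card_le_card (fun x hx => h.2.1 x (List.mem_toFinset.1 hx))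

theorem finish {n b r : ℕ} (hr : 2 * b + 2 ≤ r) (A : Finset (Fin n)) (q p : Fin n)
    (rest : List (Fin n)) (hnd : (q :: rest).Nodup)
    (hA : A = Finset.univ \ (q :: rest).toFinset) (hlast : (q :: rest).getLast? = some p)
    (hrest : rest ≠ []) (Cl K : Finset (Sym2 (Fin n)))
    (hch : (q :: rest).IsChain (fun u v => s(u, v) ∈ Cl))
    (hK1 : ∀ x ∈ A, s(q, x) ∉ K) (hK2 : (K.filter (fun k => p ∈ k)).card ≤ b + 1)
    (hE : Expd A r Cl) (LA : List (Fin n)) (hLA : IsP A Cl LA) (hlen : LA.length = A.card)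
    (hA2 : 2 ≤ A.card) :
    Force (EA (Finset.univ : Finset (Fin n))) b (fun Cl _ => ∃ F ∈ HamFamily n, F ⊆ Cl) 2 Cl K := by
  have hqA : ∀ x ∈ A, x ∉ q :: rest := by
    intro x hx hm
    rw [hA, Finset.mem_sdiff, List.mem_toFinset] at hx
    exact hx.2 hm
  have hprest : p ∈ rest := by
    cases rest with
    | nil => exact absurd rfl hrest
    | cons c rest =>
      rw [List.getLast?_cons_cons] at hlast
      exact List.mem_of_getLast? hlast
  have hpq : p ≠ q := by
    rintro rfl
    exact (List.nodup_cons.1 hnd).1 hprest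
  have hpA : ∀ x ∈ A, x ≠ p := fun x hx h =>
    hqA x hx (List.mem_cons_of_mem _ (h ▸ hprest))
  have hqA' : ∀ x ∈ A, x ≠ q := fun x hx h => hqA x hx (h ▸ List.mem_cons_self)
  have hne : LA ≠ [] := by
    rintro rfl
    simp at hlen
    omega
  obtain ⟨S, hSA, hSc, hS⟩ := ends_lemma hE hLA hne (fun L' h => by rw [hlen]; exact h.len_le)
  obtain ⟨T, hTS, hTc⟩ := Finset.exists_subset_card_eq (show b + 1 ≤ S.card by omega)
  refine Or.inr ⟨T.image (fun x => s(q, x)), ?_, by rw [star_card, hTc], ?_⟩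
  · intro y hy
    obtain ⟨x, hx, rfl⟩ := Finset.mem_image.1 hy
    have hxA := hSA (hTS hx)
    rw [Finset.mem_sdiff, mem_EA]
    exact ⟨⟨Finset.mem_univ _, Finset.mem_univ _, (hqA' x hxA).symm⟩, hK1 x hxA⟩
  intro y hy
  obtain ⟨s, hs, rfl⟩ := Finset.mem_image.1 hy
  obtain ⟨L1, hp1, hP1, hh1, -⟩ := hS s (hTS hs)
  set Cl1 := insert s(q, s) Cl with hCl1
  have hsub : Cl ⊆ Cl1 := Finset.subset_insert _ _
  have hP2 : IsP A Cl1 L1.reverse := (hP1.mono hsub).reverse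
  have hl2 : L1.reverse.length = A.card := by rw [List.length_reverse, hp1.length_eq, hlen]
  have hne2 : L1.reverse ≠ [] := by
    intro h
    rw [h] at hl2
    simp at hl2
    omega
  obtain ⟨S', hSA', hSc', hS'⟩ := ends_lemma (hE.mono hsub) hP2 hne2
    (fun L' h => by rw [hl2]; exact h.len_le)
  set K1 := K ∪ T.image (fun x => s(q, x)) with hK1def
  have hbad : (S'.filter (fun x => s(p, x) ∈ K1)).card ≤ b + 1 := by
    refine le_trans ?_ hK2
    rw [← star_card p]
    apply Finset.card_le_card
    intro y hy
    obtain ⟨x, hx, rfl⟩ := Finset.mem_image.1 hy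
    obtain ⟨hxS, hxK⟩ := Finset.mem_filter.1 hx
    rw [Finset.mem_filter]
    refine ⟨?_, by simp⟩
    rcases Finset.mem_union.1 hxK with h | h
    · exact h
    · exfalso
      obtain ⟨t, ht, hteq⟩ := Finset.mem_image.1 h
      have hpm : p ∈ s(q, t) := by rw [hteq]; simp
      rw [Sym2.mem_iff] at hpm
      rcases hpm with h | h
      · exact hpq h
      · exact hpA t (hSA (hTS ht)) h.symm
  have hgood : b + 1 ≤ (S'.filter (fun x => ¬ s(p, x) ∈ K1)).card := by
    have := Finset.card_filter_add_card_filter_not (s := S') (fun x => s(p, x) ∈ K1)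
    omega
  obtain ⟨T', hTS', hTc'⟩ := Finset.exists_subset_card_eq hgood
  refine Or.inr ⟨T'.image (fun x => s(p, x)), ?_, by rw [star_card, hTc'], ?_⟩
  · intro y hy
    obtain ⟨x, hx, rfl⟩ := Finset.mem_image.1 hy
    obtain ⟨hxS, hxK⟩ := Finset.mem_filter.1 (hTS' hx)
    rw [Finset.mem_sdiff, mem_EA]
    exact ⟨⟨Finset.mem_univ _, Finset.mem_univ _, (hpA x (hSA' hxS)).symm⟩, hxK⟩
  intro y hy
  obtain ⟨s', hs', rfl⟩ := Finset.mem_image.1 hy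
  obtain ⟨L2, hp2, hP3, hh2, hl3⟩ := hS' s' (Finset.mem_filter.1 (hTS' hs')).1
  change ∃ F ∈ HamFamily n, F ⊆ insert s(p, s') Cl1
  rw [List.getLast?_reverse, hh1] at hl3
  have hlen2 : L2.length = A.card := by rw [hp2.length_eq, hl2]
  have hAn : A.card + (q :: rest).length = n := by
    have h1 : (Finset.univ \ (q :: rest).toFinset : Finset (Fin n)).card
        = n - (q :: rest).length := by
      rw [Finset.card_sdiff_of_subset (Finset.subset_univ _), List.toFinset_card_of_nodup hnd,
        Finset.card_univ, Fintype.card_fin]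
    have h2 : (q :: rest).length ≤ n := by
      simpa using hnd.length_le_card
    rw [← hA] at h1
    omega
  have hCnd : (L2 ++ q :: rest).Nodup := by
    rw [List.nodup_append]
    refine ⟨hP3.1, hnd, ?_⟩
    intro x hx y hy hxy
    exact hqA x (hP3.2.1 x hx) (hxy ▸ hy)
  have hCch : (L2 ++ q :: rest).IsChain (fun u v => s(u, v) ∈ insert s(p, s') Cl1) := by
    rw [List.isChain_append]
    refine ⟨hP3.2.2.imp (fun u v h => Finset.mem_insert_of_mem h),
      hch.imp (fun u v h => Finset.mem_insert_of_mem (hsub h)), ?_⟩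
    intro x hx y hy
    rw [hl3] at hx
    simp at hx hy
    subst hx hy
    apply Finset.mem_insert_of_mem
    rw [Sym2.eq_swap]
    exact Finset.mem_insert_self _ _
  have hCl : (L2 ++ q :: rest).getLast? = some p := by
    rw [List.getLast?_append, hlast]
    rfl
  have hClen : (L2 ++ q :: rest).length = n := by
    rw [List.length_append, hlen2, hAn]
  have hhead : (L2 ++ q :: rest).head? = some s' := by
    rw [List.head?_append, hh2]
    rfl
  have h3 : 3 ≤ (L2 ++ q :: rest).length := by
    rw [List.length_append, hlen2]
    simp
    omega
  generalize hLdef : L2 ++ q :: rest = L at *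
  match L, h3 with
  | a :: c :: d :: L, _ =>
    simp at hhead
    subst hhead
    exact cycle_lemma _ a c d p L hCnd hClen hCch hCl (Finset.mem_insert_self _ _)

theorem main_force {n b N : ℕ} (hb : 1 ≤ b) (hN : N = 10000000 * (1200000000 * b))
    (hn : 2 * N ≤ n) :
    WaiterWins (Kedges n) b (fun Cl _ => ∃ A ∈ HamFamily n, A ⊆ Cl)
      ((n - N - 1) + (6 * N + 2)) ∅ ∅ := by
  have hn0 : 0 < n := by omega
  have hEK : EA (Finset.univ : Finset (Fin n)) ⊆ Kedges n := by
    intro e he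
    simp [EA, Kedges] at he ⊢
    exact he
  apply Force.waiter hEK
  rw [Finset.empty_union]
  have h0 : PathSt (V := Fin n) ∅ ∅ b ⟨0, hn0⟩ 1 :=
    ⟨⟨0, hn0⟩, [], by simp, by simp, by simp, by simp, by simp, by simp⟩
  refine Force.comp (Finset.Subset.refl _)
    (path_phase b _ (n - N - 1) 1 (by rw [Fintype.card_fin]; omega) _ _ h0) ?_
  rintro Cl K ⟨q, rest, h1, h2, h3, h4, h5, h6⟩
  obtain ⟨A, hA⟩ : ∃ A, A = (Finset.univ \ (q :: rest).toFinset : Finset (Fin n)) := ⟨_, rfl⟩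
  have hAc : A.card = N := by
    rw [hA, Finset.card_sdiff_of_subset (Finset.subset_univ _), List.toFinset_card_of_nodup h1,
        Finset.card_univ, Fintype.card_fin, h3]
    omega
  have hqA : ∀ x ∈ A, x ∉ q :: rest := by
    intro x hx hm
    rw [hA, Finset.mem_sdiff, List.mem_toFinset] at hx
    exact hx.2 hm
  have hKA : ∀ e ∈ K, e ∉ EA A := by
    intro e he hEA
    obtain ⟨v, hv, hve⟩ := h5 e he
    obtain ⟨u, rfl⟩ := hve
    exact hqA v (mem_EA.1 hEA).1 (List.mem_cons_of_mem _ hv)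
  have hap := (A_phase A (1200000000 * b) b hb rfl (by rw [hAc, hN]) Cl K hKA).strong
  rw [hAc] at hap
  refine Force.comp ?_ hap ?_
  · intro e
    induction e with
    | _ x y =>
      rw [mem_EA, mem_EA]
      exact fun h => ⟨Finset.mem_univ _, Finset.mem_univ _, h.2.2⟩
  rintro Cl' K' ⟨⟨hE, LA, hLA, hLl⟩, hC, hK', -⟩
  have hrl : rest.length + 1 = n - N := by
    simp at h3
    omega
  have hrest : rest ≠ [] := by
    rintro rfl
    simp at hrl
    omega
  refine finish (r := 1200000000 * b) (by omega) A q ⟨0, hn0⟩ rest h1 hA h4 hrest Cl' K'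
    (h2.imp (fun u v h => hC h)) ?_ ?_ hE LA hLA (by rw [hLl, hAc]) (by omega)
  · intro x hx hm
    rcases Finset.mem_union.1 (hK' hm) with h | h
    · obtain ⟨v, hv, hve⟩ := h5 _ h
      rw [Sym2.mem_iff] at hve
      rcases hve with rfl | rfl
      · exact (List.nodup_cons.1 h1).1 hv
      · exact hqA _ hx (List.mem_cons_of_mem _ hv)
    · exact hqA q (mem_EA.1 h).1 List.mem_cons_self
  · refine le_trans (Finset.card_le_card ?_) h6
    intro e he
    obtain ⟨he, hp⟩ := Finset.mem_filter.1 he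
    rw [Finset.mem_filter]
    refine ⟨?_, hp⟩
    rcases Finset.mem_union.1 (hK' he) with h | h
    · exact h
    · exfalso
      obtain ⟨u, rfl⟩ := hp
      exact hqA _ (mem_EA.1 h).1 (List.mem_of_getLast? h4)

end Final

/-- There exist constants `δ, C > 0` such that for every large enough `n` and every positive
integer `b ≤ δn`, in the `b`-biased Waiter-Client Hamiltonicity game on `K_n`, Waiter can win
within `n + C·b` rounds. -/
theorem WC_hamiltonicity_biased :
    ∃ δ C : ℝ, 0 < δ ∧ 0 < C ∧ ∃ n₀ : ℕ, ∀ n : ℕ, n₀ ≤ n →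
      ∀ b : ℕ, 1 ≤ b → (b : ℝ) ≤ δ * n →
        (tauWC (Kedges n) (HamFamily n) b : ℝ) ≤ (n : ℝ) + C * b := by

  refine ⟨1 / 24000000000000000, 72000000000000000, by norm_num, by norm_num, 0, ?_⟩
  intro n _ b hb hbn
  have hbn' : 24000000000000000 * b ≤ n := by
    have : (24000000000000000 : ℝ) * b ≤ n := by linarith
    exact_mod_cast this
  obtain ⟨N, hN⟩ : ∃ N, N = 10000000 * (1200000000 * b) := ⟨_, rfl⟩
  have h := main_force (n := n) (b := b) hb hN (by omega)
  have h1 : tauWC (Kedges n) (HamFamily n) b ≤ (n - N - 1) + (6 * N + 2) := by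
    unfold tauWC
    apply Nat.sInf_le
    exact h
  have h2 : tauWC (Kedges n) (HamFamily n) b ≤ n + 72000000000000000 * b := by
    omega
  exact_mod_cast h2
end
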